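/- arXiv:1010.0382 — 2 statements merged into one kernel-verified Lean document; each statement's English description precedes it below -/
import Mathlib

section
/- (Chiodo) The embedding search problem is algorithmically unsolvable: there is no computable function F : (ℕ × List (List (ℕ × Bool))) × (ℕ × List (List (ℕ × Bool))) → List (List (ℕ × Bool)) such that for every pair of encoded finite presentations (P₁, P₂) for which there exists an injective group homomorphism G_{P₁} →* G_{P₂}, there exists an injective homomorphism φ : G_{P₁} →* G_{P₂} satisfying φ (π_{P₁} (FreeGroup.of i)) = π_{P₂} (FreeGroup.mk ((F (P₁, P₂)).getD i [])) for every i : ℕ. (That is, no algorithm can output words that describe an explicit embedding on the generators, even given the promise that an embedding exists.) -/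
/-- The set of relators of the finite presentation encoded by
`P = (n, L) : ℕ × List (List (ℕ × Bool))`: the words in `L`, together with all
generators `FreeGroup.of i` for `i ≥ n`. -/
def presRels (P : ℕ × List (List (ℕ × Bool))) : Set (FreeGroup ℕ) :=
  {r | ∃ w ∈ P.2, r = FreeGroup.mk w} ∪ {r | ∃ i : ℕ, P.1 ≤ i ∧ r = FreeGroup.of i}

/-- The group presented by an encoded finite presentation. -/
def presGroup (P : ℕ × List (List (ℕ × Bool))) : Type :=
  PresentedGroup (presRels P)

instance (P : ℕ × List (List (ℕ × Bool))) : Group (presGroup P) :=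
  inferInstanceAs (Group (PresentedGroup (presRels P)))

/-- The canonical projection from the free group to the presented group. -/
def presProj (P : ℕ × List (List (ℕ × Bool))) : FreeGroup ℕ →* presGroup P :=
  PresentedGroup.mk (presRels P)

open Monoid

theorem word_len_rcons {ι : Type} {G : ι → Type} [∀ i, Group (G i)] [DecidableEq ι]
    [∀ i, DecidableEq (G i)] {i : ι} (p : CoprodI.Word.Pair G i) :
    p.tail.toList.length ≤ (CoprodI.Word.rcons p).toList.length ∧
    (CoprodI.Word.rcons p).toList.length ≤ p.tail.toList.length + 1 := by
  unfold CoprodI.Word.rcons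
  split_ifs with h
  · simp
  · simp [CoprodI.Word.cons]

theorem word_of_list {ι : Type} {G : ι → Type} [∀ i, Group (G i)] [DecidableEq ι]
    [∀ i, DecidableEq (G i)] (l : List (Σ i, G i)) :
    ∃ w : CoprodI.Word G, w.prod = (l.map fun s => (CoprodI.of s.2 : CoprodI G)).prod ∧
      w.toList.length ≤ l.length := by
  induction l with
  | nil => exact ⟨CoprodI.Word.empty, by simp, by simp [CoprodI.Word.empty]⟩
  | cons a l ih =>
    obtain ⟨w, hw, hl⟩ := ih
    refine ⟨(CoprodI.of a.2 : CoprodI G) • w, by simp [CoprodI.Word.prod_smul, hw], ?_⟩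
    rw [CoprodI.Word.of_smul_def]
    have h1 := word_len_rcons { CoprodI.Word.equivPair a.1 w with
      head := a.2 * (CoprodI.Word.equivPair a.1 w).head }
    have h2 := word_len_rcons (CoprodI.Word.equivPair a.1 w)
    have h3 : CoprodI.Word.rcons (CoprodI.Word.equivPair a.1 w) = w := by
      rw [← CoprodI.Word.equivPair_symm, Equiv.symm_apply_apply]
    rw [h3] at h2
    simp only [List.length_cons]
    have := h1.2
    simp only at this
    omega

/-- An involution in a free product is conjugate into a factor. -/
theorem coprod_invol {ι : Type} {G : ι → Type} [∀ i, Group (G i)] 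
    (n : ℕ) (l : List (Σ i, G i)) (hn : l.length ≤ n) (g : CoprodI G)
    (hl : (l.map fun s => (CoprodI.of s.2 : CoprodI G)).prod = g)
    (hg : g * g = 1) : g = 1 ∨ ∃ (i : ι) (m : G i) (h : CoprodI G), g = h * CoprodI.of m * h⁻¹ := by
  classical
  induction n generalizing l g with
  | zero =>
    left
    have : l = [] := by simpa using hn
    subst this; simpa using hl.symm
  | succ n ih =>
    obtain ⟨w, hw, hwl⟩ := word_of_list l
    rw [hl] at hw
    by_cases he : w = CoprodI.Word.empty
    · left; rw [← hw, he]; simp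
    obtain ⟨i, j, w', rfl⟩ := CoprodI.NeWord.of_word w he
    by_cases hij : j = i
    · subst hij
      have hh := w'.toList_head?
      have hlst := w'.toList_getLast?
      have hprod : (w'.toList.map fun s => (CoprodI.of s.2 : CoprodI G)).prod = g := hw
      have hlen : w'.toList.length ≤ n + 1 := le_trans hwl hn
      obtain ⟨x, hx⟩ : ∃ x : Σ i, G i, ⟨j, w'.head⟩ = x := ⟨_, rfl⟩
      obtain ⟨y, hy⟩ : ∃ y : Σ i, G i, ⟨j, w'.last⟩ = y := ⟨_, rfl⟩
      rw [hx] at hh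
      rw [hy] at hlst
      revert hh hlst hprod hlen
      generalize w'.toList = L
      intro hprod hlen hh hlst
      match L, hh, hlst, hprod, hlen with
      | [a], hh, hlst, hprod, hlen =>
        right
        exact ⟨a.1, a.2, 1, by simpa using hprod.symm⟩
      | a :: b :: L', hh, hlst, hprod, hlen =>
        obtain ⟨M, hM⟩ : ∃ M, b :: L' = M ++ [y] := by
          have : y ∈ (b :: L').getLast? := by simpa using hlst
          exact ⟨(b :: L').dropLast, by rw [List.dropLast_append_getLast? _ this]⟩
        have hax : a = x := by simpa using hh
        subst hax
        rw [hM] at hprod hlen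
        set A : CoprodI G := CoprodI.of w'.head with hA
        have hgA : (CoprodI.of a.2 : CoprodI G) = A := by rw [← hx]
        have hgB : (CoprodI.of y.2 : CoprodI G) = CoprodI.of w'.last := by rw [← hy]
        have key := ih (M ++ [⟨j, w'.last * w'.head⟩]) (by simp at hlen ⊢; omega) (A⁻¹ * g * A) (by
          rw [← hprod]
          simp [hgA, hgB, mul_assoc, hA]) (by
          have : A⁻¹ * g * A * (A⁻¹ * g * A) = A⁻¹ * (g * g) * A := by group
          rw [this, hg]; group)
        rcases key with h | ⟨i, m, h, hh⟩
        · left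
          have : g = A * (A⁻¹ * g * A) * A⁻¹ := by group
          rw [this, h]; group
        · right
          refine ⟨i, m, A * h, ?_⟩
          have : g = A * (A⁻¹ * g * A) * A⁻¹ := by group
          rw [this, hh]; group
    · exfalso
      have h1 : (CoprodI.NeWord.append w' hij w').prod = 1 := by
        rw [CoprodI.NeWord.append_prod]
        have : w'.prod = g := hw
        rw [this, hg]
      have h2 : (CoprodI.NeWord.append w' hij w').toWord = CoprodI.Word.empty := by
        apply CoprodI.Word.equiv.symm.injective
        change CoprodI.Word.prod _ = CoprodI.Word.prod _
        rw [CoprodI.Word.prod_empty]; exact h1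
      have h3 := congrArg CoprodI.Word.toList h2
      exact (CoprodI.NeWord.toList_ne_nil _) h3

theorem coprod_invol' {G : Bool → Type} [∀ i, Group (G i)] (g : CoprodI G)
    (hg : g * g = 1) (hne : g ≠ 1) :
    ∃ (i : Bool) (m : G i) (h : CoprodI G), m ≠ 1 ∧ g = h * CoprodI.of m * h⁻¹ := by
  classical
  have := coprod_invol _ (CoprodI.Word.equiv g).toList le_rfl g
    (CoprodI.Word.equiv.symm_apply_apply g) hg
  rcases this with h | ⟨i, m, h, hh⟩
  · exact absurd h hne
  · refine ⟨i, m, h, ?_, hh⟩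
    rintro rfl
    apply hne
    rw [hh]; simp
/-! ### The word problem is recursively enumerable -/

abbrev Wd := List (ℕ × Bool)
abbrev Pres := ℕ × List Wd

theorem presProj_eq_one_iff (P : Pres) (x : FreeGroup ℕ) :
    presProj P x = 1 ↔ x ∈ Subgroup.normalClosure (presRels P) :=
  PresentedGroup.mk_eq_one_iff

theorem presProj_surj (P : Pres) : Function.Surjective (presProj P) :=
  PresentedGroup.mk_surjective _

/-- the `j`-th relator -/
def relAt (P : Pres) (j : ℕ) : Wd :=
  if j < P.2.length then P.2.getD j [] else [(P.1 + (j - P.2.length), true)]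

theorem relAt_mem (P : Pres) (j : ℕ) : FreeGroup.mk (relAt P j) ∈ presRels P := by
  unfold relAt
  split_ifs with h
  · left
    refine ⟨_, ?_, rfl⟩
    rw [List.getD_eq_getElem _ _ h]
    exact List.getElem_mem h
  · right
    exact ⟨_, by omega, rfl⟩

theorem exists_relAt (P : Pres) (x : FreeGroup ℕ) (hx : x ∈ presRels P) :
    ∃ j, x = FreeGroup.mk (relAt P j) := by
  rcases hx with ⟨w, hw, rfl⟩ | ⟨i, hi, rfl⟩
  · obtain ⟨j, hj, rfl⟩ := List.getElem_of_mem hw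
    refine ⟨j, ?_⟩
    simp [relAt, hj]
  · refine ⟨P.2.length + (i - P.1), ?_⟩
    have : P.1 + (i - P.1) = i := by omega
    simp [relAt, this]
    rfl

def certItem (P : Pres) (x : Wd × ℕ × Bool) : Wd :=
  x.1 ++ ((if x.2.2 = true then relAt P x.2.1 else FreeGroup.invRev (relAt P x.2.1)) ++
    FreeGroup.invRev x.1)

def certWord (P : Pres) (c : List (Wd × ℕ × Bool)) : Wd := c.flatMap (certItem P)

theorem mk_invRev (w : Wd) : FreeGroup.mk (FreeGroup.invRev w) = (FreeGroup.mk w)⁻¹ := by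
  rw [FreeGroup.inv_mk]

theorem mk_app (a b : Wd) : FreeGroup.mk (a ++ b) = FreeGroup.mk a * FreeGroup.mk b := by
  rw [FreeGroup.mul_mk]

theorem mk_certItem_mem (P : Pres) (x : Wd × ℕ × Bool) :
    FreeGroup.mk (certItem P x) ∈ Subgroup.normalClosure (presRels P) := by
  unfold certItem
  rw [mk_app, mk_app, mk_invRev, ← mul_assoc]
  apply Subgroup.normalClosure_normal.conj_mem
  split_ifs
  · exact Subgroup.subset_normalClosure (relAt_mem _ _)
  · rw [mk_invRev]
    exact Subgroup.inv_mem _ (Subgroup.subset_normalClosure (relAt_mem _ _))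

theorem mk_certWord_mem (P : Pres) (c : List (Wd × ℕ × Bool)) :
    FreeGroup.mk (certWord P c) ∈ Subgroup.normalClosure (presRels P) := by
  induction c with
  | nil => exact Subgroup.one_mem _
  | cons a c ih =>
    unfold certWord at *
    rw [List.flatMap_cons, mk_app]
    exact Subgroup.mul_mem _ (mk_certItem_mem P a) ih

theorem mk_certItem_inv (P : Pres) (x : Wd × ℕ × Bool) :
    FreeGroup.mk (certItem P (x.1, x.2.1, !x.2.2)) = (FreeGroup.mk (certItem P x))⁻¹ := by
  obtain ⟨a, j, b⟩ := x
  unfold certItem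
  cases b <;> simp [← FreeGroup.mul_mk, ← FreeGroup.inv_mk, mul_assoc]

theorem exists_certWord (P : Pres) (x : FreeGroup ℕ)
    (hx : x ∈ Subgroup.normalClosure (presRels P)) :
    ∃ c, x = FreeGroup.mk (certWord P c) := by
  unfold Subgroup.normalClosure at hx
  induction hx using Subgroup.closure_induction with
  | mem x hx =>
    rw [Group.mem_conjugatesOfSet_iff] at hx
    obtain ⟨r, hr, hc⟩ := hx
    obtain ⟨j, rfl⟩ := exists_relAt P r hr
    obtain ⟨g, rfl⟩ := isConj_iff.1 hc
    refine ⟨[(g.toWord, j, true)], ?_⟩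
    simp [certWord, certItem, ← FreeGroup.mul_mk, ← FreeGroup.inv_mk, FreeGroup.mk_toWord, mul_assoc]
  | one => exact ⟨[], rfl⟩
  | mul x y _ _ hx hy =>
    obtain ⟨c, rfl⟩ := hx
    obtain ⟨d, rfl⟩ := hy
    exact ⟨c ++ d, by simp [certWord, List.flatMap_append]⟩
  | inv x hxm hx =>
    obtain ⟨c, rfl⟩ := hx
    clear hxm
    refine ⟨(c.map fun x => (x.1, x.2.1, !x.2.2)).reverse, ?_⟩
    induction c with
    | nil => rfl
    | cons a c ih =>
      have e : certWord P (a :: c) = certItem P a ++ certWord P c := rfl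
      have e2 : ∀ u v, certWord P (u ++ v) = certWord P u ++ certWord P v := by
        intro u v; simp [certWord]
      have e3 : ∀ u, certWord P [u] = certItem P u := by
        intro u; simp [certWord]
      rw [e, mk_app, mul_inv_rev, ih, List.map_cons, List.reverse_cons, e2, mk_app, e3,
        mk_certItem_inv]

theorem triv_iff (P : Pres) (W : Wd) : presProj P (FreeGroup.mk W) = 1 ↔
    ∃ c, FreeGroup.reduce (certWord P c) = FreeGroup.reduce W := by
  rw [presProj_eq_one_iff]
  constructor
  · intro h
    obtain ⟨c, hc⟩ := exists_certWord P _ h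
    refine ⟨c, ?_⟩
    have := congrArg FreeGroup.toWord hc
    simpa using this.symm
  · rintro ⟨c, hc⟩
    have : FreeGroup.mk W = FreeGroup.mk (certWord P c) := by
      apply FreeGroup.toWord_injective
      simpa using hc.symm
    rw [this]
    exact mk_certWord_mem P c

theorem primrec_invRev : Primrec (FreeGroup.invRev : Wd → Wd) := by
  unfold FreeGroup.invRev
  exact Primrec.list_reverse.comp (Primrec.list_map Primrec.id
    ((Primrec.fst.pair (Primrec.not.comp Primrec.snd)).comp Primrec.snd).to₂)

theorem primrec_reduce : Primrec (FreeGroup.reduce : Wd → Wd) := by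
  have hc : Primrec₂ (fun (_ : Wd) (x : (ℕ × Bool) × Wd) =>
      (List.casesOn x.2 [x.1] fun hd2 tl2 =>
        if x.1.1 = hd2.1 ∧ x.1.2 = not hd2.2 then tl2 else x.1 :: hd2 :: tl2 : Wd)) := by
    have : Primrec (fun (p : Wd × (ℕ × Bool) × Wd) =>
      (List.casesOn p.2.2 [p.2.1] fun hd2 tl2 =>
        if p.2.1.1 = hd2.1 ∧ p.2.1.2 = not hd2.2 then tl2 else p.2.1 :: hd2 :: tl2 : Wd)) := by
      refine Primrec.list_casesOn (h := fun (p : Wd × (ℕ × Bool) × Wd) (q : (ℕ × Bool) × Wd) =>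
        if p.2.1.1 = q.1.1 ∧ p.2.1.2 = not q.1.2 then q.2 else p.2.1 :: q.1 :: q.2) (Primrec.snd.comp Primrec.snd) 
        (Primrec.list_cons.comp (Primrec.fst.comp Primrec.snd) (Primrec.const [])) ?_
      have a1 : Primrec (fun z : (Wd × (ℕ × Bool) × Wd) × ((ℕ × Bool) × Wd) => z.1.2.1) :=
        Primrec.fst.comp (Primrec.snd.comp Primrec.fst)
      have a2 : Primrec (fun z : (Wd × (ℕ × Bool) × Wd) × ((ℕ × Bool) × Wd) => z.2.1) :=
        Primrec.fst.comp Primrec.snd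
      have a3 : Primrec (fun z : (Wd × (ℕ × Bool) × Wd) × ((ℕ × Bool) × Wd) => z.2.2) :=
        Primrec.snd.comp Primrec.snd
      refine Primrec.ite (PrimrecPred.and ?_ ?_) a3 (Primrec.list_cons.comp a1 (Primrec.list_cons.comp a2 a3))
      · exact Primrec.eq.comp (Primrec.fst.comp a1) (Primrec.fst.comp a2)
      · exact Primrec.eq.comp (Primrec.snd.comp a1) (Primrec.not.comp (Primrec.snd.comp a2))
    exact this
  refine (Primrec.list_foldr Primrec.id (Primrec.const []) hc).of_eq ?_
  intro L
  induction L with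
  | nil => rfl
  | cons a L ih =>
    simp only [id, List.foldr_cons, FreeGroup.reduce.cons] at ih ⊢
    rw [ih]

theorem primrec_relAt : Primrec₂ relAt := by
  unfold relAt
  have hl : Primrec (fun z : Pres × ℕ => z.1.2.length) :=
    Primrec.list_length.comp (Primrec.snd.comp Primrec.fst)
  refine Primrec.ite (Primrec.nat_lt.comp Primrec.snd hl)
    ((Primrec.list_getD []).comp (Primrec.snd.comp Primrec.fst) Primrec.snd) ?_
  refine Primrec.list_cons.comp (Primrec.pair ?_ (Primrec.const true)) (Primrec.const [])
  exact Primrec.nat_add.comp (Primrec.fst.comp Primrec.fst) (Primrec.nat_sub.comp Primrec.snd hl)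

theorem primrec_certItem : Primrec₂ certItem := by
  unfold certItem
  have hr : Primrec (fun z : Pres × (Wd × ℕ × Bool) => relAt z.1 z.2.2.1) :=
    primrec_relAt.comp Primrec.fst (Primrec.fst.comp (Primrec.snd.comp Primrec.snd))
  have h1 : Primrec (fun z : Pres × (Wd × ℕ × Bool) => z.2.1) :=
    Primrec.fst.comp Primrec.snd
  refine Primrec.list_append.comp h1 (Primrec.list_append.comp ?_ (primrec_invRev.comp h1))
  refine Primrec.ite (Primrec.eq.comp (Primrec.snd.comp (Primrec.snd.comp Primrec.snd)) (Primrec.const true)) hr (primrec_invRev.comp hr)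

theorem primrec_certWord : Primrec₂ certWord := by
  unfold certWord
  exact Primrec.list_flatMap Primrec.snd
    (primrec_certItem.comp (Primrec.fst.comp Primrec.fst) Primrec.snd).to₂

theorem re_triv : REPred (fun z : Pres × Wd => presProj z.1 (FreeGroup.mk z.2) = 1) := by
  let chk : Pres × Wd → ℕ → Bool := fun z n =>
    ((Encodable.decode (α := List (Wd × ℕ × Bool)) n).map
      fun c => decide (FreeGroup.reduce (certWord z.1 c) = FreeGroup.reduce z.2)).getD false
  have hchk : Primrec₂ chk := by
    refine Primrec.option_getD.comp (Primrec.option_map (Primrec.decode.comp Primrec.snd) ?_)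
      (Primrec.const false)
    have : PrimrecPred (fun w : ((Pres × Wd) × ℕ) × List (Wd × ℕ × Bool) =>
       FreeGroup.reduce (certWord w.1.1.1 w.2) = FreeGroup.reduce w.1.1.2) :=
      Primrec.eq.comp (primrec_reduce.comp (primrec_certWord.comp
        (Primrec.fst.comp (Primrec.fst.comp Primrec.fst)) Primrec.snd))
        (primrec_reduce.comp (Primrec.snd.comp (Primrec.fst.comp Primrec.fst)))
    exact this.decide
  have hp : Partrec (fun z => Nat.rfind (fun n => Part.some (chk z n))) :=
    Partrec.rfind (hchk.to_comp.partrec₂)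
  refine hp.dom_re.of_eq ?_
  intro z
  rw [triv_iff]
  refine Nat.rfind_dom.trans ?_
  constructor
  · rintro ⟨n, hn, -⟩
    simp only [Part.mem_some_iff, chk] at hn
    cases hd : Encodable.decode (α := List (Wd × ℕ × Bool)) n with
    | none => simp [hd] at hn
    | some c => 
      refine ⟨c, ?_⟩
      simpa [hd] using hn
  · rintro ⟨c, hc⟩
    refine ⟨Encodable.encode c, ?_, fun _ => trivial⟩
    simp [chk, hc]


/-! ### Embedding a group so that a given involution normally generates -/

section KillSection
open Cardinal

def stdInvol (X : Type) : X ⊕ X × Bool → X ⊕ X × Bool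
  | Sum.inl x => Sum.inl x
  | Sum.inr (x, b) => Sum.inr (x, !b)

theorem invol_std {Ω X : Type} [Infinite X] (hcard : #Ω = #X) (f : Equiv.Perm Ω)
    (hf : ∀ x, f (f x) = x) (i j : X → Ω) (hi : Function.Injective i)
    (hj : Function.Injective j) (hfi : ∀ x, f (i x) = i x) (hfj : ∀ x, f (j x) ≠ j x) :
    ∃ e : (X ⊕ X × Bool) ≃ Ω, ∀ z, e (stdInvol X z) = f (e z) := by
  classical
  let _ : LinearOrder Ω := IsWellOrder.linearOrder (WellOrderingRel (α := Ω))
  have hinf : ℵ₀ ≤ #X := Cardinal.aleph0_le_mk X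
  have h1 : #{x // f x = x} = #X := by
    apply le_antisymm
    · rw [← hcard]; exact Cardinal.mk_subtype_le _
    · exact Cardinal.mk_le_of_injective (f := fun x => (⟨i x, hfi x⟩ : {x // f x = x}))
        (fun a b h => hi (Subtype.ext_iff.1 h))
  have h2 : #{x // x < f x} = #X := by
    apply le_antisymm
    · rw [← hcard]; exact Cardinal.mk_subtype_le _
    · have : #X ≤ #({x // x < f x} × Bool) := by
        refine Cardinal.mk_le_of_injective (f := fun x =>
          if h : j x < f (j x) then (⟨j x, h⟩, true) else
            (⟨f (j x), by
              rw [hf]; exact lt_of_le_of_ne (not_lt.1 h) (hfj x)⟩, false)) ?_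
        intro a b h
        simp only at h
        split_ifs at h with ha hb hb
        · exact hj (by simpa using h)
        · simp at h
        · simp at h
        · exact hj (by simpa using h)
      rw [Cardinal.mk_prod] at this
      simp only [Cardinal.lift_id, Cardinal.mk_fintype, Fintype.card_bool] at this
      by_contra hlt
      rw [not_le] at hlt
      have := Cardinal.mul_lt_of_lt hinf hlt (lt_of_lt_of_le (Cardinal.natCast_lt_aleph0 (n := 2)) hinf)
      exact absurd ‹_› (not_le.2 this)
  obtain ⟨e1⟩ := Cardinal.eq.1 h1.symm
  obtain ⟨e2⟩ := Cardinal.eq.1 h2.symm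
  let T : X ⊕ X × Bool → Ω := fun z => match z with
    | Sum.inl x => (e1 x : Ω)
    | Sum.inr (x, true) => (e2 x : Ω)
    | Sum.inr (x, false) => f (e2 x : Ω)
  have hT : Function.Bijective T := by
    constructor
    · rintro (x | ⟨x, b⟩) (y | ⟨y, c⟩) h
      · have : (e1 x : Ω) = e1 y := h
        rw [e1.injective (Subtype.ext this)]
      · exfalso
        have hx := (e1 x).2
        have hy := (e2 y).2
        cases c
        · have h : (e1 x : Ω) = f (e2 y) := h
          rw [h, hf] at hx
          exact absurd hx hy.ne
        · have h : (e1 x : Ω) = (e2 y) := h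
          rw [h] at hx
          exact absurd hx hy.ne'
      · exfalso
        have hx := (e1 y).2
        have hy := (e2 x).2
        cases b
        · have h : f (e2 x) = (e1 y : Ω) := h
          rw [← h, hf] at hx
          exact absurd hx hy.ne
        · have h : (e2 x : Ω) = (e1 y) := h
          rw [← h] at hx
          exact absurd hx hy.ne'
      · have hx := (e2 x).2
        have hy := (e2 y).2
        cases b <;> cases c
        · have h : f (e2 x) = f (e2 y) := h
          rw [e2.injective (Subtype.ext (f.injective h))]
        · exfalso
          have h : f (e2 x) = (e2 y) := h
          rw [← h, hf] at hy
          exact lt_asymm hx hy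
        · exfalso
          have h : (e2 x : Ω) = f (e2 y) := h
          rw [h, hf] at hx
          exact lt_asymm hx hy
        · have h : (e2 x : Ω) = (e2 y) := h
          rw [e2.injective (Subtype.ext h)]
    · intro ω
      rcases lt_trichotomy ω (f ω) with h | h | h
      · obtain ⟨x, hx⟩ := e2.surjective ⟨ω, h⟩
        exact ⟨Sum.inr (x, true), congrArg Subtype.val hx⟩
      · obtain ⟨x, hx⟩ := e1.surjective ⟨ω, h.symm⟩
        exact ⟨Sum.inl x, congrArg Subtype.val hx⟩
      · obtain ⟨x, hx⟩ := e2.surjective ⟨f ω, by rw [hf]; exact h⟩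
        refine ⟨Sum.inr (x, false), ?_⟩
        have := congrArg (fun z => f (Subtype.val z)) hx
        simpa [hf] using this
  refine ⟨Equiv.ofBijective T hT, ?_⟩
  rintro (x | ⟨x, _ | _⟩)
  · exact (e1 x).2.symm
  · exact (hf _).symm
  · rfl

theorem invol_conj {Ω X : Type} [Infinite X] (hcard : #Ω = #X) (f g : Equiv.Perm Ω)
    (hf : ∀ x, f (f x) = x) (i j : X → Ω) (hi : Function.Injective i)
    (hj : Function.Injective j) (hfi : ∀ x, f (i x) = i x) (hfj : ∀ x, f (j x) ≠ j x)
    (hg : ∀ x, g (g x) = x) (i' j' : X → Ω) (hi' : Function.Injective i')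
    (hj' : Function.Injective j') (hgi : ∀ x, g (i' x) = i' x) (hgj : ∀ x, g (j' x) ≠ j' x) :
    ∃ c : Equiv.Perm Ω, g = c * f * c⁻¹ := by
  obtain ⟨e, he⟩ := invol_std hcard f hf i j hi hj hfi hfj
  obtain ⟨e', he'⟩ := invol_std hcard g hg i' j' hi' hj' hgi hgj
  refine ⟨e.symm.trans e', ?_⟩
  rw [eq_mul_inv_iff_mul_eq]
  ext ω
  obtain ⟨z, rfl⟩ := e.surjective ω
  simp only [Equiv.Perm.mul_apply, Equiv.trans_apply, Equiv.symm_apply_apply, ← he, ← he']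

/-- every element becomes a product of four conjugates of `w` -/
theorem kill_embedding {G : Type} [Group G] (w : G) (hw : w * w = 1) (hne : w ≠ 1) :
    ∃ (Γ : Type) (_ : Group Γ) (ι : G →* Γ), Function.Injective ι ∧
      ∀ y : G, ∃ h : Fin 4 → Γ, ι y = h 0 * ι w * (h 0)⁻¹ * (h 1 * ι w * (h 1)⁻¹) *
        (h 2 * ι w * (h 2)⁻¹) * (h 3 * ι w * (h 3)⁻¹) := by
  classical
  have : Infinite (G × ℕ) := Prod.infinite_of_right
  have hcard : #((ℤ ⊕ Unit) × (G × ℕ)) = #(G × ℕ) := by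
    have : #((ℤ ⊕ Unit) × (G × ℕ)) = #(ℤ ⊕ Unit) * #(G × ℕ) := by simp only [Cardinal.mk_prod, Cardinal.lift_id]
    rw [this]
    apply Cardinal.mul_eq_right (Cardinal.aleph0_le_mk (G × ℕ))
    · exact (Cardinal.mk_le_aleph0).trans (Cardinal.aleph0_le_mk (G × ℕ))
    · exact Cardinal.mk_ne_zero _
  let Lm : G →* Equiv.Perm (G × ℕ) :=
    { toFun := fun g => ⟨fun x => (g * x.1, x.2), fun x => (g⁻¹ * x.1, x.2),
        fun x => by simp, fun x => by simp⟩
      map_one' := by ext x <;> simp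
      map_mul' := fun a b => by ext x <;> simp [mul_assoc] }
  have hLm : ∀ g x, Lm g x = (g * x.1, x.2) := fun _ _ => rfl
  let act : ((ℤ ⊕ Unit) → Prop) → G →* Equiv.Perm ((ℤ ⊕ Unit) × (G × ℕ)) := fun p =>
    { toFun := fun g => Equiv.prodCongrRight (fun s => if p s then Lm g else 1)
      map_one' := by ext x <;> simp
      map_mul' := fun a b => by
        ext ⟨s, x⟩ : 1
        by_cases h : p s <;> simp [h] }
  have hact : ∀ p g s x, act p g (s, x) = (s, if p s then Lm g x else x) := by
    intro p g s x
    change (s, (if p s then Lm g else 1) x) = _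
    by_cases h : p s <;> simp [h]
  let refl : ℤ → Equiv.Perm ((ℤ ⊕ Unit) × (G × ℕ)) := fun c => 
    (Equiv.sumCongr (Equiv.subLeft c) (Equiv.refl Unit)).prodCongr (Equiv.refl (G × ℕ))
  have hr1 : ∀ c n x, refl c (Sum.inl n, x) = (Sum.inl (c - n), x) := fun _ _ _ => rfl
  have hr2 : ∀ c u x, refl c (Sum.inr u, x) = (Sum.inr u, x) := fun _ _ _ => rfl
  have hrr : ∀ c x, refl c (refl c x) = x := by
    rintro c ⟨n | u, x⟩
    · simp [hr1]
    · simp [hr2]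
  let ι := act (fun s => s = Sum.inl 0)
  have hww : ∀ x, ι w (ι w x) = x := by
    intro x
    rw [← Equiv.Perm.mul_apply, ← map_mul, hw, map_one]; rfl
  have hconj : ∀ c : ℤ, ∃ d, refl c = d * ι w * d⁻¹ := by
    intro c
    refine invol_conj (X := G × ℕ) hcard (ι w) (refl c) hww (fun x => (Sum.inl 1, x)) (fun x => (Sum.inl 0, x))
      (fun a b h => by simpa using h) (fun a b h => by simpa using h) ?_ ?_ (hrr c)
      (fun x => (Sum.inr (), x)) (fun x => (Sum.inl (|c| + 1), x))
      (fun a b h => by simpa using h) (fun a b h => by simpa using h) ?_ ?_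
    · intro x; simp [ι, hact]
    · intro x; simp [ι, hact, hLm, Prod.ext_iff, hne]
    · intro x; rw [hr2]
    · intro x; rw [hr1]
      intro h
      have h := congrArg Prod.fst h
      simp only [Sum.inl.injEq] at h
      have := le_abs_self c
      have := abs_nonneg c
      omega
  refine ⟨Equiv.Perm ((ℤ ⊕ Unit) × (G × ℕ)), inferInstance, ι, ?_, ?_⟩
  · intro a b h
    have := DFunLike.congr_fun h ((Sum.inl 0, (1, 0)) : ((ℤ ⊕ Unit) × (G × ℕ)))
    simpa [ι, hact, hLm] using this
  · intro y
    obtain ⟨d0, hd0⟩ := hconj 0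
    obtain ⟨d1, hd1⟩ := hconj 1
    let Y := act (fun s => ∃ n : ℤ, 0 ≤ n ∧ s = Sum.inl n) y
    refine ⟨![Y * d1, Y * d0, d0, d1], ?_⟩
    have : ι y = Y * refl 1 * Y⁻¹ * (Y * refl 0 * Y⁻¹) * refl 0 * refl 1 := by
      have hY : Y⁻¹ = act (fun s => ∃ n : ℤ, 0 ≤ n ∧ s = Sum.inl n) y⁻¹ := (map_inv _ _).symm
      have : Y * refl 1 * Y⁻¹ * (Y * refl 0 * Y⁻¹) * refl 0 * refl 1 = 
        Y * refl 1 * refl 0 * Y⁻¹ * refl 0 * refl 1 := by group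
      rw [this, hY]
      ext ⟨n | u, x⟩ : 1
      · simp only [Equiv.Perm.mul_apply, hr1, hact, Y, ι]
        rcases lt_trichotomy n 0 with h | h | h
        · have a1 : ¬ (1 ≤ n) := by omega
          have a2 : n ≠ 0 := by omega
          have a3 : ¬ (0 ≤ n) := by omega
          simp [a1, a2, a3]
        · subst h
          simp 
        · have a1 : (1 ≤ n) := by omega
          have a2 : n ≠ 0 := by omega
          have a3 : (0 ≤ n) := by omega
          simp only [hLm]; simp [a1, a2, a3]
      · simp only [Equiv.Perm.mul_apply, hr2, hact, Y, ι]
        simp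
    rw [this]
    simp only [Matrix.cons_val]
    nth_rw 1 [hd1]
    nth_rw 1 [hd0]
    nth_rw 1 [hd0]
    nth_rw 1 [hd1]
    group

end KillSection


/-! ### The permutation model -/

section ModelSection
open Cardinal

def cm {G : Type} [Group G] (x y : G) : G := x * y * x⁻¹ * y⁻¹

theorem map_cm {G H : Type} [Group G] [Group H] (f : G →* H) (x y : G) :
    f (cm x y) = cm (f x) (f y) := by simp [cm]

theorem cm_eq_one {G : Type} [Group G] (x y : G) : cm x y = 1 ↔ x * y = y * x := by
  unfold cm
  rw [mul_inv_eq_one, mul_inv_eq_iff_eq_mul]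

abbrev MI (Λ : Type) := (Λ → Bool) × Λ × ℕ
abbrev MQ (Λ : Type) := MI Λ × (Λ → Bool) × Λ

def mshift {Λ : Type} [AddCommGroup Λ] (v : Λ) (q : MQ Λ) : MQ Λ := (q.1, q.2.1, q.2.2 + v)

def mcol {Λ : Type} (q : MQ Λ) : Bool := q.2.1 q.2.2

theorem orbit_model {Λ N : Type} [AddCommGroup Λ] [AddCommGroup N] (α : N →+ Λ)
    (hα : Function.Injective α) (i0 : MI Λ) (χ0 : Λ → Bool) (a : Λ) :
    ∃ (O : Type) (Ψ : O × N ≃ MQ Λ) (o0 : O),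
      (∀ o u u', Ψ (o, u + u') = mshift (α u') (Ψ (o, u))) ∧ Ψ (o0, 0) = (i0, χ0, a) ∧
      ∀ pt : N → Bool, #{o // (fun u => mcol (Ψ (o, u))) = pt} = #(MI Λ) := by
  classical
  obtain ⟨S, hS, haS⟩ := AddSubgroup.exists_isComplement_left α.range a
  have hb : Function.Bijective (fun z : S × N => (z.1 : Λ) + α z.2) := by
    constructor
    · rintro ⟨s, u⟩ ⟨s', u'⟩ h
      have := hS.1 (a₁ := (s, ⟨α u, u, rfl⟩)) (a₂ := (s', ⟨α u', u', rfl⟩)) h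
      simp only [Prod.mk.injEq] at this ⊢
      exact ⟨this.1, hα (Subtype.ext_iff.1 this.2)⟩
    · intro v
      obtain ⟨⟨s, ⟨_, u, rfl⟩⟩, h⟩ := hS.2 v
      exact ⟨(s, u), h⟩
  let e := Equiv.ofBijective _ hb
  have he : ∀ s u, e (s, u) = (s : Λ) + α u := fun _ _ => rfl
  let Ψ : (MI Λ × (Λ → Bool) × S) × N ≃ MQ Λ :=
    { toFun := fun z => (z.1.1, z.1.2.1, e (z.1.2.2, z.2))
      invFun := fun q => ((q.1, q.2.1, (e.symm q.2.2).1), (e.symm q.2.2).2)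
      left_inv := fun z => by simp
      right_inv := fun q => by simp }
  have hΨ : ∀ i χ s u, Ψ ((i, χ, s), u) = (i, χ, (s : Λ) + α u) := fun _ _ _ _ => rfl
  refine ⟨MI Λ × (Λ → Bool) × S, Ψ, (i0, χ0, ⟨a, haS⟩), ?_, ?_, ?_⟩
  · rintro ⟨i, χ, s⟩ u u'
    simp [hΨ, mshift, add_assoc]
  · simp [hΨ]
  · intro pt
    have hinf : ℵ₀ ≤ #(MI Λ) := Cardinal.aleph0_le_mk _
    apply le_antisymm
    · refine (Cardinal.mk_subtype_le _).trans ?_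
      have h1 : #(Λ → Bool) ≤ #(MI Λ) := Cardinal.mk_le_of_injective
        (f := fun χ => ((χ, 0, 0) : MI Λ)) (fun x y h => by simpa using h)
      have h2 : #S ≤ #(MI Λ) := Cardinal.mk_le_of_injective
        (f := fun s => ((fun _ => false, (s : Λ), 0) : MI Λ)) (fun x y h => by
          simpa [Subtype.ext_iff] using h)
      have h3 : #(MI Λ × (Λ → Bool) × S) = #(MI Λ) * (#(Λ → Bool) * #S) := by
        simp only [Cardinal.mk_prod, Cardinal.lift_id]
      rw [h3]
      calc _ ≤ #(MI Λ) * (#(MI Λ) * #(MI Λ)) := by gcongr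
        _ = #(MI Λ) := by rw [Cardinal.mul_eq_self hinf, Cardinal.mul_eq_self hinf]
    · let χ1 : Λ → Bool := fun v => pt (e.symm v).2
      have hχ1 : ∀ i, (fun u => mcol (Ψ ((i, χ1, ⟨a, haS⟩), u))) = pt := by
        intro i
        funext u
        have : e.symm (a + α u) = (⟨a, haS⟩, u) := by
          rw [Equiv.symm_apply_eq]; rfl
        simp [hΨ, mcol, χ1, this]
      exact Cardinal.mk_le_of_injective (f := fun i => (⟨(i, χ1, ⟨a, haS⟩), hχ1 i⟩ :
        {o // (fun u => mcol (Ψ (o, u))) = pt})) (fun x y h => by simpa using h)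

theorem rule_perm {Λ N : Type} [AddCommGroup Λ] [AddCommGroup N] (α β : N →+ Λ)
    (hα : Function.Injective α) (hβ : Function.Injective β) (i0 : MI Λ) (χ0 : Λ → Bool) (a c : Λ)
    (hac : ∀ u, χ0 (a + α u) = χ0 (c + β u)) :
    ∃ r : Equiv.Perm (MQ Λ), (∀ u q, r (mshift (α u) q) = mshift (β u) (r q)) ∧
      (∀ q, mcol (r q) = mcol q) ∧ r (i0, χ0, a) = (i0, χ0, c) := by
  classical
  obtain ⟨O, Ψ, o0, h1, h2, h3⟩ := orbit_model α hα i0 χ0 a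
  obtain ⟨O', Ψ', o0', h1', h2', h3'⟩ := orbit_model β hβ i0 χ0 c
  have hE : ∃ E : O ≃ O', ∀ o u, mcol (Ψ' (E o, u)) = mcol (Ψ (o, u)) := by
    have : ∀ pt : N → Bool, Nonempty ({o // (fun u => mcol (Ψ (o, u))) = pt} ≃
        {o // (fun u => mcol (Ψ' (o, u))) = pt}) := fun pt =>
      Cardinal.eq.1 ((h3 pt).trans (h3' pt).symm)
    have F := fun pt => Classical.choice (this pt)
    refine ⟨(Equiv.sigmaFiberEquiv (fun o => (fun u => mcol (Ψ (o, u))))).symm.trans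
      ((Equiv.sigmaCongrRight F).trans
        (Equiv.sigmaFiberEquiv (fun o => (fun u => mcol (Ψ' (o, u)))))), ?_⟩
    intro o u
    exact congrFun (F (fun u => mcol (Ψ (o, u))) ⟨o, rfl⟩).2 u
  obtain ⟨E0, hE0⟩ := hE
  have hpt : ∀ u, mcol (Ψ' (o0', u)) = mcol (Ψ (o0, u)) := by
    intro u
    have e1 : Ψ (o0, u) = mshift (α u) (i0, χ0, a) := by rw [← h2, ← h1, zero_add]
    have e2 : Ψ' (o0', u) = mshift (β u) (i0, χ0, c) := by rw [← h2', ← h1', zero_add]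
    rw [e1, e2]
    exact (hac u).symm
  let E : O ≃ O' := E0.trans (Equiv.swap (E0 o0) o0')
  have hE1 : E o0 = o0' := by simp [E]
  have hE : ∀ o u, mcol (Ψ' (E o, u)) = mcol (Ψ (o, u)) := by
    intro o u
    by_cases h : o = o0
    · rw [h, hE1, hpt]
    · by_cases h' : E0 o = o0'
      · have : E o = E0 o0 := by simp [E, h']
        rw [this, hE0, ← hE0 o, h', hpt]
      · have : E o = E0 o := by
          simp only [E, Equiv.trans_apply]
          rw [Equiv.swap_apply_of_ne_of_ne _ h']
          intro hh; exact h (E0.injective hh)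
        rw [this, hE0]
  refine ⟨Ψ.symm.trans ((E.prodCongr (Equiv.refl N)).trans Ψ'), ?_, ?_, ?_⟩
  · intro u q
    obtain ⟨⟨o, u'⟩, rfl⟩ := Ψ.surjective q
    rw [← h1]
    simp [h1']
  · intro q
    obtain ⟨⟨o, u'⟩, rfl⟩ := Ψ.surjective q
    simp [hE]
  · rw [← h2, ← h2']
    simp [hE1]

def fibHom (Q S : Type) : (Q → Equiv.Perm S) →* Equiv.Perm (Q × S) where
  toFun f := Equiv.prodCongrRight f
  map_one' := by ext x <;> simp
  map_mul' f g := by ext x <;> simp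

def baseHom (Q S : Type) : Equiv.Perm Q →* Equiv.Perm (Q × S) where
  toFun f := f.prodCongr (Equiv.refl S)
  map_one' := by ext x <;> simp
  map_mul' f g := by ext x <;> simp

theorem base_fib (Q S : Type) (π : Equiv.Perm Q) (f g : Q → Equiv.Perm S)
    (h : ∀ q, g (π q) = f q) :
    baseHom Q S π * fibHom Q S f * (baseHom Q S π)⁻¹ = fibHom Q S g := by
  rw [mul_inv_eq_iff_eq_mul]
  ext ⟨q, s⟩ : 1
  simp [baseHom, fibHom, h]

theorem base_fib_single (Q S : Type) [DecidableEq Q] (π : Equiv.Perm Q) (q q' : Q)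
    (θ : Equiv.Perm S) (h : π q = q') :
    baseHom Q S π * fibHom Q S (Pi.mulSingle q θ) * (baseHom Q S π)⁻¹ =
      fibHom Q S (Pi.mulSingle q' θ) := by
  apply base_fib
  intro z
  subst h
  by_cases hz : z = q
  · subst hz; simp
  · rw [Pi.mulSingle_eq_of_ne hz, Pi.mulSingle_eq_of_ne]
    intro h; exact hz (π.injective h)

def kapPerm : Equiv.Perm (Bool × Bool) := (Equiv.refl Bool).prodCongr (Equiv.boolNot)
def thePerm : Equiv.Perm (Bool × Bool) :=
  ⟨fun z => (xor z.1 z.2, z.2), fun z => (xor z.1 z.2, z.2), by decide, by decide⟩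

theorem kt_sq : cm (kapPerm) (thePerm) * cm (kapPerm) (thePerm) = 1 := by
  ext ⟨a, b⟩ <;> cases a <;> cases b <;> rfl

theorem kt_ne : cm (kapPerm) (thePerm) ≠ 1 := by
  intro h
  have := congrArg Prod.fst (DFunLike.congr_fun h (true, true))
  revert this
  decide

theorem model_exists {Λ : Type} [AddCommGroup Λ] {R : Type} (N : R → Type)
    [∀ i, AddCommGroup (N i)] (α β : ∀ i, N i →+ Λ) (hα : ∀ i, Function.Injective (α i))
    (hβ : ∀ i, Function.Injective (β i)) (a c : R → Λ) (D : Λ → Prop)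
    (hD : ∀ i u, D (a i + α i u) ↔ D (c i + β i u)) (p ini : Λ) (hp : D p) (hini : ¬ D ini) :
    ∃ (G : Type) (_ : Group G) (X : Λ → G) (t k : G) (r : R → G),
      (∀ u v, X (u + v) = X u * X v) ∧
      (∀ i u, r i * X (α i u) * (r i)⁻¹ = X (β i u)) ∧
      (∀ i, r i * (X (a i) * t * (X (a i))⁻¹) * (r i)⁻¹ = X (c i) * t * (X (c i))⁻¹) ∧
      (∀ i, cm (k) (r i) = 1) ∧ cm (k) (X ini * t * (X ini)⁻¹) = 1 ∧
      cm (k) (X p * t * (X p)⁻¹) ≠ 1 ∧ cm (k) (X p * t * (X p)⁻¹) * cm (k) (X p * t * (X p)⁻¹) = 1 := by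
  classical
  let S := Bool × Bool
  let χ0 : Λ → Bool := fun v => decide (D v)
  let i0 : MI Λ := (χ0, 0, 0)
  let s0 : MQ Λ := (i0, χ0, 0)
  choose ρ h1 h2 h3 using fun i => rule_perm (α i) (β i) (hα i) (hβ i) i0 χ0 (a i) (c i)
    (fun u => by simp [χ0, hD])
  let Xp : Λ → Equiv.Perm (MQ Λ) := fun v => ⟨mshift v, mshift (-v),
    fun q => by simp [mshift], fun q => by simp [mshift]⟩
  have hX : ∀ v q, Xp v q = mshift v q := fun _ _ => rfl
  have hXs : ∀ v, Xp v s0 = (i0, χ0, v) := by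
    intro v; simp [hX, mshift, s0]
  let kf : MQ Λ → Equiv.Perm S := fun q => if mcol q = true then kapPerm else 1
  let X : Λ → Equiv.Perm (MQ Λ × S) := fun v => baseHom _ S (Xp v)
  let t := fibHom (MQ Λ) S (Pi.mulSingle s0 thePerm)
  have ht : ∀ v, X v * t * (X v)⁻¹ = fibHom (MQ Λ) S (Pi.mulSingle (i0, χ0, v) thePerm) :=
    fun v => base_fib_single _ _ _ _ _ _ (hXs v)
  have hcom : ∀ v, cm (fibHom _ S kf) (X v * t * (X v)⁻¹) =
      fibHom (MQ Λ) S (Pi.mulSingle (i0, χ0, v) (cm (if D v then kapPerm else 1) thePerm)) := by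
    intro v
    rw [ht, ← map_cm]
    congr 1
    funext q
    by_cases hq : q = (i0, χ0, v)
    · subst hq
      simp [cm, kf, mcol, χ0]
    · simp [cm, Pi.mulSingle_eq_of_ne hq]
  refine ⟨Equiv.Perm (MQ Λ × S), inferInstance, X, t, fibHom _ S kf,
    fun i => baseHom _ S (ρ i), ?_, ?_, ?_, ?_, ?_, ?_, ?_⟩
  · intro u v
    simp only [X]
    rw [← map_mul]
    congr 1
    ext q : 1
    simp [hX, mshift, add_assoc, add_comm u v]
  · intro i u
    simp only [X]
    rw [← map_inv, ← map_mul, ← map_mul]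
    congr 1
    rw [mul_inv_eq_iff_eq_mul]
    ext q : 1
    exact h1 i u q
  · intro i
    rw [ht, ht]
    exact base_fib_single _ _ _ _ _ _ (h3 i)
  · intro i
    rw [cm_eq_one, eq_comm, ← mul_inv_eq_iff_eq_mul]
    apply base_fib
    intro q
    simp [kf, h2]
  · rw [hcom, if_neg hini]
    have : cm (1 : Equiv.Perm (Bool × Bool)) thePerm = 1 := by simp [cm]
    rw [this, Pi.mulSingle_one, map_one]
  · rw [hcom, if_pos hp]
    intro h
    have h4 : ∀ f, fibHom (MQ Λ) S f = 1 → f = 1 := by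
      intro f hf
      funext q
      ext s : 1
      have := DFunLike.congr_fun hf (q, s)
      exact congrArg Prod.snd this
    have := congrFun (h4 _ h) (i0, χ0, p)
    rw [Pi.mulSingle_eq_same] at this
    exact kt_ne this
  · rw [hcom, if_pos hp, ← map_mul, ← Pi.mulSingle_mul, kt_sq, Pi.mulSingle_one, map_one]

end ModelSection


/-! ### Affine systems and stack machines -/

section AffineSection

/-- A system of partial affine maps of `ℤ^(Option K)`. -/
structure Aff (K : Type) where
  R : Type
  a : R → Option K → ℤ
  c : R → Option K → ℤ
  m : R → K → ℤ
  k : R → K → ℤ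

def aext {K : Type} (m u : K → ℤ) : Option K → ℤ
  | none => 0
  | some j => m j * u j

def Aff.Step {K : Type} (S : Aff K) (v v' : Option K → ℤ) : Prop :=
  ∃ i u, v = S.a i + aext (S.m i) u ∧ v' = S.c i + aext (S.k i) u

variable {A K Γ : Type} [DecidableEq K]

def mstep (δ : A → Option (K × (Option Γ → A × List Γ))) (c : A × (K → List Γ)) :
    Option (A × (K → List Γ)) :=
  (δ c.1).map fun z => ((z.2 (c.2 z.1).head?).1,
    Function.update c.2 z.1 ((z.2 (c.2 z.1).head?).2 ++ (c.2 z.1).tail))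

def encL (b : ℕ) (dg : Γ → ℕ) (L : List Γ) : ℕ := L.foldr (fun s n => dg s + b * n) 0

def encC (b : ℕ) (dg : Γ → ℕ) (code : A → ℕ) (c : A × (K → List Γ)) : Option K → ℤ
  | none => code c.1
  | some j => encL b dg (c.2 j)

def dgo (dg : Γ → ℕ) : Option Γ → ℕ
  | none => 0
  | some s => dg s

theorem encL_append (b : ℕ) (dg : Γ → ℕ) (L L' : List Γ) :
    encL b dg (L ++ L') = encL b dg L + b ^ L.length * encL b dg L' := by
  induction L with
  | nil => simp [encL]
  | cons s L ih =>
    have : ∀ M, encL b dg (s :: M) = dg s + b * encL b dg M := fun _ => rfl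
    rw [List.cons_append, this, ih, this, List.length_cons, pow_succ]
    ring

theorem encL_head (b : ℕ) (dg : Γ → ℕ) (L : List Γ) :
    encL b dg L = dgo dg L.head? + b * encL b dg L.tail := by
  cases L with
  | nil => simp [encL, dgo]
  | cons s L => rfl

def machAff (δ : A → Option (K × (Option Γ → A × List Γ))) (T : Finset A)
    (b : ℕ) (dg : Γ → ℕ) (code : A → ℕ) : Aff K where
  R := {z : A × K × (Option Γ → A × List Γ) // z.1 ∈ T ∧ δ z.1 = some z.2} × Option Γ
  a i := fun j => match j with
    | none => code i.1.1.1
    | some j => if j = i.1.1.2.1 then dgo dg i.2 else 0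
  c i := fun j => match j with
    | none => code (i.1.1.2.2 i.2).1
    | some j => if j = i.1.1.2.1 then encL b dg (i.1.1.2.2 i.2).2 else 0
  m i := fun j => if j = i.1.1.2.1 then b else 1
  k i := fun j => if j = i.1.1.2.1 then (b : ℤ) ^ (i.1.1.2.2 i.2).2.length else 1

variable (δ : A → Option (K × (Option Γ → A × List Γ))) (T : Finset A)
    (b : ℕ) (dg : Γ → ℕ) (code : A → ℕ)

theorem machAff_finite [Finite Γ] : Finite (machAff δ T b dg code).R := by
  have : Finite {z : A × K × (Option Γ → A × List Γ) // z.1 ∈ T ∧ δ z.1 = some z.2} := by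
    refine Finite.of_injective (β := T) (fun z => ⟨z.1.1, z.2.1⟩) ?_
    rintro ⟨⟨q, z⟩, h1, h2⟩ ⟨⟨q', z'⟩, h1', h2'⟩ h
    simp only [Subtype.mk.injEq] at h
    subst h
    simp only at h2 h2'
    rw [h2] at h2'
    simp only [Option.some.injEq] at h2'
    subst h2'
    rfl
  unfold machAff
  infer_instance

theorem machAff_m_ne (hb : 0 < b) (i j) : (machAff δ T b dg code).m i j ≠ 0 := by
  simp only [machAff]
  split_ifs
  · exact_mod_cast hb.ne'
  · simp

theorem machAff_k_ne (hb : 0 < b) (i j) : (machAff δ T b dg code).k i j ≠ 0 := by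
  simp only [machAff]
  split_ifs
  · exact pow_ne_zero _ (by exact_mod_cast hb.ne')
  · simp

theorem machAff_sim (c c' : A × (K → List Γ)) (hc : c.1 ∈ T) (h : mstep δ c = some c') :
    (machAff δ T b dg code).Step (encC b dg code c) (encC b dg code c') := by
  unfold mstep at h
  cases hz : δ c.1 with
  | none => simp [hz] at h
  | some z =>
    rw [hz] at h
    simp only [Option.map_some, Option.some.injEq] at h
    subst h
    obtain ⟨q, S⟩ := c
    obtain ⟨k, φ⟩ := z
    refine ⟨(⟨(q, k, φ), hc, hz⟩, (S k).head?),
      fun j => if j = k then encL b dg (S k).tail else encL b dg (S j), ?_, ?_⟩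
    · funext j
      cases j with
      | none => simp [encC, machAff, aext]
      | some j =>
        by_cases hj : j = k
        · subst hj
          simp only [encC, machAff, aext, Pi.add_apply, if_true]
          rw [encL_head]; push_cast; rfl
        · simp [encC, machAff, aext, hj]
    · funext j
      cases j with
      | none => simp [encC, machAff, aext]
      | some j =>
        by_cases hj : j = k
        · subst hj
          simp only [encC, machAff, aext, Pi.add_apply, if_true, Function.update_self]
          rw [encL_append]; push_cast; rfl
        · simp [encC, machAff, aext, hj]

theorem machAff_det (hb : 0 < b) (hdg : ∀ s, 0 < dg s ∧ dg s < b) (hinj : Function.Injective dg)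
    (hcode : Set.InjOn code T) (v v' v'' : Option K → ℤ)
    (h1 : (machAff δ T b dg code).Step v v') (h2 : (machAff δ T b dg code).Step v v'') :
    v' = v'' := by
  obtain ⟨⟨⟨⟨q, k, φ⟩, hq, hz⟩, o⟩, u, rfl, rfl⟩ := h1
  obtain ⟨⟨⟨⟨q', k', φ'⟩, hq', hz'⟩, o'⟩, u', h, rfl⟩ := h2
  have h0 := congrFun h none
  simp only [machAff, aext, Pi.add_apply, add_zero, Nat.cast_inj] at h0
  have := hcode hq hq' h0
  subst this
  simp only at hz hz'
  rw [hz] at hz'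
  simp only [Option.some.injEq, Prod.mk.injEq] at hz'
  obtain ⟨rfl, rfl⟩ := hz'
  have hk := congrFun h (some k)
  simp only [machAff, aext, Pi.add_apply, if_true] at hk
  have hoo : dgo dg o = dgo dg o' ∧ u k = u' k := by
    have hlt : ∀ o, dgo dg o < b := by
      intro o
      cases o with
      | none => exact hb
      | some s => exact (hdg s).2
    have hbz : (0 : ℤ) < b := by exact_mod_cast hb
    have e1 := congrArg (fun z => z % (b : ℤ)) hk
    simp only [Int.add_mul_emod_self_left] at e1
    rw [Int.emod_eq_of_lt (by positivity) (by exact_mod_cast hlt o),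
      Int.emod_eq_of_lt (by positivity) (by exact_mod_cast hlt o')] at e1
    refine ⟨by exact_mod_cast e1, ?_⟩
    rw [e1] at hk
    exact mul_left_cancel₀ hbz.ne' (add_left_cancel hk)
  have hoo' : o = o' := by
    have h3 := hoo.1
    cases o <;> cases o' <;> simp only [dgo] at h3
    · rfl
    · exact absurd h3 (hdg _).1.ne
    · exact absurd h3 (hdg _).1.ne'
    · rw [hinj h3]
  subst hoo'
  have huu : u = u' := by
    funext j
    by_cases hj : j = k
    · rw [hj]; exact hoo.2
    · have := congrFun h (some j)
      simpa [machAff, aext, hj] using this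
  rw [huu]

theorem machAff_term (hcode : Set.InjOn code T) (c : A × (K → List Γ)) (hc : c.1 ∈ T)
    (h : δ c.1 = none) (v : Option K → ℤ) :
    ¬ (machAff δ T b dg code).Step (encC b dg code c) v := by
  rintro ⟨⟨⟨⟨q, k, φ⟩, hq, hz⟩, o⟩, u, h1, -⟩
  have h0 := congrFun h1 none
  simp only [machAff, aext, Pi.add_apply, add_zero, Nat.cast_inj, encC] at h0
  have : c.1 = q := hcode hc hq h0
  simp only at hz
  rw [← this, h] at hz
  cases hz

end AffineSection


/-! ### From partial recursive functions to affine systems -/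

section TMSection
open Turing Turing.PartrecToTM2 Turing.TM2

abbrev TStmt := TM2.Stmt (fun _ : K' => Γ') Λ' (Option Γ')
abbrev TA := TStmt × Option Γ'

def tmδ : TA → Option (K' × (Option Γ' → TA × List Γ'))
  | (TM2.Stmt.push k f q, v) => some (k, fun o => ((q, v), f v :: o.toList))
  | (TM2.Stmt.peek k f q, v) => some (k, fun o => ((q, f v o), o.toList))
  | (TM2.Stmt.pop k f q, v) => some (k, fun o => ((q, f v o), []))
  | (TM2.Stmt.load f q, v) => some (K'.main, fun o => ((q, f v), o.toList))
  | (TM2.Stmt.branch f q1 q2, v) => some (K'.main, fun o => ((cond (f v) q1 q2, v), o.toList))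
  | (TM2.Stmt.goto f, v) => some (K'.main, fun o => ((tr (f v), v), o.toList))
  | (TM2.Stmt.halt, _) => none

def toM (c : TM2.Cfg (fun _ : K' => Γ') Λ' (Option Γ')) : TA × (K' → List Γ') :=
  ((match c.l with
    | some l => tr l
    | none => TM2.Stmt.halt, c.var), c.stk)

theorem head_tail_list {α : Type} (L : List α) : L.head?.toList ++ L.tail = L := by
  cases L <;> rfl

theorem head_tail_update (S : K' → List Γ') (k : K') :
    Function.update S k ((S k).head?.toList ++ (S k).tail) = S := by
  rw [head_tail_list, Function.update_eq_self]

abbrev MReach : TA × (K' → List Γ') → TA × (K' → List Γ') → Prop :=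
  Relation.ReflTransGen (fun a b => mstep tmδ a = some b)

theorem stepAux_sim (q : TStmt) (v : Option Γ') (S : K' → List Γ') :
    MReach ((q, v), S) (toM (TM2.stepAux q v S)) := by
  induction q generalizing v S with
  | push k f q ih =>
    refine Relation.ReflTransGen.head ?_ (ih v (Function.update S k (f v :: S k)))
    simp only [mstep, tmδ, Option.map_some, List.cons_append, head_tail_list]
  | peek k f q ih =>
    refine Relation.ReflTransGen.head ?_ (ih _ S)
    simp only [mstep, tmδ, Option.map_some, head_tail_update]
  | pop k f q ih =>
    refine Relation.ReflTransGen.head ?_ (ih _ _)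
    simp only [mstep, tmδ, Option.map_some, List.nil_append]
  | load f q ih =>
    refine Relation.ReflTransGen.head ?_ (ih _ S)
    simp only [mstep, tmδ, Option.map_some, head_tail_update]
  | branch f q1 q2 ih1 ih2 =>
    rw [TM2.stepAux]
    cases h : f v
    · refine Relation.ReflTransGen.head ?_ (ih2 v S)
      simp only [mstep, tmδ, Option.map_some, head_tail_update, h, cond_false]
    · refine Relation.ReflTransGen.head ?_ (ih1 v S)
      simp only [mstep, tmδ, Option.map_some, head_tail_update, h, cond_true]
  | goto f =>
    refine Relation.ReflTransGen.single ?_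
    simp only [mstep, tmδ, Option.map_some, head_tail_update]
    rfl
  | halt => exact Relation.ReflTransGen.refl

theorem reaches_sim (c c' : TM2.Cfg (fun _ : K' => Γ') Λ' (Option Γ'))
    (h : StateTransition.Reaches (TM2.step tr) c c') : MReach (toM c) (toM c') := by
  induction h with
  | refl => exact Relation.ReflTransGen.refl
  | tail _ h ih =>
    refine ih.trans ?_
    rename_i x y _
    obtain ⟨l, v, S⟩ := x
    cases l with
    | none => simp [TM2.step] at h
    | some l =>
      simp only [TM2.step, Option.mem_def, Option.some.injEq] at h
      rw [← h]
      exact stepAux_sim _ _ _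

open scoped Classical in
noncomputable def tmT (c : ToPartrec.Code) : Finset TA :=
  (insert TM2.Stmt.halt ((codeSupp c Cont'.halt).biUnion fun l => TM2.stmts₁ (tr l))) ×ˢ
    Finset.univ

theorem mem_tmT (c : ToPartrec.Code) (q : TStmt) (v : Option Γ') :
    (q, v) ∈ tmT c ↔ q = TM2.Stmt.halt ∨ ∃ l ∈ codeSupp c Cont'.halt, q ∈ TM2.stmts₁ (tr l) := by
  simp [tmT]

theorem tmT_closed (c : ToPartrec.Code) (q : TA) (hq : q ∈ tmT c) (z) (hz : tmδ q = some z)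
    (o : Option Γ') : (z.2 o).1 ∈ tmT c := by
  obtain ⟨q, v⟩ := q
  rw [mem_tmT] at hq
  rcases hq with rfl | ⟨l, hl, hq⟩
  · simp [tmδ] at hz
  · have hs : TM2.SupportsStmt (codeSupp c Cont'.halt) (tr l) :=
      codeSupp_supports (Finset.Subset.refl _) _ hl
    have key : ∀ q' v', q' ∈ TM2.stmts₁ q → (q', v') ∈ tmT c := by
      intro q' v' h
      rw [mem_tmT]
      exact Or.inr ⟨l, hl, TM2.stmts₁_trans hq h⟩
    cases q <;> simp only [tmδ, Option.some.injEq] at hz <;> try subst hz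
    · exact key _ _ (by simp [TM2.stmts₁, TM2.stmts₁_self])
    · exact key _ _ (by simp [TM2.stmts₁, TM2.stmts₁_self])
    · exact key _ _ (by simp [TM2.stmts₁, TM2.stmts₁_self])
    · exact key _ _ (by simp [TM2.stmts₁, TM2.stmts₁_self])
    · refine key _ _ ?_
      cases ‹Option Γ' → Bool› v <;> simp [TM2.stmts₁, TM2.stmts₁_self]
    · have := TM2.stmts₁_supportsStmt_mono hq hs
      exact (mem_tmT c _ _).2 (Or.inr ⟨_, this v, TM2.stmts₁_self⟩)
    · cases hz

theorem mreach_aff (c : ToPartrec.Code) (b : ℕ) (dg : Γ' → ℕ) (code : TA → ℕ)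
    (x y : TA × (K' → List Γ')) (hx : x.1 ∈ tmT c) (h : MReach x y) :
    Relation.ReflTransGen (machAff tmδ (tmT c) b dg code).Step (encC b dg code x)
      (encC b dg code y) := by
  suffices Relation.ReflTransGen (machAff tmδ (tmT c) b dg code).Step (encC b dg code x)
      (encC b dg code y) ∧ y.1 ∈ tmT c from this.1
  induction h with
  | refl => exact ⟨Relation.ReflTransGen.refl, hx⟩
  | tail _ h ih =>
    rename_i y z _
    refine ⟨ih.1.tail (machAff_sim _ _ _ _ _ _ _ ih.2 h), ?_⟩
    unfold mstep at h
    cases hz : tmδ y.1 with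
    | none => simp [hz] at h
    | some w =>
      rw [hz] at h
      simp only [Option.map_some, Option.some.injEq] at h
      rw [← h]
      exact tmT_closed c _ ih.2 _ hz _

def tdg : Γ' → ℕ
  | Γ'.consₗ => 1
  | Γ'.cons => 2
  | Γ'.bit0 => 3
  | Γ'.bit1 => 4

theorem trPosNum_enc (n : PosNum) : ∀ h : ℕ → ℕ, h 0 = 2 →
    (∀ e, 0 < e → h e = (if e % 2 = 0 then 3 else 4) + 5 * h (e / 2)) →
    encL 5 tdg (trPosNum n ++ [Γ'.cons]) = h n := by
  intro h h0 hs
  have hc : ∀ s L, encL 5 tdg (s :: L) = tdg s + 5 * encL 5 tdg L := fun _ _ => rfl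
  induction n with
  | one =>
    have := hs 1 one_pos
    simp only [trPosNum, List.cons_append, List.nil_append, hc]
    change _ = h 1
    rw [this]; simp [h0, tdg, encL]
  | bit1 n ih =>
    have e1 : ((PosNum.bit1 n : PosNum) : ℕ) = 2 * (n : ℕ) + 1 := by
      rw [PosNum.cast_bit1]; ring
    rw [e1, hs _ (by omega)]
    have e2 : (2 * (n : ℕ) + 1) / 2 = n := by omega
    have e3 : (2 * (n : ℕ) + 1) % 2 ≠ 0 := by omega
    rw [e2, if_neg e3, ← ih]
    rfl
  | bit0 n ih =>
    have e1 : ((PosNum.bit0 n : PosNum) : ℕ) = 2 * (n : ℕ) := by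
      rw [PosNum.cast_bit0]; ring
    have hpos : 0 < (n : ℕ) := PosNum.cast_pos n
    rw [e1, hs _ (by omega)]
    have e2 : (2 * (n : ℕ)) / 2 = n := by omega
    have e3 : (2 * (n : ℕ)) % 2 = 0 := by omega
    rw [e2, if_pos e3, ← ih]
    rfl

theorem trNat_enc (h : ℕ → ℕ) (h0 : h 0 = 2)
    (hs : ∀ e, 0 < e → h e = (if e % 2 = 0 then 3 else 4) + 5 * h (e / 2)) (e : ℕ) :
    encL 5 tdg (trList [e]) = h e := by
  have : ((e : Num) : ℕ) = e := Num.to_of_nat e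
  simp only [trList, trNat]
  generalize (e : Num) = z at this
  cases z with
  | zero => rw [← this]; simpa [trNum, encL, tdg] using h0.symm
  | pos n => 
    rw [← this]
    exact trPosNum_enc n h h0 hs

theorem exists_digits : ∃ h : ℕ → ℕ, Primrec h ∧ h 0 = 2 ∧
    (∀ e, 0 < e → h e = (if e % 2 = 0 then 3 else 4) + 5 * h (e / 2)) := by
  let h : ℕ → ℕ := fun e => Nat.strongRec (motive := fun _ => ℕ) (fun n ih =>
    if hn : 0 < n then (if n % 2 = 0 then 3 else 4) + 5 * ih (n / 2) (by omega) else 2) e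
  have h1 : ∀ n, h n = if 0 < n then (if n % 2 = 0 then 3 else 4) + 5 * h (n / 2) else 2 := by
    intro n
    simp only [h]
    rw [Nat.strongRec]
    split_ifs <;> rfl
  refine ⟨h, ?_, by rw [h1]; simp, fun e he => by rw [h1, if_pos he]⟩
  have : Primrec₂ (fun (_ : Unit) (n : ℕ) => h n) := by
    refine Primrec.nat_strong_rec (fun (_ : Unit) (n : ℕ) => h n)
      (g := fun _ l => some (if 0 < l.length then
        (if l.length % 2 = 0 then 3 else 4) + 5 * l.getD (l.length / 2) 0 else 2)) ?_ ?_
    · have hl : Primrec (fun z : Unit × List ℕ => z.2.length) :=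
        Primrec.list_length.comp Primrec.snd
      refine Primrec.option_some.comp (Primrec.ite (Primrec.nat_lt.comp (Primrec.const 0) hl) ?_
        (Primrec.const 2))
      refine Primrec.nat_add.comp (Primrec.ite (Primrec.eq.comp (Primrec.nat_mod.comp hl (Primrec.const 2))
        (Primrec.const 0)) (Primrec.const 3) (Primrec.const 4)) ?_
      exact Primrec.nat_mul.comp (Primrec.const 5) ((Primrec.list_getD 0).comp Primrec.snd 
        (Primrec.nat_div.comp hl (Primrec.const 2)))
    · intro _ n
      simp only [List.length_map, List.length_range, Option.some.injEq]
      conv_rhs => rw [h1]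
      split_ifs with h2
      · congr 2
        rw [List.getD_eq_getElem _ _ (by simp; omega)]
        simp
      · congr 2
        rw [List.getD_eq_getElem _ _ (by simp; omega)]
        simp
      · rfl
  exact this.comp (Primrec.const ()) Primrec.id

instance : Fintype K' := ⟨{K'.main, K'.rev, K'.aux, K'.stack}, by rintro (_ | _ | _ | _) <;> simp⟩

theorem comp_system (f : ℕ →. ℕ) (hf : Nat.Partrec f) :
    ∃ (S : Aff K') (g : ℕ → ℕ) (base p0 p1 : Option K' → ℤ), Finite S.R ∧
      (∀ i j, S.m i j ≠ 0) ∧ (∀ i j, S.k i j ≠ 0) ∧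
      (∀ v v' v'', S.Step v v' → S.Step v v'' → v' = v'') ∧
      (∀ v, ¬ S.Step p0 v) ∧ (∀ v, ¬ S.Step p1 v) ∧ p0 ≠ p1 ∧ Primrec g ∧
      ∀ e, (0 ∈ f e → Relation.ReflTransGen S.Step (base + Pi.single (some K'.main) (g e : ℤ)) p0) ∧
        (1 ∈ f e → Relation.ReflTransGen S.Step (base + Pi.single (some K'.main) (g e : ℤ)) p1) := by
  classical
  obtain ⟨h, hprim, h0, hs⟩ := exists_digits
  have hf1 : Nat.Partrec' (n := 1) (fun v => f v.head) := 
    Nat.Partrec'.of_part (((Partrec.nat_iff.2 hf)).comp Primrec.vector_head.to_comp)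
  obtain ⟨c, hc⟩ := ToPartrec.Code.exists_code hf1
  let T := tmT c
  let code : TA → ℕ := fun q => if hq : q ∈ T then (T.equivFin ⟨q, hq⟩ : ℕ) else 0
  have hcode : Set.InjOn code T := by
    intro a ha b hb hab
    have ha : a ∈ T := ha
    have hb : b ∈ T := hb
    simp only [code, dif_pos ha, dif_pos hb] at hab
    have := T.equivFin.injective (Fin.ext hab)
    exact congrArg Subtype.val this
  let S := machAff tmδ T 5 tdg code
  have hdg : ∀ s, 0 < tdg s ∧ tdg s < 5 := by intro s; cases s <;> simp [tdg]
  have hinj : Function.Injective tdg := by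
    intro s s'; cases s <;> cases s' <;> simp [tdg]
  let fin : ℕ → Option K' → ℤ := fun x => encC 5 tdg code (toM (PartrecToTM2.halt [x]))
  have hT : ∀ x, (toM (PartrecToTM2.halt [x])).1 ∈ T := fun x => (mem_tmT c _ _).2 (Or.inl rfl)
  let base : Option K' → ℤ := encC 5 tdg code
    (((toM (PartrecToTM2.init c [0])).1, fun _ => []) : TA × (K' → List Γ'))
  have hini : ∀ e, base + Pi.single (some K'.main) (h e : ℤ) =
      encC 5 tdg code (toM (PartrecToTM2.init c [e])) := by
    intro e
    funext j
    rcases j with _ | (_ | _ | _ | _)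
    · simp [base, encC, toM, PartrecToTM2.init]
    · have := trNat_enc h h0 hs e
      simp only [base, encC, toM, PartrecToTM2.init, Pi.add_apply, Pi.single_eq_same, K'.elim_main,
        this]
      simp [encL]
    · simp [base, encC, toM, PartrecToTM2.init, K'.elim]
    · simp [base, encC, toM, PartrecToTM2.init, K'.elim]
    · simp [base, encC, toM, PartrecToTM2.init, K'.elim]
  have hrun : ∀ e x, x ∈ f e → Relation.ReflTransGen S.Step
      (base + Pi.single (some K'.main) (h e : ℤ)) (fin x) := by
    intro e x hx
    rw [hini]
    refine mreach_aff c 5 tdg code _ _ ?_ (reaches_sim _ _ ?_)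
    · refine (mem_tmT c _ _).2 (Or.inr ⟨trNormal c Cont'.halt, ?_, TM2.stmts₁_self⟩)
      exact codeSupp_self _ _ (trStmts₁_self _)
    · have h1 : c.eval [e] = pure <$> f e := hc ⟨[e], rfl⟩
      have h2 := tr_eval c [e]
      have : PartrecToTM2.halt [x] ∈ StateTransition.eval (TM2.step tr) (PartrecToTM2.init c [e]) := by
        rw [h2, h1]
        exact (Part.mem_map_iff _).2 ⟨[x], (Part.mem_map_iff _).2 ⟨x, hx, rfl⟩, rfl⟩
      exact (StateTransition.mem_eval.1 this).1
  refine ⟨S, h, base, fin 0, fin 1, machAff_finite _ _ _ _ _, machAff_m_ne _ _ _ _ _ (by norm_num),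
    machAff_k_ne _ _ _ _ _ (by norm_num), machAff_det _ _ _ _ _ (by norm_num) hdg hinj hcode,
    machAff_term _ _ _ _ _ hcode _ (hT 0) rfl, machAff_term _ _ _ _ _ hcode _ (hT 1) rfl, ?_,
    hprim, fun e => ⟨hrun e 0, hrun e 1⟩⟩
  intro hh
  have := congrFun hh (some K'.main)
  simp only [fin, encC, toM, PartrecToTM2.halt, K'.elim_main, Nat.cast_inj] at this
  rw [trNat_enc h h0 hs, trNat_enc h h0 hs, hs 1 one_pos] at this
  simp [h0] at this

end TMSection


/-! ### The groups attached to an affine system -/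

section GroupSection

def quad {H : Type} [Group H] (w : H) (h : Fin 4 → H) : H :=
  h 0 * w * (h 0)⁻¹ * (h 1 * w * (h 1)⁻¹) * (h 2 * w * (h 2)⁻¹) * (h 3 * w * (h 3)⁻¹)

theorem map_quad {H H' : Type} [Group H] [Group H'] (φ : H →* H') (w : H) (h : Fin 4 → H) :
    φ (quad w h) = quad (φ w) (fun i => φ (h i)) := by simp [quad]

theorem quad_one {H : Type} [Group H] (h : Fin 4 → H) : quad 1 h = 1 := by simp [quad]

variable {K : Type} [Fintype K] [DecidableEq K] (S : Aff K) [Fintype S.R]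

abbrev Sy := Option K ⊕ (Bool ⊕ S.R)
abbrev RI := Bool ⊕ (Option K × Option K) ⊕ (S.R × K) ⊕ S.R ⊕ S.R

variable {S}
variable {H H' : Type} [Group H] [Group H']

noncomputable def xprod (y : Sy S → H) (v : Option K → ℤ) : H :=
  ((Finset.univ : Finset (Option K)).toList.map fun κ => y (Sum.inl κ) ^ v κ).prod

def tS : Sy S := Sum.inr (Sum.inl true)
def kS : Sy S := Sum.inr (Sum.inl false)
def rS (i : S.R) : Sy S := Sum.inr (Sum.inr i)

noncomputable def tv (y : Sy S → H) (v : Option K → ℤ) : H :=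
  xprod y v * y tS * (xprod y v)⁻¹

noncomputable def relI (p : Option K → ℤ) (y : Sy S → H) (w : H) : RI S → H
  | Sum.inl true => w * w
  | Sum.inl false => w⁻¹ * cm (y kS) (tv y p)
  | Sum.inr (Sum.inl z) => cm (y (Sum.inl z.1)) (y (Sum.inl z.2))
  | Sum.inr (Sum.inr (Sum.inl z)) => y (rS z.1) * y (Sum.inl (some z.2)) ^ (S.m z.1 z.2) *
      (y (rS z.1))⁻¹ * (y (Sum.inl (some z.2)) ^ (S.k z.1 z.2))⁻¹
  | Sum.inr (Sum.inr (Sum.inr (Sum.inl i))) => y (rS i) * tv y (S.a i) * (y (rS i))⁻¹ *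
      (tv y (S.c i))⁻¹
  | Sum.inr (Sum.inr (Sum.inr (Sum.inr i))) => cm (y kS) (y (rS i))

noncomputable def relE (base : Option K → ℤ) (j : Option K) (y : Sy S → H) (n : ℕ) : H :=
  cm (y kS) (xprod y base * y (Sum.inl j) ^ n * y tS * (xprod y base * y (Sum.inl j) ^ n)⁻¹)

theorem map_xprod (φ : H →* H') (y : Sy S → H) (v : Option K → ℤ) :
    φ (xprod y v) = xprod (fun s => φ (y s)) v := by
  simp only [xprod, map_list_prod, List.map_map]
  congr 1
  apply List.map_congr_left
  intro κ _
  simp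

theorem map_tv (φ : H →* H') (y : Sy S → H) (v : Option K → ℤ) :
    φ (tv y v) = tv (fun s => φ (y s)) v := by
  simp [tv, map_xprod]

theorem map_relI (φ : H →* H') (p : Option K → ℤ) (y : Sy S → H) (w : H) (i : RI S) :
    φ (relI p y w i) = relI p (fun s => φ (y s)) (φ w) i := by
  rcases i with (_ | _) | z | z | i | i <;> simp [relI, map_tv, map_cm]

theorem map_relE (φ : H →* H') (base : Option K → ℤ) (j : Option K) (y : Sy S → H) (n : ℕ) :
    φ (relE base j y n) = relE base j (fun s => φ (y s)) n := by
  simp [relE, map_xprod, map_cm]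

/-! generator numbering -/

variable (S) in
abbrev GenT := Option (Sy S × Fin 4)

variable (S) in
noncomputable def nGen : ℕ := Fintype.card (GenT S)

noncomputable def gnum (z : GenT S) : ℕ := (Fintype.equivFin (GenT S) z : ℕ)

theorem gnum_lt (z : GenT S) : gnum z < nGen S := (Fintype.equivFin (GenT S) z).2

theorem gnum_inj : Function.Injective (gnum (S := S)) := by
  intro a b h
  exact (Fintype.equivFin (GenT S)).injective (Fin.ext h)

theorem gnum_surj (i : ℕ) (hi : i < nGen S) : ∃ z : GenT S, gnum z = i := by
  obtain ⟨z, hz⟩ := (Fintype.equivFin (GenT S)).surjective ⟨i, hi⟩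
  exact ⟨z, by simp [gnum, hz]⟩

open scoped Classical in
noncomputable def gext (f : GenT S → H) (i : ℕ) : H :=
  if h : ∃ z : GenT S, gnum z = i then f h.choose else 1

theorem gext_gnum (f : GenT S → H) (z : GenT S) : gext f (gnum z) = f z := by
  have h : ∃ z' : GenT S, gnum z' = gnum z := ⟨z, rfl⟩
  rw [gext, dif_pos h, gnum_inj h.choose_spec]

theorem gext_ge (f : GenT S → H) (i : ℕ) (hi : nGen S ≤ i) : gext f i = 1 := by
  rw [gext, dif_neg]
  rintro ⟨z, rfl⟩
  exact absurd (gnum_lt z) (not_lt.2 hi)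

variable (S) in
noncomputable def wF : FreeGroup ℕ := FreeGroup.of (gnum (S := S) none)

noncomputable def yF (s : Sy S) : FreeGroup ℕ :=
  quad (wF S) (fun i => FreeGroup.of (gnum (S := S) (some (s, i))))

def pw (Y : Wd) (n : ℕ) : Wd := (List.range n).flatMap (fun _ => Y)

theorem mk_pw (Y : Wd) (n : ℕ) : FreeGroup.mk (pw Y n) = FreeGroup.mk Y ^ n := by
  induction n with
  | zero => rfl
  | succ n ih =>
    rw [pow_succ, ← ih, ← mk_app]
    simp [pw, List.range_succ, List.flatMap_append]

theorem primrec_pw (Y : Wd) : Primrec (pw Y) :=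
  Primrec.list_flatMap Primrec.list_range (Primrec.const Y).to₂

variable (S) in
noncomputable def wordE (base : Option K → ℤ) (j : Option K) (n : ℕ) : Wd :=
  (yF (S := S) kS * xprod (yF (S := S)) base).toWord ++ (pw (yF (S := S) (Sum.inl j)).toWord n ++
  ((yF (S := S) tS).toWord ++ (pw ((yF (S := S) (Sum.inl j))⁻¹).toWord n ++
  (((xprod (yF (S := S)) base)⁻¹ * (yF (S := S) kS)⁻¹ * xprod (yF (S := S)) base).toWord ++
  (pw (yF (S := S) (Sum.inl j)).toWord n ++ (((yF (S := S) tS)⁻¹).toWord ++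
  (pw ((yF (S := S) (Sum.inl j))⁻¹).toWord n ++ ((xprod (yF (S := S)) base)⁻¹).toWord)))))))

theorem mk_wordE (base : Option K → ℤ) (j : Option K) (n : ℕ) :
    FreeGroup.mk (wordE S base j n) = relE base j (yF (S := S)) n := by
  simp only [wordE, mk_app, mk_pw, FreeGroup.mk_toWord, relE, cm]
  group

theorem primrec_wordE (base : Option K → ℤ) (j : Option K) : Primrec (wordE S base j) := by
  unfold wordE
  repeat first
    | exact Primrec.const _
    | exact primrec_pw _
    | refine Primrec.list_append.comp ?_ ?_

variable (S) in
noncomputable def uList (p base : Option K → ℤ) (j : Option K) (n : ℕ) : List Wd :=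
  wordE S base j n :: (Finset.univ : Finset (RI S)).toList.map
    (fun i => (relI p (yF (S := S)) (wF S) i).toWord)

theorem primrec_uList (p base : Option K → ℤ) (j : Option K) : Primrec (uList S p base j) :=
  Primrec.list_cons.comp (primrec_wordE base j) (Primrec.const _)

variable (S) in
noncomputable def uPres (p base : Option K → ℤ) (j : Option K) (n : ℕ) : Pres :=
  (nGen S, uList S p base j n)

theorem uPres_kill (p base : Option K → ℤ) (j : Option K) (n : ℕ) (φ : FreeGroup ℕ →* H)
    (h0 : ∀ i, nGen S ≤ i → φ (FreeGroup.of i) = 1)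
    (h1 : ∀ i, relI p (fun s => φ (yF (S := S) s)) (φ (wF S)) i = 1)
    (h2 : relE base j (fun s => φ (yF (S := S) s)) n = 1) :
    ∀ r ∈ presRels (uPres S p base j n), φ r = 1 := by
  rintro r (⟨w, hw, rfl⟩ | ⟨i, hi, rfl⟩)
  · simp only [uPres, uList, List.mem_cons, List.mem_map, Finset.mem_toList, Finset.mem_univ,
      true_and] at hw
    rcases hw with rfl | ⟨i, rfl⟩
    · rw [mk_wordE, map_relE, h2]
    · rw [FreeGroup.mk_toWord, map_relI, h1]
  · exact h0 i hi

theorem presProj_rel (P : Pres) (r : FreeGroup ℕ) (hr : r ∈ presRels P) : presProj P r = 1 := by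
  rw [presProj_eq_one_iff]
  exact Subgroup.subset_normalClosure hr

theorem uPres_relI (p base : Option K → ℤ) (j : Option K) (n : ℕ) (i) :
    relI p (fun s => presProj (uPres S p base j n) (yF (S := S) s))
      (presProj (uPres S p base j n) (wF S)) i = 1 := by
  rw [← map_relI]
  apply presProj_rel
  refine Or.inl ⟨(relI p (yF (S := S)) (wF S) i).toWord, ?_, FreeGroup.mk_toWord.symm⟩
  simp [uPres, uList]

theorem uPres_relE (p base : Option K → ℤ) (j : Option K) (n : ℕ) :
    relE base j (fun s => presProj (uPres S p base j n) (yF (S := S) s)) n = 1 := by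
  rw [← map_relE, ← mk_wordE]
  apply presProj_rel
  exact Or.inl ⟨_, by simp [uPres, uList], rfl⟩

/-- homomorphisms out of a presented group -/
def presLift (P : Pres) (φ : FreeGroup ℕ →* H) (h : ∀ r ∈ presRels P, φ r = 1) :
    presGroup P →* H :=
  QuotientGroup.lift _ φ (fun x hx => by
    have : Subgroup.normalClosure (presRels P) ≤ φ.ker := Subgroup.normalClosure_le_normal h
    exact this hx)

theorem presLift_proj (P : Pres) (φ : FreeGroup ℕ →* H) (h : ∀ r ∈ presRels P, φ r = 1)
    (x : FreeGroup ℕ) : presLift P φ h (presProj P x) = φ x := rfl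

theorem presHom_ext (P : Pres) (φ ψ : presGroup P →* H)
    (h : ∀ i, φ (presProj P (FreeGroup.of i)) = ψ (presProj P (FreeGroup.of i))) : φ = ψ := by
  have : φ.comp (presProj P) = ψ.comp (presProj P) := FreeGroup.ext_hom _ _ h
  ext x
  obtain ⟨y, rfl⟩ := presProj_surj P x
  exact DFunLike.congr_fun this y

/-! consequences of the relations -/

theorem xprod_add_aux (y : Option K → H) (hy : ∀ a b, Commute (y a) (y b))
    (l : List (Option K)) (u v : Option K → ℤ) :
    (l.map fun κ => y κ ^ (u + v) κ).prod =
      (l.map fun κ => y κ ^ u κ).prod * (l.map fun κ => y κ ^ v κ).prod := by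
  induction l with
  | nil => simp
  | cons a l ih =>
    have hc : Commute (y a ^ v a) (l.map fun κ => y κ ^ u κ).prod := by
      apply Commute.list_prod_right
      intro z hz
      obtain ⟨κ, -, rfl⟩ := List.mem_map.1 hz
      exact (hy a κ).zpow_zpow _ _
    rw [List.map_cons, List.prod_cons, ih, List.map_cons, List.prod_cons, List.map_cons, List.prod_cons,
      Pi.add_apply, zpow_add]
    calc _ = y a ^ u a * (y a ^ v a * (l.map fun κ => y κ ^ u κ).prod) *
          (l.map fun κ => y κ ^ v κ).prod := by group
      _ = _ := by rw [hc.eq]; group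

theorem xprod_add (y : Sy S → H) (hy : ∀ a b, Commute (y (Sum.inl a)) (y (Sum.inl b)))
    (u v : Option K → ℤ) : xprod y (u + v) = xprod y u * xprod y v :=
  xprod_add_aux (fun κ => y (Sum.inl κ)) hy _ u v

theorem xprod_single (y : Sy S → H) (j : Option K) (n : ℤ) :
    xprod y (Pi.single j n) = y (Sum.inl j) ^ n := by
  unfold xprod
  have : ∀ l : List (Option K), l.Nodup → (l.map fun κ => y (Sum.inl κ) ^ (Pi.single j n : Option K → ℤ) κ).prod =
      if j ∈ l then y (Sum.inl j) ^ n else 1 := by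
    intro l
    induction l with
    | nil => simp
    | cons a l ih =>
      intro hl
      rw [List.nodup_cons] at hl
      rw [List.map_cons, List.prod_cons, ih hl.2]
      by_cases h : a = j
      · subst h
        simp [hl.1]
      · have h' : j ≠ a := fun hh => h hh.symm
        simp [h, h']
  rw [this _ (Finset.nodup_toList _)]
  simp

theorem relI_step (p : Option K → ℤ) (y : Sy S → H) (w : H) (h : ∀ i, relI p y w i = 1)
    (v v' : Option K → ℤ) (hs : S.Step v v') (hv : cm (y kS) (tv y v) = 1) :
    cm (y kS) (tv y v') = 1 := by
  have hcomm : ∀ a b, Commute (y (Sum.inl a)) (y (Sum.inl b)) := fun a b =>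
    (cm_eq_one _ _).1 (h (Sum.inr (Sum.inl (a, b))))
  obtain ⟨i, u, rfl, rfl⟩ := hs
  have hx : ∀ u, y (rS i) * xprod y (aext (S.m i) u) * (y (rS i))⁻¹ = xprod y (aext (S.k i) u) := by
    intro u
    have := map_xprod (MulAut.conj (y (rS i))).toMonoidHom y (aext (S.m i) u)
    simp only [MulEquiv.toMonoidHom_eq_coe, MonoidHom.coe_coe, MulAut.conj_apply] at this
    rw [this]
    unfold xprod
    congr 1
    apply List.map_congr_left
    intro κ _
    cases κ with
    | none => simp [aext]
    | some j =>
      have hj := h (Sum.inr (Sum.inr (Sum.inl (i, j))))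
      simp only [relI, mul_inv_eq_one] at hj
      simp only [aext, zpow_mul]
      rw [← hj, ← conj_zpow]
  have ht : y (rS i) * tv y (S.a i) * (y (rS i))⁻¹ = tv y (S.c i) := by
    have := h (Sum.inr (Sum.inr (Sum.inr (Sum.inl i))))
    simpa only [relI, mul_inv_eq_one] using this
  have hk : y (rS i) * y kS * (y (rS i))⁻¹ = y kS := by
    have := (cm_eq_one _ _).1 (h (Sum.inr (Sum.inr (Sum.inr (Sum.inr i)))))
    rw [← this]; group
  have htv : ∀ a b, tv y (a + b) = xprod y b * tv y a * (xprod y b)⁻¹ := by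
    intro a b
    rw [add_comm]
    simp only [tv, xprod_add y hcomm]
    group
  have key : y (rS i) * tv y (S.a i + aext (S.m i) u) * (y (rS i))⁻¹ =
      tv y (S.c i + aext (S.k i) u) := by
    rw [htv, htv, ← hx, ← ht]; group
  have : cm (y kS) (tv y (S.c i + aext (S.k i) u)) =
      MulAut.conj (y (rS i)) (cm (y kS) (tv y (S.a i + aext (S.m i) u))) := by
    rw [← key]
    nth_rw 1 [← hk]
    simp only [MulAut.conj_apply, cm]
    group
  rw [this, hv, map_one]

theorem relI_reach (p : Option K → ℤ) (y : Sy S → H) (w : H) (h : ∀ i, relI p y w i = 1)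
    (v v' : Option K → ℤ) (hs : Relation.ReflTransGen S.Step v v')
    (hv : cm (y kS) (tv y v) = 1) : cm (y kS) (tv y v') = 1 := by
  induction hs with
  | refl => exact hv
  | tail _ h1 ih => exact relI_step p y w h _ _ h1 ih

theorem relE_eq (base : Option K → ℤ) (j : Option K) (y : Sy S → H)
    (hy : ∀ a b, Commute (y (Sum.inl a)) (y (Sum.inl b))) (n : ℕ) :
    relE base j y n = cm (y kS) (tv y (base + Pi.single j (n : ℤ))) := by
  rw [tv, xprod_add y hy, xprod_single, zpow_natCast, relE]

theorem uPres_free (p base : Option K → ℤ) (j : Option K) (n : ℕ)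
    (hr : Relation.ReflTransGen S.Step (base + Pi.single j (n : ℤ)) p)
    (g : presGroup (uPres S p base j n)) (hg : g * g = 1) : g = 1 := by
  have h := uPres_relI (S := S) p base j n
  have hE := uPres_relE (S := S) p base j n
  have hcomm : ∀ a b, Commute (presProj (uPres S p base j n) (yF (S := S) (Sum.inl a)))
      (presProj (uPres S p base j n) (yF (S := S) (Sum.inl b))) := fun a b =>
    (cm_eq_one _ _).1 (h (Sum.inr (Sum.inl (a, b))))
  rw [relE_eq _ _ _ hcomm] at hE
  have hp := relI_reach p _ _ h _ _ hr hE
  have hw := h (Sum.inl false)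
  simp only [relI] at hw
  rw [hp, mul_one, inv_eq_one] at hw
  let φ : FreeGroup ℕ →* FreeGroup ℕ := FreeGroup.lift
    (gext (S := S) (fun z => match z with
      | none => 1
      | some s => FreeGroup.of (gnum (S := S) (some s))))
  have hφw : φ (wF S) = 1 := by simp [φ, wF, gext_gnum]
  have hφy : ∀ s, φ (yF (S := S) s) = 1 := by
    intro s
    rw [yF, map_quad, hφw, quad_one]
  have hx1 : ∀ v, xprod (S := S) (fun _ => (1 : FreeGroup ℕ)) v = 1 := by
    intro v; simp [xprod]
  let ξ := presLift (uPres S p base j n) φ (by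
    apply uPres_kill
    · intro i hi
      simp [φ, gext_ge _ i hi]
    · intro i
      simp only [hφy, hφw]
      rcases i with (_ | _) | z | z | i | i <;> simp [relI, tv, cm, hx1]
    · simp only [hφy]
      simp [relE, cm, hx1])
  have hsec : (presProj (uPres S p base j n)).comp ξ = MonoidHom.id _ := by
    apply presHom_ext
    intro i
    simp only [MonoidHom.comp_apply, MonoidHom.id_apply, ξ, presLift_proj]
    by_cases hi : i < nGen S
    · obtain ⟨z, rfl⟩ := gnum_surj i hi
      cases z with
      | none =>
        change presProj _ (φ (wF S)) = presProj _ (wF S)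
        rw [hφw, hw, map_one]
      | some s => simp [φ, gext_gnum]
    · have : presProj (uPres S p base j n) (FreeGroup.of i) = 1 :=
        presProj_rel _ _ (Or.inr ⟨i, not_lt.1 hi, rfl⟩)
      rw [this]
      simp [φ, gext_ge _ i (not_lt.1 hi)]
  have h1 : ξ g = 1 := by
    have : ξ g ^ 2 = 1 := by rw [← map_pow, pow_two, hg, map_one]
    exact (pow_eq_one_iff_left two_ne_zero).1 this
  have := DFunLike.congr_fun hsec g
  simp only [MonoidHom.comp_apply, MonoidHom.id_apply] at this
  rw [← this, h1, map_one]

theorem uPres_invol (p base : Option K → ℤ) (j : Option K) (n : ℕ)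
    (hm : ∀ i j, S.m i j ≠ 0) (hk : ∀ i j, S.k i j ≠ 0)
    (hdet : ∀ v v' v'', S.Step v v' → S.Step v v'' → v' = v'') (hterm : ∀ v, ¬ S.Step p v)
    (hr : ¬ Relation.ReflTransGen S.Step (base + Pi.single j (n : ℤ)) p) :
    ∃ g : presGroup (uPres S p base j n), g * g = 1 ∧ g ≠ 1 := by
  let D : (Option K → ℤ) → Prop := fun v => Relation.ReflTransGen S.Step v p
  have hD : ∀ v v', S.Step v v' → (D v ↔ D v') := by
    intro v v' hs
    constructor
    · intro h
      rcases Relation.ReflTransGen.cases_head h with rfl | ⟨v'', h1, h2⟩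
      · exact absurd hs (hterm _)
      · rw [hdet _ _ _ hs h1]; exact h2
    · intro h
      exact Relation.ReflTransGen.head hs h
  let ahom : (K → ℤ) → (K → ℤ) →+ (Option K → ℤ) := fun m =>
    { toFun := aext m
      map_zero' := by funext κ; cases κ <;> simp [aext]
      map_add' := fun u v => by funext κ; cases κ <;> simp [aext, mul_add] }
  have hah : ∀ m : K → ℤ, (∀ j, m j ≠ 0) → Function.Injective (ahom m) := by
    intro m hm u v huv
    funext j
    have := congrFun huv (some j)
    exact mul_left_cancel₀ (hm j) this
  obtain ⟨G, _, X, t, k, r, h1, h2, h3, h4, h5, h6, h7⟩ :=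
    model_exists (R := S.R) (fun _ => K → ℤ) (fun i => ahom (S.m i)) (fun i => ahom (S.k i))
      (fun i => hah _ (hm i)) (fun i => hah _ (hk i)) S.a S.c D
      (fun i u => hD _ _ ⟨i, u, rfl, rfl⟩) p (base + Pi.single j (n : ℤ))
      Relation.ReflTransGen.refl hr
  let w0 := cm k (X p * t * (X p)⁻¹)
  obtain ⟨Γ, _, ι, hι, hq⟩ := kill_embedding w0 h7 h6
  let y0 : Sy S → G := fun s => match s with
    | Sum.inl κ => X (Pi.single κ 1)
    | Sum.inr (Sum.inl true) => t
    | Sum.inr (Sum.inl false) => k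
    | Sum.inr (Sum.inr i) => r i
  have hcomm : ∀ u v, Commute (X u) (X v) := fun u v => by
    unfold Commute SemiconjBy
    rw [← h1, ← h1, add_comm]
  have hX0 : X 0 = 1 := by
    have := h1 0 0
    rw [add_zero] at this
    simpa using this
  have hXz : ∀ (κ : Option K) (z : ℤ), X (Pi.single κ z) = X (Pi.single κ 1) ^ z := by
    intro κ z
    let Xh : Multiplicative ℤ →* G :=
      { toFun := fun z => X (Pi.single κ z.toAdd)
        map_one' := by simpa using hX0
        map_mul' := fun a b => by rw [← h1, ← Pi.single_add]; rfl }
    have := map_zpow Xh (Multiplicative.ofAdd 1) z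
    simpa [Xh, ← ofAdd_zsmul] using this
  have hxp : ∀ v, xprod y0 v = X v := by
    intro v
    have key : ∀ l : List (Option K), (l.map fun κ => X (Pi.single κ 1) ^ v κ).prod =
        X ((l.map fun κ => (Pi.single κ (v κ) : Option K → ℤ)).sum) := by
      intro l
      induction l with
      | nil => simp [hX0]
      | cons a l ih => simp only [List.map_cons, List.prod_cons, List.sum_cons, h1, ih, hXz a (v a)]
    have := key (Finset.univ : Finset (Option K)).toList
    unfold xprod
    rw [this, Finset.sum_map_toList, Finset.univ_sum_single]
  have hrel : ∀ i, relI p y0 w0 i = 1 := by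
    rintro ((_ | _) | z | z | i | i)
    · simp only [relI, tv, hxp]
      exact inv_mul_cancel _
    · exact h7
    · exact (cm_eq_one _ _).2 (hcomm _ _)
    · obtain ⟨i, j⟩ := z
      have := h2 i (Pi.single j 1)
      have e : ∀ m : K → ℤ, ahom m (Pi.single j 1) = Pi.single (some j) (m j) := by
        intro m
        funext κ
        rcases κ with _ | κ
        · simp [ahom, aext]
        · by_cases hκ : κ = j
          · subst hκ; simp [ahom, aext]
          · simp [ahom, aext, hκ]
      rw [e, e, hXz, hXz (some j) (S.k i j)] at this
      simp only [relI]
      rw [mul_inv_eq_one]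
      exact this
    · simp only [relI, tv, hxp]
      rw [mul_inv_eq_one]
      exact h3 i
    · exact h4 i
  have hrelE : relE base j y0 n = 1 := by
    rw [relE_eq base j y0 (fun a b => hcomm _ _)]
    simp only [tv, hxp]
    exact h5
  choose hv hhv using fun s => hq (y0 s)
  let φ : FreeGroup ℕ →* Γ := FreeGroup.lift
    (gext (S := S) (fun z => match z with
      | none => ι w0
      | some s => hv s.1 s.2))
  have hφw : φ (wF S) = ι w0 := by simp [φ, wF, gext_gnum]
  have hφy : ∀ s, φ (yF (S := S) s) = ι (y0 s) := by
    intro s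
    rw [yF, map_quad, hφw, hhv]
    simp [φ, gext_gnum, quad]
  let ξ := presLift (uPres S p base j n) φ (by
    apply uPres_kill
    · intro i hi
      simp [φ, gext_ge _ i hi]
    · intro i
      simp only [hφy, hφw]
      rw [← map_relI, hrel, map_one]
    · simp only [hφy]
      rw [← map_relE, hrelE, map_one])
  refine ⟨presProj _ (wF S), uPres_relI p base j n (Sum.inl true), ?_⟩
  intro h
  have h8 : ξ (presProj _ (wF S)) = ι w0 := hφw
  rw [h, map_one] at h8
  exact h6 (hι (by rw [map_one]; exact h8.symm))

end GroupSection


/-! gluing: the free product presentation -/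

def evW (w : Wd) : Wd := w.map (fun z => (2 * z.1, z.2))
def odW (w : Wd) : Wd := w.map (fun z => (2 * z.1 + 1, z.2))

theorem mk_evW (w : Wd) :
    FreeGroup.mk (evW w) = FreeGroup.map (fun i => 2 * i) (FreeGroup.mk w) := by
  simp [evW, FreeGroup.map.mk]

theorem mk_odW (w : Wd) :
    FreeGroup.mk (odW w) = FreeGroup.map (fun i => 2 * i + 1) (FreeGroup.mk w) := by
  simp [odW, FreeGroup.map.mk]

/-- free product of two presentations with `N` generators each -/
def frP (N : ℕ) (LU LV : List Wd) : Pres := (2 * N, LU.map evW ++ LV.map odW)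

/-- letter-deleting maps: keep even letters, keep odd letters -/
def dU (w : Wd) : Wd := w.flatMap (fun z => if z.1 % 2 = 0 then [(z.1 / 2, z.2)] else [])
def dV (w : Wd) : Wd := w.flatMap (fun z => if z.1 % 2 = 0 then [] else [(z.1 / 2, z.2)])

theorem primrec_dU : Primrec dU := by
  unfold dU
  refine Primrec.list_flatMap Primrec.id ?_
  refine Primrec.ite (Primrec.eq.comp (Primrec.nat_mod.comp (Primrec.fst.comp Primrec.snd)
    (Primrec.const 2)) (Primrec.const 0)) ?_ (Primrec.const [])
  exact Primrec.list_cons.comp (Primrec.pair (Primrec.nat_div.comp (Primrec.fst.comp Primrec.snd)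
    (Primrec.const 2)) (Primrec.snd.comp Primrec.snd)) (Primrec.const [])

theorem primrec_dV : Primrec dV := by
  unfold dV
  refine Primrec.list_flatMap Primrec.id ?_
  refine Primrec.ite (Primrec.eq.comp (Primrec.nat_mod.comp (Primrec.fst.comp Primrec.snd)
    (Primrec.const 2)) (Primrec.const 0)) (Primrec.const []) ?_
  exact Primrec.list_cons.comp (Primrec.pair (Primrec.nat_div.comp (Primrec.fst.comp Primrec.snd)
    (Primrec.const 2)) (Primrec.snd.comp Primrec.snd)) (Primrec.const [])

theorem primrec_evW : Primrec evW := by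
  unfold evW
  refine Primrec.list_map Primrec.id ?_
  exact Primrec.pair (Primrec.nat_mul.comp (Primrec.const 2) (Primrec.fst.comp Primrec.snd))
    (Primrec.snd.comp Primrec.snd)

theorem primrec_odW : Primrec odW := by
  unfold odW
  refine Primrec.list_map Primrec.id ?_
  exact Primrec.pair (Primrec.succ.comp
    (Primrec.nat_mul.comp (Primrec.const 2) (Primrec.fst.comp Primrec.snd)))
    (Primrec.snd.comp Primrec.snd)

def retU : FreeGroup ℕ →* FreeGroup ℕ :=
  FreeGroup.lift (fun i => if i % 2 = 0 then FreeGroup.of (i / 2) else 1)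
def retV : FreeGroup ℕ →* FreeGroup ℕ :=
  FreeGroup.lift (fun i => if i % 2 = 0 then 1 else FreeGroup.of (i / 2))

theorem mk_cons' (a : ℕ × Bool) (w : Wd) :
    FreeGroup.mk (a :: w) = FreeGroup.mk [a] * FreeGroup.mk w := by
  rw [← mk_app]; rfl

theorem mk_dU (w : Wd) : FreeGroup.mk (dU w) = retU (FreeGroup.mk w) := by
  induction w with
  | nil => rw [← FreeGroup.one_eq_mk]; simp [dU]; rfl
  | cons a w ih =>
    rw [mk_cons', map_mul, ← ih]
    have : dU (a :: w) = (if a.1 % 2 = 0 then [(a.1 / 2, a.2)] else []) ++ dU w := by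
      simp [dU]
    rw [this, mk_app]
    congr 1
    obtain ⟨i, b⟩ := a
    by_cases h : i % 2 = 0 <;> cases b <;>
      simp [retU, FreeGroup.lift_mk, h, FreeGroup.of, ← FreeGroup.one_eq_mk, FreeGroup.invRev]

theorem mk_dV (w : Wd) : FreeGroup.mk (dV w) = retV (FreeGroup.mk w) := by
  induction w with
  | nil => rw [← FreeGroup.one_eq_mk]; simp [dV]; rfl
  | cons a w ih =>
    rw [mk_cons', map_mul, ← ih]
    have : dV (a :: w) = (if a.1 % 2 = 0 then [] else [(a.1 / 2, a.2)]) ++ dV w := by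
      simp [dV]
    rw [this, mk_app]
    congr 1
    obtain ⟨i, b⟩ := a
    by_cases h : i % 2 = 0 <;> cases b <;>
      simp [retV, FreeGroup.lift_mk, h, FreeGroup.of, ← FreeGroup.one_eq_mk, FreeGroup.invRev]

theorem frP_kill {H : Type} [Group H] {N : ℕ} {LU LV : List Wd} (φ : FreeGroup ℕ →* H)
    (hU : ∀ r ∈ presRels (N, LU), φ (FreeGroup.map (fun i => 2 * i) r) = 1)
    (hV : ∀ r ∈ presRels (N, LV), φ (FreeGroup.map (fun i => 2 * i + 1) r) = 1) :
    ∀ r ∈ presRels (frP N LU LV), φ r = 1 := by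
  rintro r (⟨w, hw, rfl⟩ | ⟨i, hi, rfl⟩)
  · simp only [frP, List.mem_append, List.mem_map] at hw
    rcases hw with ⟨w, hw, rfl⟩ | ⟨w, hw, rfl⟩
    · rw [mk_evW]; exact hU _ (Or.inl ⟨w, hw, rfl⟩)
    · rw [mk_odW]; exact hV _ (Or.inl ⟨w, hw, rfl⟩)
  · simp only [frP] at hi
    rcases Nat.even_or_odd' i with ⟨k, rfl | rfl⟩
    · have := hU (FreeGroup.of k) (Or.inr ⟨k, by simp only; omega, rfl⟩)
      simpa using this
    · have := hV (FreeGroup.of k) (Or.inr ⟨k, by simp only; omega, rfl⟩)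
      simpa using this

section FreeProd
variable (N : ℕ) (LU LV : List Wd)

def inU : presGroup (N, LU) →* presGroup (frP N LU LV) :=
  presLift _ ((presProj (frP N LU LV)).comp (FreeGroup.map (fun i => 2 * i))) (by
    rintro r (⟨w, hw, rfl⟩ | ⟨i, hi, rfl⟩)
    · rw [MonoidHom.comp_apply, ← mk_evW]
      exact presProj_rel _ _ (Or.inl ⟨_, by
        simp only [frP, List.mem_append, List.mem_map]; exact Or.inl ⟨w, hw, rfl⟩, rfl⟩)
    · rw [MonoidHom.comp_apply, FreeGroup.map.of]
      exact presProj_rel _ _ (Or.inr ⟨_, by simp only [frP] at hi ⊢; omega, rfl⟩))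

def inV : presGroup (N, LV) →* presGroup (frP N LU LV) :=
  presLift _ ((presProj (frP N LU LV)).comp (FreeGroup.map (fun i => 2 * i + 1))) (by
    rintro r (⟨w, hw, rfl⟩ | ⟨i, hi, rfl⟩)
    · rw [MonoidHom.comp_apply, ← mk_odW]
      exact presProj_rel _ _ (Or.inl ⟨_, by
        simp only [frP, List.mem_append, List.mem_map]; exact Or.inr ⟨w, hw, rfl⟩, rfl⟩)
    · rw [MonoidHom.comp_apply, FreeGroup.map.of]
      exact presProj_rel _ _ (Or.inr ⟨_, by simp only [frP] at hi ⊢; omega, rfl⟩))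

theorem retU_ev (r : FreeGroup ℕ) : retU (FreeGroup.map (fun i => 2 * i) r) = r := by
  have : retU.comp (FreeGroup.map (fun i => 2 * i)) = MonoidHom.id _ :=
    FreeGroup.ext_hom _ _ (fun i => by simp [retU])
  exact DFunLike.congr_fun this r

theorem retU_od (r : FreeGroup ℕ) : retU (FreeGroup.map (fun i => 2 * i + 1) r) = 1 := by
  have : retU.comp (FreeGroup.map (fun i => 2 * i + 1)) = 1 :=
    FreeGroup.ext_hom _ _ (fun i => by simp [retU, Nat.add_mod])
  exact DFunLike.congr_fun this r

theorem retV_ev (r : FreeGroup ℕ) : retV (FreeGroup.map (fun i => 2 * i) r) = 1 := by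
  have : retV.comp (FreeGroup.map (fun i => 2 * i)) = 1 :=
    FreeGroup.ext_hom _ _ (fun i => by simp [retV])
  exact DFunLike.congr_fun this r

theorem retV_od (r : FreeGroup ℕ) : retV (FreeGroup.map (fun i => 2 * i + 1) r) = r := by
  have : retV.comp (FreeGroup.map (fun i => 2 * i + 1)) = MonoidHom.id _ :=
    FreeGroup.ext_hom _ _ (fun i => by
      have : (2 * i + 1) / 2 = i := by omega
      simp [retV, Nat.add_mod, this])
  exact DFunLike.congr_fun this r

def rhoU : presGroup (frP N LU LV) →* presGroup (N, LU) :=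
  presLift _ ((presProj (N, LU)).comp retU) (frP_kill _
    (fun r hr => by rw [MonoidHom.comp_apply, retU_ev]; exact presProj_rel _ _ hr)
    (fun r _ => by rw [MonoidHom.comp_apply, retU_od, map_one]))

def rhoV : presGroup (frP N LU LV) →* presGroup (N, LV) :=
  presLift _ ((presProj (N, LV)).comp retV) (frP_kill _
    (fun r _ => by rw [MonoidHom.comp_apply, retV_ev, map_one])
    (fun r hr => by rw [MonoidHom.comp_apply, retV_od]; exact presProj_rel _ _ hr))

theorem rhoU_mk (w : Wd) : rhoU N LU LV (presProj _ (FreeGroup.mk w)) =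
    presProj (N, LU) (FreeGroup.mk (dU w)) := by
  rw [mk_dU]; rfl

theorem rhoV_mk (w : Wd) : rhoV N LU LV (presProj _ (FreeGroup.mk w)) =
    presProj (N, LV) (FreeGroup.mk (dV w)) := by
  rw [mk_dV]; rfl

theorem rhoU_inU (x) : rhoU N LU LV (inU N LU LV x) = x := by
  obtain ⟨y, rfl⟩ := presProj_surj _ x
  change presProj (N, LU) (retU (FreeGroup.map (fun i => 2 * i) y)) = _
  rw [retU_ev]

theorem rhoV_inV (x) : rhoV N LU LV (inV N LU LV x) = x := by
  obtain ⟨y, rfl⟩ := presProj_surj _ x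
  change presProj (N, LV) (retV (FreeGroup.map (fun i => 2 * i + 1) y)) = _
  rw [retV_od]

theorem rhoU_inV (x) : rhoU N LU LV (inV N LU LV x) = 1 := by
  obtain ⟨y, rfl⟩ := presProj_surj _ x
  change presProj (N, LU) (retU (FreeGroup.map (fun i => 2 * i + 1) y)) = _
  rw [retU_od, map_one]

theorem rhoV_inU (x) : rhoV N LU LV (inU N LU LV x) = 1 := by
  obtain ⟨y, rfl⟩ := presProj_surj _ x
  change presProj (N, LV) (retV (FreeGroup.map (fun i => 2 * i) y)) = _
  rw [retV_ev, map_one]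

abbrev famUV (b : Bool) : Type := presGroup (N, if b then LU else LV)

def ofU : presGroup (N, LU) →* Monoid.CoprodI (famUV N LU LV) :=
  Monoid.CoprodI.of (M := famUV N LU LV) (i := true)

def ofV : presGroup (N, LV) →* Monoid.CoprodI (famUV N LU LV) :=
  Monoid.CoprodI.of (M := famUV N LU LV) (i := false)

def toCop : presGroup (frP N LU LV) →* Monoid.CoprodI (famUV N LU LV) :=
  presLift _ (FreeGroup.lift (fun i => if i % 2 = 0 then
      ofU N LU LV (presProj _ (FreeGroup.of (i / 2)))
    else ofV N LU LV (presProj _ (FreeGroup.of (i / 2))))) (frP_kill _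
    (fun r hr => by
      have : (FreeGroup.lift (fun i => if i % 2 = 0 then
          ofU N LU LV (presProj _ (FreeGroup.of (i / 2)))
        else ofV N LU LV (presProj _ (FreeGroup.of (i / 2))))).comp
          (FreeGroup.map (fun i => 2 * i)) = (ofU N LU LV).comp (presProj _) :=
        FreeGroup.ext_hom _ _ (fun i => by simp)
      have h2 := DFunLike.congr_fun this r
      simp only [MonoidHom.comp_apply] at h2
      rw [h2, presProj_rel _ _ hr, map_one])
    (fun r hr => by
      have : (FreeGroup.lift (fun i => if i % 2 = 0 then
          ofU N LU LV (presProj _ (FreeGroup.of (i / 2)))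
        else ofV N LU LV (presProj _ (FreeGroup.of (i / 2))))).comp
          (FreeGroup.map (fun i => 2 * i + 1)) = (ofV N LU LV).comp (presProj _) :=
        FreeGroup.ext_hom _ _ (fun i => by
          have : (2 * i + 1) / 2 = i := by omega
          simp [Nat.add_mod, this])
      have h2 := DFunLike.congr_fun this r
      simp only [MonoidHom.comp_apply] at h2
      rw [h2, presProj_rel _ _ hr, map_one]))

def backC : Monoid.CoprodI (famUV N LU LV) →* presGroup (frP N LU LV) :=
  Monoid.CoprodI.lift (fun b => match b with
    | true => inU N LU LV
    | false => inV N LU LV)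

theorem backC_ofU (x) : backC N LU LV (ofU N LU LV x) = inU N LU LV x :=
  Monoid.CoprodI.lift_of (M := famUV N LU LV) (i := true) ..

theorem backC_ofV (x) : backC N LU LV (ofV N LU LV x) = inV N LU LV x :=
  Monoid.CoprodI.lift_of (M := famUV N LU LV) (i := false) ..

theorem back_toCop (x) : backC N LU LV (toCop N LU LV x) = x := by
  have : (backC N LU LV).comp (toCop N LU LV) = MonoidHom.id _ := by
    apply presHom_ext
    intro i
    simp only [MonoidHom.comp_apply, MonoidHom.id_apply, toCop, presLift_proj,
      FreeGroup.lift_apply_of]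
    split_ifs with h
    · rw [backC_ofU, inU, presLift_proj, MonoidHom.comp_apply, FreeGroup.map.of]
      congr 2; omega
    · rw [backC_ofV, inV, presLift_proj, MonoidHom.comp_apply, FreeGroup.map.of]
      congr 2; omega
  exact DFunLike.congr_fun this x

theorem frP_invol (g : presGroup (frP N LU LV)) (hg : g * g = 1) (hne : g ≠ 1) :
    (rhoU N LU LV g ≠ 1 ∧ rhoV N LU LV g = 1) ∨ (rhoU N LU LV g = 1 ∧ rhoV N LU LV g ≠ 1) := by
  have h1 : toCop N LU LV g ≠ 1 := by
    intro h
    apply hne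
    rw [← back_toCop N LU LV g, h, map_one]
  obtain ⟨i, m, h, hm, he⟩ := coprod_invol' (G := famUV N LU LV) (toCop N LU LV g)
    (by rw [← map_mul, hg, map_one]) h1
  have hb := congrArg (backC N LU LV) he
  rw [back_toCop, map_mul, map_mul, map_inv] at hb
  cases i with
  | true =>
    have h3 : backC N LU LV (Monoid.CoprodI.of m) = inU N LU LV m := backC_ofU N LU LV m
    rw [h3] at hb
    left
    rw [hb]
    simp only [map_mul, map_inv, rhoU_inU, rhoV_inU]
    refine ⟨fun hh => hm ?_, by group⟩
    rw [conj_eq_one_iff] at hh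
    exact hh
  | false =>
    have h3 : backC N LU LV (Monoid.CoprodI.of m) = inV N LU LV m := backC_ofV N LU LV m
    rw [h3] at hb
    right
    rw [hb]
    simp only [map_mul, map_inv, rhoU_inV, rhoV_inV]
    refine ⟨by group, fun hh => hm ?_⟩
    rw [conj_eq_one_iff] at hh
    exact hh

end FreeProd

/-- the group of order two -/
def pTwo : Pres := (1, [[(0, true), (0, true)]])

def xTwo : presGroup pTwo := presProj pTwo (FreeGroup.of 0)

theorem xTwo_sq : xTwo * xTwo = 1 := by
  unfold xTwo
  rw [← map_mul]
  exact presProj_rel _ _ (Or.inl ⟨_, List.mem_singleton.2 rfl, by simp [FreeGroup.of]⟩)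

theorem two_cases (z : presGroup pTwo) : z = 1 ∨ z = xTwo := by
  obtain ⟨y, rfl⟩ := presProj_surj _ z
  have hof : ∀ i, presProj pTwo (FreeGroup.of i) = 1 ∨ presProj pTwo (FreeGroup.of i) = xTwo := by
    intro i
    cases i with
    | zero => exact Or.inr rfl
    | succ i => exact Or.inl (presProj_rel _ _ (Or.inr ⟨_, by simp [pTwo], rfl⟩))
  have hx := xTwo_sq
  have hinv : (xTwo)⁻¹ = xTwo := inv_eq_of_mul_eq_one_left hx
  induction y using FreeGroup.induction_on with
  | C1 => left; simp
  | of i => exact hof i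
  | inv_of i _ =>
    rw [map_inv]
    rcases hof i with h | h <;> rw [h]
    · left; simp
    · right; exact hinv
  | mul a b ha hb =>
    rw [map_mul]
    rcases ha with ha | ha <;> rcases hb with hb | hb <;> rw [ha, hb] <;> simp [hx]

theorem two_embed {H : Type} [Group H] (g : H) (hg : g * g = 1) (hne : g ≠ 1) :
    ∃ ψ : presGroup pTwo →* H, Function.Injective ψ ∧ ψ xTwo = g := by
  let ψ : presGroup pTwo →* H := presLift pTwo (FreeGroup.lift (fun i => if i = 0 then g else 1)) (by
    rintro r (⟨w, hw, rfl⟩ | ⟨i, hi, rfl⟩)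
    · simp only [pTwo, List.mem_singleton] at hw
      subst hw
      simp [FreeGroup.lift_mk, hg]
    · have : i ≠ 0 := by simp only [pTwo] at hi; omega
      simp [this])
  have hx : ψ xTwo = g := by simp [ψ, xTwo, presLift_proj]
  refine ⟨ψ, (injective_iff_map_eq_one _).2 fun z hz => ?_, hx⟩
  rcases two_cases z with h | h
  · exact h
  · rw [h, hx] at hz; exact absurd hz hne

theorem xTwo_ne : xTwo ≠ 1 := by
  intro h
  obtain ⟨ψ, -, h2⟩ := two_embed (Multiplicative.ofAdd (1 : ZMod 2)) (by decide) (by decide)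
  rw [h, map_one] at h2
  exact absurd h2 (by decide)

theorem primrec_frP (N : ℕ) : Primrec₂ (frP N) := by
  refine Primrec.pair (Primrec.const _) (Primrec.list_append.comp ?_ ?_)
  · exact Primrec.list_map Primrec.fst (primrec_evW.comp Primrec.snd).to₂
  · exact Primrec.list_map Primrec.snd (primrec_odW.comp Primrec.snd).to₂

theorem re_comp {α β : Type} [Primcodable α] [Primcodable β] {p : β → Prop} (hp : REPred p)
    {f : α → β} (hf : Computable f) : REPred (fun a => p (f a)) :=
  Partrec.comp hp hf

/-- two predicates that are semidecidable and complementary cannot separate the two halting values -/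
theorem no_separation (f : ℕ →. ℕ)
    (hdiag : ∀ d : ℕ → ℕ, Computable d → ∃ e, d e ∈ f e)
    (p q : ℕ → Prop) (hp : REPred p) (hq : REPred q) (hpq : ∀ e, q e ↔ ¬ p e)
    (h0 : ∀ e, 0 ∈ f e → p e) (h1 : ∀ e, 1 ∈ f e → q e) : False := by
  classical
  have hq' : REPred (fun e => ¬ p e) := by
    have : q = fun e => ¬ p e := funext fun e => propext (hpq e)
    rwa [this] at hq
  have hc : ComputablePred p := ComputablePred.computable_iff_re_compl_re'.2 ⟨hp, hq'⟩
  obtain ⟨b, hb, rfl⟩ := ComputablePred.computable_iff.1 hc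
  obtain ⟨e, he⟩ := hdiag (fun e => cond (b e) 1 0)
    (Computable.cond hb (Computable.const 1) (Computable.const 0))
  cases hbe : b e with
  | true =>
    rw [hbe] at he
    exact (hpq e).1 (h1 e he) hbe
  | false =>
    rw [hbe] at he
    have : b e = true := h0 e he
    rw [hbe] at this
    exact absurd this (by decide)

theorem diag_exists : ∃ f : ℕ →. ℕ, Nat.Partrec f ∧
    ∀ d : ℕ → ℕ, Computable d → ∃ e, d e ∈ f e := by
  refine ⟨fun e => Nat.Partrec.Code.eval (Denumerable.ofNat Nat.Partrec.Code e) e, ?_, ?_⟩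
  · apply Partrec.nat_iff.1
    exact Nat.Partrec.Code.eval_part.comp (Computable.ofNat _) Computable.id
  · intro d hd
    obtain ⟨c, hc⟩ := Nat.Partrec.Code.exists_code.1 (Partrec.nat_iff.1 hd.partrec)
    refine ⟨Encodable.encode c, ?_⟩
    simp [Denumerable.ofNat_encode, hc]


/-- (Chiodo) The embedding search problem is algorithmically unsolvable: no
algorithm can output words describing an explicit embedding on the generators,
even given the promise that an embedding exists. -/
theorem embedding_search_problem_unsolvable :
    ¬ ∃ F : (ℕ × List (List (ℕ × Bool))) × (ℕ × List (List (ℕ × Bool))) →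
        List (List (ℕ × Bool)), Computable F ∧
      ∀ P₁ P₂ : ℕ × List (List (ℕ × Bool)),
        (∃ ψ : presGroup P₁ →* presGroup P₂, Function.Injective ψ) →
          ∃ φ : presGroup P₁ →* presGroup P₂, Function.Injective φ ∧
            ∀ i : ℕ, φ (presProj P₁ (FreeGroup.of i)) =
              presProj P₂ (FreeGroup.mk ((F (P₁, P₂)).getD i [])) := by
  rintro ⟨F, hF, hall⟩
  classical
  obtain ⟨f, hf, hdiag⟩ := diag_exists
  obtain ⟨S, g, base, p0, p1, hfin, hm, hk, hdet, ht0, ht1, hne, hg, hcomp⟩ := comp_system f hf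
  haveI : Fintype S.R := Fintype.ofFinite S.R
  let j : Option Turing.PartrecToTM2.K' := some Turing.PartrecToTM2.K'.main
  let LU : ℕ → List Wd := fun e => uList S p0 base j (g e)
  let LV : ℕ → List Wd := fun e => uList S p1 base j (g e)
  have hLU : Primrec LU := (primrec_uList p0 base j).comp hg
  have hLV : Primrec LV := (primrec_uList p1 base j).comp hg
  let P2 : ℕ → Pres := fun e => frP (nGen S) (LU e) (LV e)
  have hP2 : Primrec P2 := (primrec_frP (nGen S)).comp hLU hLV
  let W : ℕ → Wd := fun e => (F (pTwo, P2 e)).getD 0 []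
  have hW : Computable W := by
    have h1 : Computable (fun e => F (pTwo, P2 e)) :=
      hF.comp (Computable.pair (Computable.const _) hP2.to_comp)
    exact (Primrec.list_getD ([] : Wd)).to_comp.comp h1 (Computable.const 0)
  -- involutions exist in one of the factors
  have hemb : ∀ e, ∃ ψ : presGroup pTwo →* presGroup (P2 e), Function.Injective ψ := by
    intro e
    by_cases h0 : Relation.ReflTransGen S.Step (base + Pi.single j (g e : ℤ)) p0
    · have h1 : ¬ Relation.ReflTransGen S.Step (base + Pi.single j (g e : ℤ)) p1 := by
        intro h1
        have hru : Relator.RightUnique S.Step := fun a b c hab hac => hdet a b c hab hac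
        rcases Relation.ReflTransGen.total_of_right_unique hru h0 h1 with h | h
        · rcases Relation.ReflTransGen.cases_head h with h | ⟨c, hc, _⟩
          · exact hne h
          · exact ht0 _ hc
        · rcases Relation.ReflTransGen.cases_head h with h | ⟨c, hc, _⟩
          · exact hne h.symm
          · exact ht1 _ hc
      obtain ⟨x, hx, hx1⟩ : ∃ x : presGroup (nGen S, LV e), x * x = 1 ∧ x ≠ 1 :=
        uPres_invol p1 base j (g e) hm hk hdet ht1 h1
      obtain ⟨ψ, hψ, -⟩ := two_embed (inV (nGen S) (LU e) (LV e) x)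
        (by rw [← map_mul, hx, map_one]) (fun h => hx1 (by
          have := rhoV_inV (nGen S) (LU e) (LV e) x
          rw [h, map_one] at this
          exact this.symm))
      exact ⟨ψ, hψ⟩
    · obtain ⟨x, hx, hx1⟩ : ∃ x : presGroup (nGen S, LU e), x * x = 1 ∧ x ≠ 1 :=
        uPres_invol p0 base j (g e) hm hk hdet ht0 h0
      obtain ⟨ψ, hψ, -⟩ := two_embed (inU (nGen S) (LU e) (LV e) x)
        (by rw [← map_mul, hx, map_one]) (fun h => hx1 (by
          have := rhoU_inU (nGen S) (LU e) (LV e) x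
          rw [h, map_one] at this
          exact this.symm))
      exact ⟨ψ, hψ⟩
  have hinv : ∀ e, presProj (P2 e) (FreeGroup.mk (W e)) * presProj (P2 e) (FreeGroup.mk (W e)) = 1 ∧
      presProj (P2 e) (FreeGroup.mk (W e)) ≠ 1 := by
    intro e
    obtain ⟨φ, hφ, hφi⟩ := hall pTwo (P2 e) (hemb e)
    have h0 : φ xTwo = presProj (P2 e) (FreeGroup.mk (W e)) := hφi 0
    rw [← h0]
    refine ⟨by rw [← map_mul, xTwo_sq, map_one], fun h => xTwo_ne (hφ ?_)⟩
    rw [h, map_one]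
  have hsplit : ∀ e, _ := fun e =>
    frP_invol (nGen S) (LU e) (LV e) (presProj (P2 e) (FreeGroup.mk (W e))) (hinv e).1 (hinv e).2
  have hrU : ∀ e, rhoU (nGen S) (LU e) (LV e) (presProj (P2 e) (FreeGroup.mk (W e))) =
      presProj (nGen S, LU e) (FreeGroup.mk (dU (W e))) := fun e => rhoU_mk _ _ _ _
  have hrV : ∀ e, rhoV (nGen S) (LU e) (LV e) (presProj (P2 e) (FreeGroup.mk (W e))) =
      presProj (nGen S, LV e) (FreeGroup.mk (dV (W e))) := fun e => rhoV_mk _ _ _ _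
  simp only [hrU, hrV] at hsplit
  refine no_separation f hdiag
    (fun e => presProj (nGen S, LU e) (FreeGroup.mk (dU (W e))) = 1)
    (fun e => presProj (nGen S, LV e) (FreeGroup.mk (dV (W e))) = 1) ?_ ?_ ?_ ?_ ?_
  · exact re_comp re_triv (f := fun e => (((nGen S, LU e) : Pres), dU (W e)))
      (Computable.pair (Computable.pair (Computable.const _) hLU.to_comp)
        (primrec_dU.to_comp.comp hW))
  · exact re_comp re_triv (f := fun e => (((nGen S, LV e) : Pres), dV (W e)))
      (Computable.pair (Computable.pair (Computable.const _) hLV.to_comp)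
        (primrec_dV.to_comp.comp hW))
  · intro e
    have := hsplit e
    tauto
  · intro e he
    refine uPres_free p0 base j (g e) ((hcomp e).1 he) _ ?_
    have h := congrArg (rhoU (nGen S) (LU e) (LV e)) (hinv e).1
    rw [map_mul, map_one, hrU] at h
    exact h
  · intro e he
    refine uPres_free p1 base j (g e) ((hcomp e).2 he) _ ?_
    have h := congrArg (rhoV (nGen S) (LU e) (LV e)) (hinv e).1
    rw [map_mul, map_one, hrV] at h
    exact h
end

section
/- (Whitehead) The automorphism problem in a free group of finite rank is decidable: for every r : ℕ, the predicate on pairs of words asking whether some automorphism of the free group F_r carries the first to the second is computably decidable: ComputablePred (fun p : List (Fin r × Bool) × List (Fin r × Bool) => ∃ φ : FreeGroup (Fin r) ≃* FreeGroup (Fin r), φ (FreeGroup.mk p.1) = FreeGroup.mk p.2). -/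
namespace WH
open FreeGroup

set_option linter.unusedSectionVars false
set_option linter.unusedSimpArgs false

variable {α : Type*} [DecidableEq α]

/-- The inverse letter. -/
def linv (z : α × Bool) : α × Bool := (z.1, !z.2)

/-- The group element of a letter. -/
def lt (z : α × Bool) : FreeGroup α := FreeGroup.mk [z]

theorem linv_linv (z : α × Bool) : linv (linv z) = z := by simp [linv]

theorem linv_ne (z : α × Bool) : linv z ≠ z := by
  rcases z with ⟨x, b⟩; cases b <;> simp [linv]

theorem lt_inv (z : α × Bool) : (lt z)⁻¹ = lt (linv z) := by
  simp [lt, linv, FreeGroup.invRev]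

theorem mk_cons (z : α × Bool) (l : List (α × Bool)) :
    FreeGroup.mk (z :: l) = lt z * FreeGroup.mk l := by
  simp [lt]

theorem toWord_lt (z : α × Bool) : (lt z).toWord = [z] := by
  simp [lt, FreeGroup.reduce_singleton]

theorem reduce_cons_eq (z : α × Bool) (l : List (α × Bool)) :
    reduce (z :: l) =
      if (reduce l).head? = some (linv z) then (reduce l).tail else z :: reduce l := by
  rw [reduce.cons]
  cases h : reduce l with
  | nil => simp
  | cons y t =>
    rcases z with ⟨x, b⟩; rcases y with ⟨y, c⟩
    have : (x = y ∧ b = !c) ↔ ((y, c) = linv (x, b)) := by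
      cases b <;> cases c <;> simp [linv, eq_comm]
    simp only [List.head?_cons, Option.some.injEq, List.tail_cons]
    by_cases hh : (y, c) = linv (x, b)
    · rw [if_pos hh, if_pos (this.2 hh)]
    · rw [if_neg hh, if_neg (fun h => hh (this.1 h))]

theorem toWord_lt_mul (z : α × Bool) (g : FreeGroup α) :
    (lt z * g).toWord =
      if g.toWord.head? = some (linv z) then g.toWord.tail else z :: g.toWord := by
  conv_lhs => rw [← mk_toWord (x := g), ← mk_cons, toWord_mk, reduce_cons_eq, reduce_toWord]

theorem head_cons_ne {g : FreeGroup α} {z : α × Bool} {l : List (α × Bool)}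
    (h : g.toWord = z :: l) : l.head? ≠ some (linv z) := by
  intro hh
  have h1 := isReduced_toWord (x := g)
  rw [h] at h1
  cases l with
  | nil => simp at hh
  | cons y t =>
    simp only [List.head?_cons, Option.some.injEq] at hh
    subst hh
    have := (FreeGroup.isReduced_cons_cons.1 h1).1
    simp [linv] at this

theorem exists_cons {g : FreeGroup α} {z : α × Bool} {l : List (α × Bool)}
    (h : g.toWord = z :: l) : ∃ g' : FreeGroup α, g = lt z * g' ∧ g'.toWord = l := by
  refine ⟨FreeGroup.mk l, ?_, ?_⟩
  · rw [← mk_cons, ← h, mk_toWord]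
  · have h1 := isReduced_toWord (x := g)
    rw [h] at h1
    rw [toWord_mk]
    exact (h1.infix ⟨[z], [], by simp⟩).reduce_eq

/-- first letter -/
def hd (g : FreeGroup α) : Option (α × Bool) := g.toWord.head?

theorem hd_one : hd (1 : FreeGroup α) = none := by simp [hd]

theorem hd_eq_none {g : FreeGroup α} : hd g = none ↔ g = 1 := by
  simp [hd]

theorem hd_lt (z : α × Bool) : hd (lt z) = some z := by simp [hd, toWord_lt]

theorem hd_lt_mul {z : α × Bool} {g : FreeGroup α} (h : hd g ≠ some (linv z)) :
    hd (lt z * g) = some z := by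
  unfold hd at *
  rw [toWord_lt_mul, if_neg h]; rfl

theorem hd_mul_lt_aux (x : α × Bool) : ∀ (l : List (α × Bool)) (g : FreeGroup α), g.toWord = l →
    g ≠ 1 → g * lt x ≠ 1 → hd (g * lt x) = hd g := by
  intro l
  induction l with
  | nil => intro g h h1; simp at h; exact absurd h h1
  | cons z l ih =>
    intro g h h1 h2
    obtain ⟨g', rfl, hg'⟩ := exists_cons h
    have e1 : hd (lt z * g') = some z := by simp [hd, h]
    rw [e1, mul_assoc]
    apply hd_lt_mul
    intro h3
    have h4 : g' * lt x ≠ 1 := by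
      intro h4; rw [h4, hd_one] at h3; simp at h3
    by_cases h5 : g' = 1
    · subst h5
      rw [one_mul, hd_lt] at h3
      apply h2
      simp only [Option.some.injEq] at h3
      rw [h3, mul_one, ← lt_inv, mul_inv_cancel]
    · rw [ih g' hg' h5 h4] at h3
      have := head_cons_ne h
      rw [← hg'] at this
      exact this h3

theorem hd_mul_lt {x : α × Bool} {g : FreeGroup α} (h1 : g ≠ 1) (h2 : g * lt x ≠ 1) :
    hd (g * lt x) = hd g := hd_mul_lt_aux x _ g rfl h1 h2

/-- crossing set -/
def cr (K : Set (FreeGroup α)) (h : FreeGroup α) : Set (FreeGroup α) :=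
  {g | ¬ (g ∈ K ↔ g * h ∈ K)}

/-- almost invariant sets -/
def AI (K : Set (FreeGroup α)) : Prop := ∀ h, (cr K h).Finite

/-- crossing number -/
noncomputable def jn (K : Set (FreeGroup α)) (h : FreeGroup α) : ℕ := (cr K h).ncard

theorem cr_one (K : Set (FreeGroup α)) : cr K 1 = ∅ := by simp [cr]

theorem cr_mul (K : Set (FreeGroup α)) (h k : FreeGroup α) :
    cr K (h * k) ⊆ cr K h ∪ (fun g => g * h⁻¹) '' cr K k := by
  intro g hg
  by_cases h1 : g ∈ cr K h
  · exact Or.inl h1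
  · right
    refine ⟨g * h, ?_, by simp⟩
    simp only [cr, Set.mem_ofPred_eq, not_not, mul_assoc] at *
    tauto

theorem AI_of_lt {K : Set (FreeGroup α)} (H : ∀ z, (cr K (lt z)).Finite) : AI K := by
  intro h
  rw [← mk_toWord (x := h)]
  induction h.toWord with
  | nil => rw [← one_eq_mk, cr_one]; exact Set.finite_empty
  | cons z l ih =>
    rw [mk_cons]
    exact ((H z).union (ih.image _)).subset (cr_mul _ _ _)

theorem jn_mul_le {K : Set (FreeGroup α)} (hK : AI K) (h k : FreeGroup α) :
    jn K (h * k) ≤ jn K h + jn K k := by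
  unfold jn
  refine (Set.ncard_le_ncard (cr_mul K h k) ((hK h).union ((hK k).image _))).trans ?_
  refine (Set.ncard_union_le _ _).trans ?_
  exact Nat.add_le_add_left (Set.ncard_image_le (hK k)) _

/-- union of cylinders -/
def KA (A : Set (α × Bool)) : Set (FreeGroup α) := {g | ∃ z ∈ A, hd g = some z}

theorem one_notMem_KA (A : Set (α × Bool)) : (1 : FreeGroup α) ∉ KA A := by
  simp [KA, hd_one]

theorem lt_mem_KA {A : Set (α × Bool)} {z : α × Bool} : lt z ∈ KA A ↔ z ∈ A := by
  simp only [KA, hd_lt, Set.mem_ofPred_eq, Option.some.injEq]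
  exact ⟨fun ⟨y, h1, h2⟩ => h2 ▸ h1, fun h => ⟨z, h, rfl⟩⟩

theorem mem_KA_of_hd {A : Set (α × Bool)} {z : α × Bool} {g : FreeGroup α} (h : hd g = some z) :
    g ∈ KA A ↔ z ∈ A := by
  simp only [KA, h, Set.mem_ofPred_eq, Option.some.injEq]
  exact ⟨fun ⟨y, h1, h2⟩ => h2 ▸ h1, fun h => ⟨z, h, rfl⟩⟩

theorem cr_KA (A : Set (α × Bool)) (x : α × Bool) :
    cr (KA A) (lt x) ⊆ {g | (g = 1 ∧ x ∈ A) ∨ (g = (lt x)⁻¹ ∧ linv x ∈ A)} := by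
  intro g hg
  simp only [cr, Set.mem_ofPred_eq] at hg
  by_cases h1 : g = 1
  · subst h1
    left
    simp only [one_mul, lt_mem_KA, one_notMem_KA] at hg
    exact ⟨rfl, by tauto⟩
  · by_cases h2 : g * lt x = 1
    · right
      have : g = (lt x)⁻¹ := eq_inv_of_mul_eq_one_left h2
      refine ⟨this, ?_⟩
      rw [h2] at hg
      rw [this, lt_inv] at hg
      simp only [lt_mem_KA, one_notMem_KA] at hg
      tauto
    · exfalso
      apply hg
      simp [KA, hd_mul_lt h1 h2]

theorem AI_KA (A : Set (α × Bool)) : AI (KA A) := by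
  apply AI_of_lt
  intro x
  refine Set.Finite.subset (Set.toFinite {1, (lt x)⁻¹}) ?_
  intro g hg
  rcases cr_KA A x hg with h | h <;> simp [h.1]

theorem cr_KA_singleton_ncard (y x : α × Bool) :
    jn (KA {y}) (lt x) ≤ if x.1 = y.1 then 1 else 0 := by
  unfold jn
  have h := cr_KA {y} x
  by_cases h1 : x = y
  · subst h1
    rw [if_pos rfl]
    have : cr (KA {x}) (lt x) ⊆ {1} := by
      intro g hg
      rcases h hg with h | h
      · simp [h.1]
      · exact absurd h.2 (by simpa using linv_ne x)
    simpa using Set.ncard_le_ncard this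
  · by_cases h2 : linv x = y
    · have : cr (KA {y}) (lt x) ⊆ {(lt x)⁻¹} := by
        intro g hg
        rcases h hg with h | h
        · exact absurd h.2 (by simpa using h1)
        · simp [h.1]
      rw [if_pos (by rw [← h2]; rfl)]
      simpa using Set.ncard_le_ncard this
    · have : cr (KA {y}) (lt x) = ∅ := by
        rw [Set.eq_empty_iff_forall_notMem]
        intro g hg
        rcases h hg with h | h
        · exact h1 (by simpa using h.2)
        · exact h2 (by simpa using h.2)
      rw [this]; simp

/-- number of occurrences of a generator in the reduced word -/
def cnt (a : α) (w : FreeGroup α) : ℕ := w.toWord.countP (fun z => decide (z.1 = a))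

theorem jn_KA_singleton_le (y : α × Bool) (w : FreeGroup α) : jn (KA {y}) w ≤ cnt y.1 w := by
  unfold cnt
  conv_lhs => rw [← mk_toWord (x := w)]
  induction w.toWord with
  | nil => rw [← one_eq_mk]; simp [jn, cr_one]
  | cons z l ih =>
    rw [mk_cons]
    refine (jn_mul_le (AI_KA _) _ _).trans ?_
    have := cr_KA_singleton_ncard y z
    rw [List.countP_cons]
    simp only [decide_eq_true_eq]
    omega

theorem sum_cnt [Fintype α] (w : FreeGroup α) : ∑ a, cnt a w = w.norm := by
  unfold cnt FreeGroup.norm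
  induction w.toWord with
  | nil => simp
  | cons z l ih =>
    simp only [List.countP_cons, List.length_cons, Finset.sum_add_distrib, ih]
    simp

-- basic operations
theorem cr_compl (K : Set (FreeGroup α)) (h : FreeGroup α) : cr Kᶜ h = cr K h := by
  ext g; simp only [cr, Set.mem_ofPred_eq, Set.mem_compl_iff]; tauto

theorem AI_compl {K : Set (FreeGroup α)} (h : AI K) : AI Kᶜ := by
  intro g; rw [cr_compl]; exact h g

theorem jn_compl (K : Set (FreeGroup α)) (h : FreeGroup α) : jn Kᶜ h = jn K h := by
  unfold jn; rw [cr_compl]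

theorem cr_un (K C : Set (FreeGroup α)) (h : FreeGroup α) :
    cr (K ∪ C) h ∪ cr (K ∩ C) h ⊆ cr K h ∪ cr C h := by
  intro g; simp only [cr, Set.mem_ofPred_eq, Set.mem_union, Set.mem_inter_iff]; tauto

theorem cr_in (K C : Set (FreeGroup α)) (h : FreeGroup α) :
    cr (K ∪ C) h ∩ cr (K ∩ C) h ⊆ cr K h ∩ cr C h := by
  intro g; simp only [cr, Set.mem_ofPred_eq, Set.mem_union, Set.mem_inter_iff]; tauto

theorem AI_union {K C : Set (FreeGroup α)} (hK : AI K) (hC : AI C) : AI (K ∪ C) := fun h =>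
  ((hK h).union (hC h)).subset (Set.subset_union_left.trans (cr_un K C h))

theorem AI_inter {K C : Set (FreeGroup α)} (hK : AI K) (hC : AI C) : AI (K ∩ C) := fun h =>
  ((hK h).union (hC h)).subset (Set.subset_union_right.trans (cr_un K C h))

theorem jn_submod {K C : Set (FreeGroup α)} (hK : AI K) (hC : AI C) (h : FreeGroup α) :
    jn (K ∪ C) h + jn (K ∩ C) h ≤ jn K h + jn C h := by
  unfold jn
  rw [← Set.ncard_union_add_ncard_inter _ _ (AI_union hK hC h) (AI_inter hK hC h),
    ← Set.ncard_union_add_ncard_inter _ _ (hK h) (hC h)]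
  exact Nat.add_le_add (Set.ncard_le_ncard (cr_un K C h) ((hK h).union (hC h)))
    (Set.ncard_le_ncard (cr_in K C h) ((hK h).inter_of_left _))

/-- left translate: elements g with k * g in K -/
def tr (k : FreeGroup α) (K : Set (FreeGroup α)) : Set (FreeGroup α) := {g | k * g ∈ K}

theorem cr_tr (k : FreeGroup α) (K : Set (FreeGroup α)) (h : FreeGroup α) :
    cr (tr k K) h = (fun g => k⁻¹ * g) '' cr K h := by
  ext g
  simp only [cr, tr, Set.mem_ofPred_eq, Set.mem_image]
  constructor
  · intro hg
    exact ⟨k * g, by simpa [mul_assoc] using hg, by simp⟩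
  · rintro ⟨g', h1, rfl⟩
    simpa [mul_assoc] using h1

theorem AI_tr (k : FreeGroup α) {K : Set (FreeGroup α)} (hK : AI K) : AI (tr k K) := by
  intro h; rw [cr_tr]; exact (hK h).image _

theorem jn_tr (k : FreeGroup α) (K : Set (FreeGroup α)) (h : FreeGroup α) :
    jn (tr k K) h = jn K h := by
  unfold jn
  rw [cr_tr, Set.ncard_image_of_injective]
  exact mul_right_injective _

theorem cr_preimage (φ : FreeGroup α ≃* FreeGroup α) (K : Set (FreeGroup α)) (h : FreeGroup α) :
    cr (φ ⁻¹' K) h = φ.symm '' cr K (φ h) := by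
  ext g
  simp only [cr, Set.mem_ofPred_eq, Set.mem_preimage, _root_.map_mul, Set.mem_image]
  constructor
  · intro hg; exact ⟨φ g, hg, by simp⟩
  · rintro ⟨g', h1, rfl⟩; simpa using h1

theorem AI_preimage (φ : FreeGroup α ≃* FreeGroup α) {K : Set (FreeGroup α)} (hK : AI K) :
    AI (φ ⁻¹' K) := by
  intro h; rw [cr_preimage]; exact (hK _).image _

theorem jn_preimage (φ : FreeGroup α ≃* FreeGroup α) (K : Set (FreeGroup α)) (h : FreeGroup α) :
    jn (φ ⁻¹' K) h = jn K (φ h) := by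
  unfold jn
  rw [cr_preimage, Set.ncard_image_of_injective _ φ.symm.injective]

end WH


namespace WH
open FreeGroup
set_option linter.unusedSectionVars false
set_option linter.unusedSimpArgs false
variable {α : Type*} [DecidableEq α]

open scoped Classical in
/-- the letter `a` or nothing -/
noncomputable def al (a : α × Bool) (p : Prop) : FreeGroup α := if p then lt a else 1

/-- the middle part -/
def tm (a z : α × Bool) : FreeGroup α := if z.1 = a.1 then 1 else lt z

/-- Whitehead endomorphism -/
noncomputable def tauHom (A : Set (α × Bool)) (a : α × Bool) : FreeGroup α →* FreeGroup α :=
  FreeGroup.lift (fun x => (al a ((x, true) ∈ A))⁻¹ * tm a (x, true) * al a ((x, false) ∈ A))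

theorem tm_inv (a z : α × Bool) : (tm a z)⁻¹ = tm a (linv z) := by
  unfold tm
  by_cases h : z.1 = a.1
  · rw [if_pos h, if_pos (by simpa [linv] using h), inv_one]
  · rw [if_neg h, if_neg (by simpa [linv] using h), lt_inv]

theorem tauHom_lt (A : Set (α × Bool)) (a z : α × Bool) :
    tauHom A a (lt z) = (al a (z ∈ A))⁻¹ * tm a z * al a (linv z ∈ A) := by
  rcases z with ⟨x, b⟩
  cases b
  · have : lt (x, false) = (FreeGroup.of x)⁻¹ := by
      rw [show (FreeGroup.of x) = lt (x, true) from rfl, lt_inv]; rfl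
    rw [this, _root_.map_inv, tauHom, FreeGroup.lift_apply_of]
    simp only [mul_inv_rev, tm_inv, inv_inv, mul_assoc]
    rfl
  · have : lt (x, true) = (FreeGroup.of x) := rfl
    rw [this, tauHom, FreeGroup.lift_apply_of]
    rfl

theorem tauHom_a {A : Set (α × Bool)} {a : α × Bool} (h1 : a ∈ A) (h2 : linv a ∉ A) :
    tauHom A a (lt a) = (lt a)⁻¹ := by
  rw [tauHom_lt]
  simp [al, tm, h1, h2]

theorem tauHom_al {A : Set (α × Bool)} {a : α × Bool} (h1 : a ∈ A) (h2 : linv a ∉ A) (p : Prop) :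
    tauHom A a (al a p) = (al a p)⁻¹ := by
  by_cases h : p <;> simp [al, h, tauHom_a h1 h2]

theorem eq_or_linv {z a : α × Bool} (h : z.1 = a.1) : z = a ∨ z = linv a := by
  rcases z with ⟨x, b⟩; rcases a with ⟨y, c⟩
  cases b <;> cases c <;> simp_all [linv]

theorem tauHom_tauHom {A : Set (α × Bool)} {a : α × Bool} (h1 : a ∈ A) (h2 : linv a ∉ A)
    (g : FreeGroup α) : tauHom A a (tauHom A a g) = g := by
  have key : ∀ z : α × Bool, tauHom A a (tauHom A a (lt z)) = lt z := by
    intro z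
    by_cases h : z.1 = a.1
    · rcases eq_or_linv h with rfl | rfl
      · rw [tauHom_a h1 h2, _root_.map_inv, tauHom_a h1 h2, inv_inv]
      · rw [← lt_inv, _root_.map_inv, _root_.map_inv, tauHom_a h1 h2, _root_.map_inv, tauHom_a h1 h2, inv_inv]
    · have e : tm a z = lt z := by simp [tm, h]
      rw [tauHom_lt, _root_.map_mul, _root_.map_mul, _root_.map_inv, tauHom_al h1 h2, tauHom_al h1 h2, e,
        tauHom_lt, e]
      group
  rw [← mk_toWord (x := g)]
  induction g.toWord with
  | nil => rw [← one_eq_mk]; simp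
  | cons z l ih => rw [mk_cons, _root_.map_mul, _root_.map_mul, key, ih]

/-- Whitehead automorphism -/
noncomputable def tau (A : Set (α × Bool)) (a : α × Bool) (h1 : a ∈ A) (h2 : linv a ∉ A) :
    FreeGroup α ≃* FreeGroup α :=
  MonoidHom.toMulEquiv (tauHom A a) (tauHom A a)
    (MonoidHom.ext (tauHom_tauHom h1 h2)) (MonoidHom.ext (tauHom_tauHom h1 h2))

theorem tau_apply (A : Set (α × Bool)) (a : α × Bool) (h1 : a ∈ A) (h2 : linv a ∉ A)
    (g : FreeGroup α) : tau A a h1 h2 g = tauHom A a g := rfl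

theorem tau_symm_apply (A : Set (α × Bool)) (a : α × Bool) (h1 : a ∈ A) (h2 : linv a ∉ A)
    (g : FreeGroup α) : (tau A a h1 h2).symm g = tauHom A a g := rfl

theorem norm_lt (z : α × Bool) : (lt z).norm = 1 := by
  simp [FreeGroup.norm, toWord_lt]

open scoped Classical in
theorem norm_al (a : α × Bool) (p : Prop) : (al a p).norm ≤ if p then 1 else 0 := by
  unfold al
  by_cases h : p <;> simp [h, norm_lt]

theorem norm_al_le (a : α × Bool) (p : Prop) : (al a p).norm ≤ 1 := by
  unfold al
  by_cases h : p <;> simp [h, norm_lt]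

theorem norm_tm_le (a z : α × Bool) : (tm a z).norm ≤ 1 := by
  unfold tm
  by_cases h : z.1 = a.1 <;> simp [h, norm_lt]

theorem norm_tauHom_lt (A : Set (α × Bool)) (a z : α × Bool) : (tauHom A a (lt z)).norm ≤ 3 := by
  rw [tauHom_lt]
  have h1 := norm_mul_le ((al a (z ∈ A))⁻¹ * tm a z) (al a (linv z ∈ A))
  have h2 := norm_mul_le ((al a (z ∈ A))⁻¹) (tm a z)
  rw [norm_inv_eq] at h2
  have := norm_al_le a (z ∈ A)
  have := norm_al_le a (linv z ∈ A)
  have := norm_tm_le a z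
  omega

open scoped Classical in
/-- number of turns cut by A -/
noncomputable def fcut (A : Set (α × Bool)) : Prop → List (α × Bool) → ℕ
  | p, [] => if p then 1 else 0
  | p, x :: l => (if (p ↔ x ∈ A) then 0 else 1) + fcut A (linv x ∈ A) l

open scoped Classical in
theorem norm_tau_le (A : Set (α × Bool)) (a : α × Bool) (l : List (α × Bool)) : ∀ p : Prop,
    (al a p * tauHom A a (FreeGroup.mk l)).norm + l.countP (fun z => decide (z.1 = a.1))
      ≤ fcut A p l + l.length := by
  induction l with
  | nil =>
    intro p
    rw [← one_eq_mk, _root_.map_one, mul_one]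
    simpa [fcut] using norm_al a p
  | cons x l ih =>
    intro p
    have h := ih (linv x ∈ A)
    rw [mk_cons, _root_.map_mul, tauHom_lt]
    have e : al a p * ((al a (x ∈ A))⁻¹ * tm a x * al a (linv x ∈ A) * tauHom A a (FreeGroup.mk l))
      = (al a p * (al a (x ∈ A))⁻¹) * tm a x *
        (al a (linv x ∈ A) * tauHom A a (FreeGroup.mk l)) := by group
    rw [e]
    have h1 := norm_mul_le ((al a p * (al a (x ∈ A))⁻¹) * tm a x)
        (al a (linv x ∈ A) * tauHom A a (FreeGroup.mk l))
    have h2 := norm_mul_le (al a p * (al a (x ∈ A))⁻¹) (tm a x)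
    have h3 : (al a p * (al a (x ∈ A))⁻¹).norm ≤ (if (p ↔ x ∈ A) then 0 else 1) := by
      by_cases hp : p <;> by_cases hx : x ∈ A <;> simp [al, hp, hx, norm_lt, norm_inv_eq]
    have h4 : (tm a x).norm + (if x.1 = a.1 then 1 else 0) ≤ 1 := by
      unfold tm
      by_cases h : x.1 = a.1 <;> simp [h, norm_lt]
    rw [List.countP_cons, List.length_cons, fcut]
    simp only [decide_eq_true_eq]
    omega

theorem fcut_le_aux (A : Set (α × Bool)) (w : FreeGroup α) (s : List (α × Bool)) :
    ∀ p : List (α × Bool), w.toWord = p ++ s →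
    fcut A ((FreeGroup.mk p)⁻¹ ∈ KA A) s ≤ {g | g ∈ cr (KA A) w ∧ p.length ≤ g.norm}.ncard := by
  induction s with
  | nil =>
    intro p hp
    rw [List.append_nil] at hp
    rw [← hp, mk_toWord]
    simp only [fcut]
    split_ifs with h
    · rw [Nat.succ_le_iff, Set.ncard_pos (((AI_KA A) w).subset (fun g hg => hg.1))]
      refine ⟨w⁻¹, ?_, ?_⟩
      · simp only [cr, Set.mem_ofPred_eq, inv_mul_cancel, h, one_notMem_KA]; simp
      · rw [norm_inv_eq]; rfl
    · exact Nat.zero_le _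
  | cons x s ih =>
    intro p hp
    have h := ih (p ++ [x]) (by simpa using hp)
    have hred : ∀ q t, w.toWord = q ++ t → (FreeGroup.mk q).toWord = q ∧
        (FreeGroup.mk t).toWord = t := by
      intro q t hq
      have h1 := isReduced_toWord (x := w)
      rw [toWord_mk, toWord_mk]
      exact ⟨(h1.infix ⟨[], t, by simp [hq]⟩).reduce_eq, (h1.infix ⟨q, [], by simp [hq]⟩).reduce_eq⟩
    have e1 : ((FreeGroup.mk (p ++ [x]))⁻¹ ∈ KA A) = (linv x ∈ A) := by
      apply propext
      apply mem_KA_of_hd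
      unfold hd
      rw [toWord_inv, (hred (p ++ [x]) s (by simpa using hp)).1]
      simp [FreeGroup.invRev, linv]
    rw [e1] at h
    set S := {g | g ∈ cr (KA A) w ∧ p.length ≤ g.norm} with hS
    set S' := {g | g ∈ cr (KA A) w ∧ (p ++ [x]).length ≤ g.norm} with hS'
    have fS : S.Finite := ((AI_KA A) w).subset (fun g hg => hg.1)
    have hsub : S' ⊆ S := by
      intro g hg
      refine ⟨hg.1, ?_⟩
      have := hg.2
      simp at this; omega
    have hw : (FreeGroup.mk p)⁻¹ * w = FreeGroup.mk (x :: s) := by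
      rw [← mk_toWord (x := w), hp, ← mul_mk]; group
    have hm : (FreeGroup.mk (x :: s)) ∈ KA A ↔ x ∈ A := by
      apply mem_KA_of_hd
      unfold hd
      rw [(hred p (x :: s) hp).2]; rfl
    have hn : ((FreeGroup.mk p)⁻¹).norm = p.length := by
      rw [norm_inv_eq, FreeGroup.norm, (hred p (x :: s) hp).1]
    rw [fcut]
    split_ifs with hc
    · have := Set.ncard_le_ncard hsub fS
      omega
    · have hin : (FreeGroup.mk p)⁻¹ ∈ S := by
        refine ⟨?_, hn.ge⟩
        simp only [cr, Set.mem_ofPred_eq]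
        rw [hw, hm]; exact hc
      have hnin : (FreeGroup.mk p)⁻¹ ∉ S' := by
        intro hh
        have := hh.2
        rw [hn] at this
        simp at this
      have h3 : insert (FreeGroup.mk p)⁻¹ S' ⊆ S := Set.insert_subset hin hsub
      have h4 := Set.ncard_le_ncard h3 fS
      rw [Set.ncard_insert_of_notMem hnin (fS.subset hsub)] at h4
      omega

theorem fcut_le (A : Set (α × Bool)) (w : FreeGroup α) : fcut A False w.toWord ≤ jn (KA A) w := by
  have := fcut_le_aux A w w.toWord [] rfl
  rw [← one_eq_mk] at this
  simpa [one_notMem_KA, jn] using this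

theorem norm_tau_add_le (A : Set (α × Bool)) (a : α × Bool) (w : FreeGroup α) :
    (tauHom A a w).norm + cnt a.1 w ≤ jn (KA A) w + w.norm := by
  have h1 := norm_tau_le A a w.toWord False
  have h2 := fcut_le A w
  rw [mk_toWord] at h1
  simp only [al, if_false, one_mul] at h1
  unfold cnt
  have : w.norm = w.toWord.length := rfl
  omega

end WH


namespace WH
open FreeGroup
set_option linter.unusedSectionVars false
set_option linter.unusedSimpArgs false
variable {α : Type*} [DecidableEq α]

/-- total crossing number -/
noncomputable def JW (W : Multiset (FreeGroup α)) (K : Set (FreeGroup α)) : ℕ := (W.map (jn K)).sum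

/-- total number of occurrences -/
def DW (W : Multiset (FreeGroup α)) (a : α) : ℕ := (W.map (cnt a)).sum

/-- no cut beats the star of a vertex -/
def NoRed (W : Multiset (FreeGroup α)) : Prop :=
  ∀ (A : Set (α × Bool)) (a : α × Bool), a ∈ A → linv a ∉ A → DW W a.1 ≤ JW W (KA A)

theorem JW_compl (W : Multiset (FreeGroup α)) (K : Set (FreeGroup α)) : JW W Kᶜ = JW W K := by
  unfold JW; congr 1; apply Multiset.map_congr rfl; intro w _; exact jn_compl K w

theorem JW_tr (W : Multiset (FreeGroup α)) (k : FreeGroup α) (K : Set (FreeGroup α)) :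
    JW W (tr k K) = JW W K := by
  unfold JW; congr 1; apply Multiset.map_congr rfl; intro w _; exact jn_tr k K w

theorem JW_submod (W : Multiset (FreeGroup α)) {K C : Set (FreeGroup α)} (hK : AI K) (hC : AI C) :
    JW W (K ∪ C) + JW W (K ∩ C) ≤ JW W K + JW W C := by
  unfold JW
  rw [← Multiset.sum_map_add, ← Multiset.sum_map_add]
  exact Multiset.sum_map_le_sum_map _ _ (fun w _ => jn_submod hK hC w)

theorem JW_singleton_le (W : Multiset (FreeGroup α)) (y : α × Bool) :
    JW W (KA {y}) ≤ DW W y.1 :=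
  Multiset.sum_map_le_sum_map _ _ (fun w _ => jn_KA_singleton_le y w)

theorem local_lemma {W : Multiset (FreeGroup α)} (H : NoRed W) {K : Set (FreeGroup α)}
    (hK : ∀ g z, hd g = some z → (g ∈ K ↔ lt z ∈ K)) {x : α × Bool} (h1 : lt x ∈ K)
    (h2 : lt (linv x) ∉ K) : DW W x.1 ≤ JW W K := by
  by_cases h : (1 : FreeGroup α) ∈ K
  · have : Kᶜ = KA {z | lt z ∉ K} := by
      ext g
      cases hg : hd g with
      | none => rw [hd_eq_none] at hg; subst hg; simp [h, one_notMem_KA]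
      | some z => rw [mem_KA_of_hd hg]; simp [hK g z hg]
    rw [← JW_compl, this]
    exact H _ (linv x) h2 (by rw [linv_linv]; simpa using h1)
  · have : K = KA {z | lt z ∈ K} := by
      ext g
      cases hg : hd g with
      | none => rw [hd_eq_none] at hg; subst hg; simp [h, one_notMem_KA]
      | some z => rw [mem_KA_of_hd hg]; simp [hK g z hg]
    rw [this]
    exact H _ x h1 h2

/-- K is determined by S -/
def Det (K S : Set (FreeGroup α)) : Prop :=
  ∀ g k : FreeGroup α, ∀ z, g ≠ 1 → g ∉ S → k.toWord = g.toWord ++ [z] → (g ∈ K ↔ k ∈ K)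

theorem Det_compl {K S : Set (FreeGroup α)} (h : Det K S) : Det Kᶜ S := by
  intro g k z h1 h2 h3
  simp [h g k z h1 h2 h3]

theorem reduced_of_pfx {g : FreeGroup α} {p t : List (α × Bool)} (h : g.toWord = p ++ t) :
    (FreeGroup.mk p).toWord = p ∧ (FreeGroup.mk t).toWord = t := by
  have h1 := isReduced_toWord (x := g)
  rw [toWord_mk, toWord_mk]
  exact ⟨(h1.infix ⟨[], t, by simp [h]⟩).reduce_eq, (h1.infix ⟨p, [], by simp [h]⟩).reduce_eq⟩

theorem Det_pfx {K S : Set (FreeGroup α)} (hD : Det K S) {g : FreeGroup α} (hg : g ≠ 1)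
    (hS : ∀ k : FreeGroup α, g.toWord <+: k.toWord → k ∉ S) (t : List (α × Bool)) :
    ∀ k : FreeGroup α, k.toWord = g.toWord ++ t → (k ∈ K ↔ g ∈ K) := by
  induction t using List.reverseRecOn with
  | nil => intro k hk; rw [List.append_nil, toWord_inj] at hk; rw [hk]
  | append_singleton t y ih =>
    intro k hk
    rw [← List.append_assoc] at hk
    have h1 := (reduced_of_pfx hk).1
    rw [← ih _ h1]
    refine (hD _ k y ?_ ?_ ?_).symm
    · intro h
      rw [h, toWord_one] at h1
      have := (List.append_eq_nil_iff.1 h1.symm).1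
      exact hg (toWord_eq_nil_iff.1 this)
    · exact hS _ ⟨t, h1.symm⟩
    · rw [h1, hk]

theorem toWord_mul_of_hd {h g : FreeGroup α} {p : List (α × Bool)} {x : α × Bool}
    (hh : h.toWord = p ++ [x]) (hg : hd g ≠ some (linv x)) :
    (h * g).toWord = h.toWord ++ g.toWord := by
  rw [toWord_mul]
  apply FreeGroup.IsReduced.reduce_eq
  unfold FreeGroup.IsReduced
  rw [List.isChain_append]
  refine ⟨isReduced_toWord, isReduced_toWord, ?_⟩
  intro y hy z hz
  rw [hh] at hy
  simp at hy
  subst hy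
  intro e
  by_contra hne
  apply hg
  have : g.toWord.head? = some z := hz
  unfold hd
  rw [this]
  rcases eq_or_linv e with rfl | rfl
  · exact absurd rfl hne
  · simp [linv_linv]

theorem hd_of_pfx {h g : FreeGroup α} {p t : List (α × Bool)} {x : α × Bool}
    (hh : h.toWord = p ++ [x]) (hg : g.toWord = h.toWord ++ t) : hd (h⁻¹ * g) ≠ some (linv x) := by
  have e : h⁻¹ * g = FreeGroup.mk t := by
    rw [← mk_toWord (x := g), hg, ← mul_mk, mk_toWord]; group
  have h2 := (reduced_of_pfx hg).2
  intro h3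
  rw [e, hd, h2] at h3
  have h1 := isReduced_toWord (x := g)
  rw [hg, hh] at h1
  unfold FreeGroup.IsReduced at h1
  rw [List.isChain_append] at h1
  have := h1.2.2 x (by simp) (linv x) h3
  simp [linv] at this

/-- the cone beyond h -/
def Cn (h : FreeGroup α) (x : α × Bool) : Set (FreeGroup α) := tr h⁻¹ (KA {linv x})ᶜ

theorem mem_Cn {h g : FreeGroup α} {p : List (α × Bool)} {x : α × Bool}
    (hh : h.toWord = p ++ [x]) : g ∈ Cn h x ↔ h.toWord <+: g.toWord := by
  have e : g ∈ Cn h x ↔ hd (h⁻¹ * g) ≠ some (linv x) := by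
    simp [Cn, tr, KA]
  rw [e]
  constructor
  · intro h1
    have := toWord_mul_of_hd hh h1
    rw [mul_inv_cancel_left] at this
    exact ⟨_, this.symm⟩
  · rintro ⟨t, ht⟩
    exact hd_of_pfx hh ht.symm

theorem toWord_lt_pow (a : α × Bool) (n : ℕ) : (lt a ^ n).toWord = List.replicate n a := by
  induction n with
  | zero => simp
  | succ n ih =>
    rw [pow_succ', toWord_lt_mul, ih, if_neg]
    · rfl
    · cases n with
      | zero => simp
      | succ n =>
        simp only [List.replicate_succ, List.head?_cons, Option.some.injEq]
        exact (linv_ne a).symm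

/-- K separates the ends of the a-axis -/
def Ends (K : Set (FreeGroup α)) (a : α × Bool) : Prop :=
  ∃ R : ℕ, ∀ n ≥ R, lt a ^ n ∈ K ∧ lt (linv a) ^ n ∉ K

theorem Ends_compl {K : Set (FreeGroup α)} {a : α × Bool} (h : Ends K a) : Ends Kᶜ (linv a) := by
  obtain ⟨R, hR⟩ := h
  refine ⟨R, fun n hn => ?_⟩
  have := hR n hn
  rw [linv_linv]
  simpa using this.symm

theorem step_lemma {W : Multiset (FreeGroup α)} (H : NoRed W) {K : Set (FreeGroup α)}
    {S : Finset (FreeGroup α)} (hK : AI K) (hD : Det K S)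
    (hcl : ∀ g k : FreeGroup α, ∀ z, k ∈ S → k.toWord = g.toWord ++ [z] → g ≠ 1 → g ∈ S)
    {h : FreeGroup α} (hhS : h ∈ S) (hmax : ∀ g ∈ S, g.norm ≤ h.norm)
    {p : List (α × Bool)} {x : α × Bool} (hh : h.toWord = p ++ [x]) (hx : h * lt x ∈ K)
    {a : α × Bool} (hE : Ends K a) :
    ∃ K' : Set (FreeGroup α), AI K' ∧ Det K' (S.erase h : Finset (FreeGroup α)) ∧ Ends K' a ∧
      JW W K' ≤ JW W K := by
  have hAC : AI (Cn h x) := AI_tr _ (AI_compl (AI_KA _))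
  have hchild : ∀ z, z ≠ linv x → ∀ k : FreeGroup α, ∀ t, k.toWord = h.toWord ++ z :: t →
      (k ∈ K ↔ h * lt z ∈ K) := by
    intro z hz k t hk
    have hw : (h * lt z).toWord = h.toWord ++ [z] := by
      rw [toWord_mul_of_hd hh (by rw [hd_lt]; simpa using hz), toWord_lt]
    refine Det_pfx hD ?_ ?_ t k ?_
    · intro e; rw [e] at hw; simp at hw
    · rintro k ⟨t', hk'⟩ hkS
      have := hmax k hkS
      unfold FreeGroup.norm at this
      rw [← hk', hw] at this
      simp at this
    · rw [hw, hk]; simp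
  refine ⟨K ∪ Cn h x, AI_union hK hAC, ?_, ?_, ?_⟩
  · intro g k z hg1 hgS hk
    by_cases hgC : g ∈ Cn h x
    · have hkC : k ∈ Cn h x := by
        rw [mem_Cn hh] at hgC ⊢
        rw [hk]; exact hgC.trans (List.prefix_append _ _)
      simp [hgC, hkC]
    · have hgh : g ≠ h := by
        rintro rfl
        exact hgC ((mem_Cn hh).2 (List.prefix_refl _))
      have hgS' : g ∉ S := by
        intro h'
        exact hgS (by simp [hgh, h'])
      have hkC : k ∉ Cn h x := by
        intro hkC
        rw [mem_Cn hh] at hkC hgC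
        rw [hk, List.prefix_concat_iff] at hkC
        rcases hkC with h1 | h1
        · exact hgS' (hcl g h z hhS h1 hg1)
        · exact hgC h1
      have := hD g k z hg1 hgS' hk
      simp [hgC, hkC, this]
  · obtain ⟨R, hR⟩ := hE
    refine ⟨R + h.norm + 1, fun n hn => ⟨Or.inl (hR n (by omega)).1, ?_⟩⟩
    have h1 := (hR n (by omega)).2
    rintro (h2 | h2)
    · exact h1 h2
    rw [mem_Cn hh, toWord_lt_pow] at h2
    have hpre := h2
    obtain ⟨t, ht⟩ := h2
    have hxa : x = linv a := by
      have : x ∈ List.replicate n (linv a) := by rw [← ht, hh]; simp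
      exact (List.mem_replicate.1 this).2
    have hlen := congrArg List.length ht
    simp only [List.length_append, List.length_replicate] at hlen
    cases t with
    | nil =>
      have : h.norm = h.toWord.length := rfl
      simp at hlen; omega
    | cons y t =>
      have hy : y = linv a := by
        have : y ∈ List.replicate n (linv a) := by rw [← ht]; simp
        exact (List.mem_replicate.1 this).2
      subst hy
      subst hxa
      apply h1
      rw [hchild (linv a) (fun e => linv_ne _ e.symm) _ t (by rw [toWord_lt_pow, ht])]
      exact hx
  · have h1 := JW_submod W hK hAC
    have h2 : JW W (Cn h x) ≤ DW W x.1 := by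
      unfold Cn
      rw [JW_tr, JW_compl]
      exact JW_singleton_le W (linv x)
    have h3 : DW W x.1 ≤ JW W (K ∩ Cn h x) := by
      rw [← JW_tr W h]
      have hmem : ∀ g, hd g ≠ some (linv x) → h * g ∈ Cn h x := by
        intro g hg
        rw [mem_Cn hh, toWord_mul_of_hd hh hg]
        exact List.prefix_append _ _
      have hnmem : ∀ g, hd g = some (linv x) → h * g ∉ Cn h x := by
        intro g hg hc
        rw [mem_Cn hh] at hc
        obtain ⟨t, ht⟩ := hc
        have := hd_of_pfx hh ht.symm
        rw [inv_mul_cancel_left] at this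
        exact this hg
      apply local_lemma H
      · intro g z hg
        simp only [tr, Set.mem_ofPred_eq, Set.mem_inter_iff]
        by_cases hz : z = linv x
        · subst hz
          have e1 := hnmem g hg
          have e2 := hnmem _ (hd_lt (linv x))
          tauto
        · have e1 := hmem g (by rw [hg]; simpa using hz)
          have e2 := hmem (lt z) (by rw [hd_lt]; simpa using hz)
          obtain ⟨t, ht⟩ : ∃ t, g.toWord = z :: t := by
            unfold hd at hg
            cases hgw : g.toWord with
            | nil => rw [hgw] at hg; simp at hg
            | cons y t => rw [hgw] at hg; simp at hg; exact ⟨t, by rw [hg]⟩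
          have e3 := hchild z hz (h * g) t
            (by rw [toWord_mul_of_hd hh (by rw [hg]; simpa using hz), ht])
          tauto
      · exact ⟨hx, hmem _ (by rw [hd_lt]; simpa using (linv_ne x).symm)⟩
      · intro hc
        exact hnmem _ (hd_lt (linv x)) hc.2
    omega

theorem red_main {W : Multiset (FreeGroup α)} (H : NoRed W) : ∀ (n : ℕ) (S : Finset (FreeGroup α)),
    S.card = n → (1 : FreeGroup α) ∉ S →
    (∀ g k : FreeGroup α, ∀ z, k ∈ S → k.toWord = g.toWord ++ [z] → g ≠ 1 → g ∈ S) →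
    ∀ (K : Set (FreeGroup α)) (a : α × Bool), AI K → Det K S → Ends K a → DW W a.1 ≤ JW W K := by
  intro n
  induction n with
  | zero =>
    intro S hS _ _ K a hK hD hE
    rw [Finset.card_eq_zero] at hS
    subst hS
    have hloc : ∀ g z, hd g = some z → (g ∈ K ↔ lt z ∈ K) := by
      intro g z hg
      unfold hd at hg
      cases hgw : g.toWord with
      | nil => rw [hgw] at hg; simp at hg
      | cons y t =>
        rw [hgw] at hg; simp at hg; subst hg
        refine Det_pfx hD ?_ ?_ t g ?_
        · intro e; have := hd_lt y; rw [e, hd_one] at this; simp at this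
        · intro k _; simp
        · rw [hgw, toWord_lt]; rfl
    obtain ⟨R, hR⟩ := hE
    have h1 := hR (R + 1) (by omega)
    have e : ∀ b : α × Bool, hd (lt b ^ (R + 1)) = some b := by
      intro b; simp [hd, toWord_lt_pow, List.replicate_succ]
    apply local_lemma H hloc
    · exact (hloc _ _ (e a)).1 h1.1
    · exact fun h => h1.2 ((hloc _ _ (e _)).2 h)
  | succ n ih =>
    intro S hS h1 hcl K a hK hD hE
    have hne : S.Nonempty := by rw [← Finset.card_pos]; omega
    obtain ⟨h, hhS, hmax⟩ := Finset.exists_max_image S FreeGroup.norm hne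
    have hh1 : h ≠ 1 := fun e => h1 (e ▸ hhS)
    obtain ⟨p, x, hh⟩ : ∃ p x, h.toWord = p ++ [x] := by
      rcases List.eq_nil_or_concat h.toWord with h2 | ⟨p, x, h2⟩
      · exact absurd (toWord_eq_nil_iff.1 h2) hh1
      · exact ⟨p, x, by simpa using h2⟩
    have hcard : (S.erase h).card = n := by rw [Finset.card_erase_of_mem hhS]; omega
    have h1' : (1 : FreeGroup α) ∉ S.erase h := fun h' => h1 (Finset.mem_of_mem_erase h')
    have hcl' : ∀ g k : FreeGroup α, ∀ z, k ∈ S.erase h → k.toWord = g.toWord ++ [z] → g ≠ 1 →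
        g ∈ S.erase h := by
      intro g k z hk e hg
      rw [Finset.mem_erase] at hk ⊢
      refine ⟨?_, hcl g k z hk.2 e hg⟩
      rintro rfl
      have := hmax k hk.2
      unfold FreeGroup.norm at this
      rw [e] at this
      simp at this
    by_cases hx : h * lt x ∈ K
    · obtain ⟨K', a1, a2, a3, a4⟩ := step_lemma H hK hD hcl hhS hmax hh hx hE
      exact (ih _ hcard h1' hcl' K' a a1 a2 a3).trans a4
    · obtain ⟨K', a1, a2, a3, a4⟩ := step_lemma H (AI_compl hK) (Det_compl hD) hcl hhS hmax hh hx
        (Ends_compl hE)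
      rw [JW_compl] at a4
      exact (ih _ hcard h1' hcl' K' (linv a) a1 a2 a3).trans a4

theorem red_final [Finite α] {W : Multiset (FreeGroup α)} (H : NoRed W) {K : Set (FreeGroup α)}
    {a : α × Bool} (hK : AI K) (hE : Ends K a) : DW W a.1 ≤ JW W K := by
  let B : Set (FreeGroup α) := ⋃ z : α × Bool, cr K (lt z)
  have hB : B.Finite := Set.finite_iUnion (fun z => hK (lt z))
  let S : Set (FreeGroup α) := {g | g ≠ 1 ∧ ∃ b ∈ B, g.toWord <+: b.toWord}
  have hS : S.Finite := by
    have : S ⊆ ⋃ b ∈ B, FreeGroup.toWord ⁻¹' {l | l ∈ b.toWord.inits} := by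
      rintro g ⟨_, b, hb, hp⟩
      simp only [Set.mem_iUnion]
      exact ⟨b, hb, by simpa using hp⟩
    refine Set.Finite.subset (hB.biUnion fun b _ => ?_) this
    exact (List.finite_toSet _).preimage (toWord_injective.injOn)
  refine red_main H _ hS.toFinset rfl (by simp [S]) ?_ K a hK ?_ hE
  · intro g k z hk e hg
    rw [Set.Finite.mem_toFinset] at hk ⊢
    obtain ⟨_, b, hb, hp⟩ := hk
    refine ⟨hg, b, hb, ?_⟩
    rw [e] at hp
    exact (List.prefix_append _ _).trans hp
  · intro g k z hg hgS e
    by_contra hc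
    apply hgS
    rw [Set.Finite.coe_toFinset]
    refine ⟨hg, g, ?_, List.prefix_refl _⟩
    simp only [B, Set.mem_iUnion]
    refine ⟨z, ?_⟩
    have : k = g * lt z := by
      rw [← mk_toWord (x := k), e, ← mul_mk, mk_toWord]; rfl
    rw [this] at hc
    exact hc

end WH


namespace WH
open FreeGroup
set_option linter.unusedSectionVars false
set_option linter.unusedSimpArgs false
variable {α : Type*} [DecidableEq α]

theorem int_ends (f : ℤ → Prop) (hf : {m | ¬ (f m ↔ f (m + 1))}.Finite) :
    ∃ R : ℤ, 0 ≤ R ∧ (∀ m ≥ R, (f m ↔ f R)) ∧ (∀ m ≤ -R, (f m ↔ f (-R))) := by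
  obtain ⟨u, hu⟩ := hf.bddAbove
  obtain ⟨l, hl⟩ := hf.bddBelow
  refine ⟨|u| + |l| + 1, by positivity, ?_, ?_⟩
  · intro m hm
    induction m, hm using Int.leInduction with
    | base => rfl
    | succ m hm ih =>
      rw [← ih]
      by_contra hc
      have : m ≤ u := hu (fun h => hc h.symm)
      have := le_abs_self u
      have := abs_nonneg l
      omega
  · intro m hm
    induction m, hm using Int.leInductionDown with
    | base => rfl
    | pred m hm ih =>
      rw [← ih]
      by_contra hc
      have : l ≤ m - 1 := hl (by simpa using hc)
      have := neg_abs_le l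
      have := abs_nonneg u
      omega

open scoped Classical in
/-- indicator -/
noncomputable def chi (K : Set (FreeGroup α)) (g : FreeGroup α) : ℤ := if g ∈ K then 1 else 0

/-- signed crossing number -/
noncomputable def sg (K : Set (FreeGroup α)) (h : FreeGroup α) : ℤ :=
  ∑ᶠ g, (chi K (g * h) - chi K g)

theorem chi_sub_support (K : Set (FreeGroup α)) (h : FreeGroup α) :
    (Function.support fun g => chi K (g * h) - chi K g) ⊆ cr K h := by
  intro g hg
  simp only [Function.mem_support] at hg
  simp only [cr, Set.mem_ofPred_eq]
  intro hc
  apply hg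
  by_cases h1 : g * h ∈ K
  · have h2 : g ∈ K := by tauto
    simp [chi, h1, h2]
  · have h2 : g ∉ K := by tauto
    simp [chi, h1, h2]

theorem sg_mul {K : Set (FreeGroup α)} (hK : AI K) (h k : FreeGroup α) :
    sg K (h * k) = sg K h + sg K k := by
  have e : sg K k = ∑ᶠ g, (chi K (g * h * k) - chi K (g * h)) :=
    (finsum_comp_equiv (Equiv.mulRight h) (f := fun g => chi K (g * k) - chi K g)).symm
  have hf : (Function.support fun g => chi K (g * h * k) - chi K (g * h)).Finite := by
    have := ((hK k).subset (chi_sub_support K k)).preimage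
      ((Equiv.mulRight h).injective.injOn)
    exact this
  rw [e, sg, sg, ← finsum_add_distrib ((hK h).subset (chi_sub_support K h)) hf]
  apply finsum_congr
  intro g
  rw [mul_assoc]; ring

theorem sg_preimage (φ : FreeGroup α ≃* FreeGroup α) (K : Set (FreeGroup α)) (h : FreeGroup α) :
    sg (φ ⁻¹' K) h = sg K (φ h) := by
  have := finsum_comp_equiv φ.toEquiv (f := fun g => chi K (g * φ h) - chi K g)
  unfold sg
  rw [← this]
  apply finsum_congr
  intro g
  change chi K (φ (g * h)) - chi K (φ g) = chi K (φ g * φ h) - chi K (φ g)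
  rw [_root_.map_mul]

theorem sg_gen (y x : α) :
    sg (KA {(y, true)}) (lt (x, true)) = if x = y then 1 else 0 := by
  have hcr := cr_KA {(y, true)} (x, true)
  have hsub : cr (KA {(y, true)}) (lt (x, true)) ⊆ {1} := by
    intro g hg
    rcases hcr hg with h | h
    · simp [h.1]
    · exact absurd h.2 (by simp [linv])
  unfold sg
  rw [finsum_eq_single _ 1]
  · by_cases h : x = y <;> simp [chi, one_notMem_KA, lt_mem_KA, h]
  · intro g hg
    by_contra hc
    exact hg (hsub (chi_sub_support _ _ hc))

theorem zero_of_no_ends {K : Set (FreeGroup α)} (hK : AI K) (a : α × Bool)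
    (hn : ∀ g, ¬ Ends (tr g K) a ∧ ¬ Ends (tr g K) (linv a)) : sg K (lt a) = 0 := by
  classical
  have hinj : ∀ g : FreeGroup α, Function.Injective (fun m : ℤ => g * lt a ^ m) := by
    intro g m m' h
    have h' : lt a ^ m = lt a ^ m' := mul_left_cancel h
    refine injective_zpow_iff_not_isOfFinOrder.2 ?_ h'
    rw [isOfFinOrder_iff_pow_eq_one]
    rintro ⟨n, hn, e⟩
    have := toWord_lt_pow a n
    rw [e] at this
    simp at this
    omega
  have hlim : ∀ g : FreeGroup α, ∃ R : ℤ, 0 ≤ R ∧ (∀ m ≥ R, (g * lt a ^ m ∈ K ↔ g * lt a ^ R ∈ K)) ∧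
      (∀ m ≤ -R, (g * lt a ^ m ∈ K ↔ g * lt a ^ (-R) ∈ K)) := by
    intro g
    apply int_ends (fun m => g * lt a ^ m ∈ K)
    have := (hK (lt a)).preimage (hinj g).injOn
    refine this.subset ?_
    intro m hm
    simp only [Set.mem_ofPred_eq, Set.mem_preimage, cr] at hm ⊢
    rwa [mul_assoc, ← zpow_add_one]
  let P : FreeGroup α → Prop := fun g => ∃ N : ℤ, ∀ m ≤ N, g * lt a ^ m ∈ K
  have hPs : ∀ g, ∀ k : ℤ, P (g * lt a ^ k) ↔ P g := by
    intro g k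
    constructor
    · rintro ⟨N, hN⟩
      refine ⟨N + k, fun m hm => ?_⟩
      have := hN (m - k) (by omega)
      rwa [mul_assoc, ← zpow_add, add_sub_cancel] at this
    · rintro ⟨N, hN⟩
      refine ⟨N - k, fun m hm => ?_⟩
      rw [mul_assoc, ← zpow_add]
      exact hN _ (by omega)
  let ψ : FreeGroup α → ℤ := fun g => chi K g - if P g then 1 else 0
  have hψ : ∀ g, ∃ R : ℤ, ∀ m : ℤ, ψ (g * lt a ^ m) ≠ 0 → -R ≤ m ∧ m ≤ R := by
    intro g
    obtain ⟨R, hR0, h1, h2⟩ := hlim g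
    have hP : P g ↔ g * lt a ^ (-R) ∈ K := by
      constructor
      · rintro ⟨N, hN⟩
        have := hN (min N (-R)) (min_le_left _ _)
        exact (h2 _ (min_le_right _ _)).1 this
      · intro h
        exact ⟨-R, fun m hm => (h2 m hm).2 h⟩
    have heq : g * lt a ^ R ∈ K ↔ g * lt a ^ (-R) ∈ K := by
      obtain ⟨n1, n2⟩ := hn g
      have key : ∀ n : ℕ, n ≥ R.toNat → (lt a ^ n ∈ tr g K ↔ g * lt a ^ R ∈ K) ∧
          (lt (linv a) ^ n ∈ tr g K ↔ g * lt a ^ (-R) ∈ K) := by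
        intro n hn
        constructor
        · rw [← h1 n (by omega)]
          simp [tr]
        · rw [← h2 (-n) (by omega), ← lt_inv]
          simp [tr]
      by_contra hc
      by_cases h3 : g * lt a ^ R ∈ K
      · apply n1
        refine ⟨R.toNat, fun n hn => ?_⟩
        have := key n hn
        tauto
      · apply n2
        refine ⟨R.toNat, fun n hn => ?_⟩
        have := key n hn
        rw [linv_linv]
        tauto
    refine ⟨R, fun m hm => ?_⟩
    by_contra hc
    apply hm
    have : g * lt a ^ m ∈ K ↔ P (g * lt a ^ m) := by
      rw [hPs, hP]
      rcases le_or_gt R m with h | h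
      · rw [h1 m h, heq]
      · exact h2 m (by omega)
    simp only [ψ, chi, this]
    simp
  have hfin : (Function.support ψ).Finite := by
    have hsub : Function.support ψ ⊆
        ⋃ d ∈ cr K (lt a), (fun m : ℤ => d * lt a ^ m) '' {m | ψ (d * lt a ^ m) ≠ 0} := by
      intro g hg
      by_cases hex : ∃ m : ℤ, g * lt a ^ m ∈ cr K (lt a)
      · obtain ⟨m, hm⟩ := hex
        simp only [Set.mem_iUnion]
        refine ⟨_, hm, -m, ?_, ?_⟩
        · simpa [mul_assoc] using hg
        · simp [mul_assoc]
      · exfalso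
        push Not at hex
        apply hg
        have hc : ∀ m : ℤ, (g * lt a ^ m ∈ K ↔ g ∈ K) := by
          intro m
          induction m using Int.induction_on with
          | zero => simp
          | succ m ih =>
            have := hex m
            simp only [cr, Set.mem_ofPred_eq, not_not] at this
            rw [zpow_add_one, ← mul_assoc, ← this, ih]
          | pred m ih =>
            have := hex (-m - 1)
            simp only [cr, Set.mem_ofPred_eq, not_not] at this
            rw [this, mul_assoc, ← zpow_add_one, sub_add_cancel, ih]
        have : g ∈ K ↔ P g := by
          constructor
          · intro h; exact ⟨0, fun m _ => (hc m).2 h⟩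
          · rintro ⟨N, hN⟩; exact (hc N).1 (hN N le_rfl)
        simp only [ψ, chi, this]
        simp
    refine Set.Finite.subset ((hK (lt a)).biUnion fun d _ => Set.Finite.image _ ?_) hsub
    obtain ⟨R, hR⟩ := hψ d
    exact (Set.finite_Icc (-R) R).subset (fun m hm => hR m hm)
  have e1 : ∀ g, chi K (g * lt a) - chi K g = ψ (g * lt a) - ψ g := by
    intro g
    have := hPs g 1
    rw [zpow_one] at this
    simp only [ψ, this]
    ring
  have e2 : ∑ᶠ g, ψ (g * lt a) = ∑ᶠ g, ψ g :=
    finsum_comp_equiv (Equiv.mulRight (lt a)) (f := ψ)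
  unfold sg
  rw [finsum_congr e1, finsum_sub_distrib _ hfin, e2, sub_self]
  exact hfin.preimage ((Equiv.mulRight (lt a)).injective.injOn)

/-- abelianization matrix -/
noncomputable def Mx (φ : FreeGroup α ≃* FreeGroup α) : Matrix α α ℤ :=
  fun y x => sg (KA {(y, true)}) (φ (lt (x, true)))

theorem hom_expand [Fintype α] {f : FreeGroup α → ℤ} (hf : ∀ h k, f (h * k) = f h + f k)
    (h : FreeGroup α) : f h = ∑ y, f (lt (y, true)) * sg (KA {(y, true)}) h := by
  have hlet : ∀ z : α × Bool, f (lt z) = ∑ y, f (lt (y, true)) * sg (KA {(y, true)}) (lt z) := by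
    have f1 : f 1 = 0 := by have := hf 1 1; rw [mul_one] at this; omega
    have s1 : ∀ y : α, sg (KA {(y, true)}) 1 = 0 := by
      intro y; have := sg_mul (AI_KA {(y, true)}) 1 1; rw [mul_one] at this; omega
    have ht : ∀ x : α, f (lt (x, true)) =
        ∑ y, f (lt (y, true)) * sg (KA {(y, true)}) (lt (x, true)) := by
      intro x; simp [sg_gen]
    rintro ⟨x, b⟩
    cases b
    · have e : lt (x, false) * lt (x, true) = 1 := by
        rw [show ((x, false) : α × Bool) = linv (x, true) from rfl, ← lt_inv, inv_mul_cancel]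
      have e1 := hf (lt (x, false)) (lt (x, true))
      rw [e, f1] at e1
      have e2 : ∀ y : α, sg (KA {(y, true)}) (lt (x, false)) =
          - sg (KA {(y, true)}) (lt (x, true)) := by
        intro y
        have := sg_mul (AI_KA {(y, true)}) (lt (x, false)) (lt (x, true))
        rw [e, s1] at this; omega
      simp only [e2, mul_neg, Finset.sum_neg_distrib]
      rw [← ht]; omega
    · exact ht x
  rw [← mk_toWord (x := h)]
  induction h.toWord with
  | nil =>
    rw [← one_eq_mk]
    have f1 : f 1 = 0 := by have := hf 1 1; rw [mul_one] at this; omega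
    have s1 : ∀ y : α, sg (KA {(y, true)}) 1 = 0 := by
      intro y; have := sg_mul (AI_KA {(y, true)}) 1 1; rw [mul_one] at this; omega
    simp [f1, s1]
  | cons z l ih =>
    rw [mk_cons, hf, hlet, ih, ← Finset.sum_add_distrib]
    refine Finset.sum_congr rfl fun y _ => ?_
    rw [sg_mul (AI_KA _)]; ring

theorem Mx_mul [Fintype α] (φ ψ : FreeGroup α ≃* FreeGroup α) : Mx φ * Mx ψ = Mx (ψ.trans φ) := by
  ext z x
  rw [Matrix.mul_apply]
  exact (hom_expand (f := fun h => sg (KA {(z, true)}) (φ h))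
    (fun h k => by rw [_root_.map_mul, sg_mul (AI_KA _)]) (ψ (lt (x, true)))).symm

theorem Mx_refl : Mx (MulEquiv.refl (FreeGroup α)) = 1 := by
  ext y x
  simp only [Mx, MulEquiv.refl_apply, sg_gen, Matrix.one_apply, eq_comm]

theorem exists_perm [Fintype α] (φ : FreeGroup α ≃* FreeGroup α) :
    ∃ σ : Equiv.Perm α, ∀ x, sg (KA {(σ x, true)}) (φ (lt (x, true))) ≠ 0 := by
  by_contra! hc
  have h1 : Mx φ * Mx φ.symm = 1 := by
    rw [Mx_mul, ← Mx_refl]; congr 1; ext x; simp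
  have h2 : (Mx φ).det = 0 := by
    rw [Matrix.det_apply]
    apply Finset.sum_eq_zero
    intro σ _
    obtain ⟨x, hx⟩ := hc σ
    rw [Finset.prod_eq_zero (Finset.mem_univ x) (by exact hx), smul_zero]
  have h3 := congrArg Matrix.det h1
  rw [Matrix.det_mul, h2] at h3
  simp at h3

/-- total length -/
def LW (W : Multiset (FreeGroup α)) (φ : FreeGroup α → FreeGroup α) : ℕ :=
  (W.map (fun w => (φ w).norm)).sum

theorem JW_preimage (W : Multiset (FreeGroup α)) (φ : FreeGroup α ≃* FreeGroup α) (y : α) :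
    JW W (φ ⁻¹' (KA {(y, true)})) ≤ (W.map fun w => cnt y (φ w)).sum := by
  unfold JW
  refine Multiset.sum_map_le_sum_map _ _ (fun w _ => ?_)
  rw [jn_preimage]
  exact jn_KA_singleton_le (y, true) _

theorem minimal_of_noRed [Fintype α] {W : Multiset (FreeGroup α)} (H : NoRed W)
    (φ : FreeGroup α ≃* FreeGroup α) : LW W id ≤ LW W φ := by
  obtain ⟨σ, hσ⟩ := exists_perm φ
  have h1 : ∀ x, DW W x ≤ (W.map fun w => cnt (σ x) (φ w)).sum := by
    intro x
    refine le_trans ?_ (JW_preimage W φ (σ x))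
    set K := φ ⁻¹' (KA {(σ x, true)}) with hKdef
    have hK : AI K := AI_preimage φ (AI_KA _)
    have hs : sg K (lt (x, true)) ≠ 0 := by
      rw [hKdef, sg_preimage]; exact hσ x
    have : ¬ ∀ g, ¬ Ends (tr g K) (x, true) ∧ ¬ Ends (tr g K) (linv (x, true)) :=
      fun hn => hs (zero_of_no_ends hK _ hn)
    push Not at this
    obtain ⟨g, hg⟩ := this
    rw [← JW_tr W g]
    by_cases h : Ends (tr g K) (x, true)
    · exact red_final H (AI_tr g hK) h
    · exact red_final H (AI_tr g hK) (hg h)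
  have e1 : ∀ ψ : FreeGroup α → FreeGroup α,
      LW W ψ = ∑ x, (W.map fun w => cnt x (ψ w)).sum := by
    intro ψ
    unfold LW
    clear h1 H hσ
    induction W using Multiset.induction_on with
    | empty => simp
    | cons w W ih =>
      simp only [Multiset.map_cons, Multiset.sum_cons, Finset.sum_add_distrib, sum_cnt, ih]
  rw [e1 id, e1 φ, ← Equiv.sum_comp σ (fun x => (W.map fun w => cnt x (φ w)).sum)]
  exact Finset.sum_le_sum fun x _ => h1 x

theorem whitehead_reduce [Fintype α] {W : Multiset (FreeGroup α)}
    (φ : FreeGroup α ≃* FreeGroup α) (h : LW W φ < LW W id) :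
    ∃ A a, ∃ (h1 : a ∈ A) (h2 : linv a ∉ A), LW W (tau A a h1 h2) < LW W id := by
  have hN : ¬ NoRed W := fun H => absurd (minimal_of_noRed H φ) (by omega)
  unfold NoRed at hN
  push Not at hN
  obtain ⟨A, a, h1, h2, h3⟩ := hN
  refine ⟨A, a, h1, h2, ?_⟩
  have h4 : LW W (tau A a h1 h2) + DW W a.1 ≤ JW W (KA A) + LW W id := by
    unfold LW DW JW
    rw [← Multiset.sum_map_add, ← Multiset.sum_map_add]
    exact Multiset.sum_map_le_sum_map _ _ (fun w _ => norm_tau_add_le A a w)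
  omega

end WH


namespace WH
open FreeGroup
set_option linter.unusedSectionVars false
set_option linter.unusedSimpArgs false
variable {α : Type*} [DecidableEq α]

/-- small automorphisms and their inverses -/
def TT : Set (FreeGroup α ≃* FreeGroup α) :=
  {τ | (∀ x, (τ (of x)).norm ≤ 3) ∨ (∀ x, (τ.symm (of x)).norm ≤ 3)}

theorem TT_symm {τ : FreeGroup α ≃* FreeGroup α} (h : τ ∈ TT) : τ.symm ∈ TT := by
  rcases h with h | h
  · exact Or.inr h
  · exact Or.inl h

theorem tau_mem_TT (A : Set (α × Bool)) (a : α × Bool) (h1 : a ∈ A) (h2 : linv a ∉ A) :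
    tau A a h1 h2 ∈ TT := Or.inl fun x => norm_tauHom_lt A a (x, true)

theorem finite_norm_le [Finite α] (n : ℕ) : {w : FreeGroup α | w.norm ≤ n}.Finite := by
  have h := List.finite_length_le (α × Bool) n
  refine Set.Finite.of_finite_image (f := FreeGroup.toWord) (h.subset ?_)
    FreeGroup.toWord_injective.injOn
  rintro _ ⟨w, hw, rfl⟩
  exact hw

theorem small_finite [Finite α] :
    {τ : FreeGroup α ≃* FreeGroup α | ∀ x, (τ (of x)).norm ≤ 3}.Finite := by
  have h : {f : α → FreeGroup α | ∀ x, f x ∈ {w : FreeGroup α | w.norm ≤ 3}}.Finite :=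
    Set.Finite.pi' fun _ => finite_norm_le 3
  refine Set.Finite.of_finite_image (f := fun τ x => τ (of x)) (h.subset ?_) ?_
  · rintro _ ⟨w, hw, rfl⟩
    simpa using hw
  · intro τ _ σ _ e
    have : τ.toMonoidHom = σ.toMonoidHom := by
      ext x
      exact congrFun e x
    ext w
    exact DFunLike.congr_fun this w

theorem TT_finite [Finite α] : (TT : Set (FreeGroup α ≃* FreeGroup α)).Finite := by
  refine Set.Finite.union small_finite ?_
  refine (small_finite.image MulEquiv.symm).subset ?_
  intro τ h
  exact ⟨τ.symm, h, by simp⟩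

/-- one step inside the ball -/
def Stp (N : ℕ) (u v : FreeGroup α) : Prop :=
  u.norm ≤ N ∧ v.norm ≤ N ∧ ∃ τ ∈ (TT : Set (FreeGroup α ≃* FreeGroup α)), τ u = v

/-- connected inside the ball -/
def Con (N : ℕ) : FreeGroup α → FreeGroup α → Prop := Relation.ReflTransGen (Stp N)

theorem Con.sym {N : ℕ} {u v : FreeGroup α} (h : Con N u v) : Con N v u := by
  unfold Con at *
  have : ∀ u v : FreeGroup α, Stp N u v → Stp N v u := by
    rintro u v ⟨h1, h2, τ, h3, rfl⟩
    exact ⟨h2, h1, τ.symm, TT_symm h3, by simp⟩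
  induction h with
  | refl => exact .refl
  | tail _ h ih => exact .head (this _ _ h) ih

theorem connect [Fintype α] (N : ℕ) : ∀ (n : ℕ) (u v : FreeGroup α)
    (φ : FreeGroup α ≃* FreeGroup α), φ u = v → u.norm ≤ N → v.norm ≤ N →
    u.norm + v.norm = n → Con N u v := by
  intro n
  induction n using Nat.strong_induction_on with
  | _ n IH =>
  have aux : ∀ (c : ℕ) (u v : FreeGroup α)
    (φ : FreeGroup α ≃* FreeGroup α), φ u = v → u.norm ≤ N → v.norm ≤ N →
    u.norm + v.norm = n → v.norm ≤ u.norm → ∑ x, (φ.symm (of x)).norm = c → Con N u v := by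
    intro c
    induction c using Nat.strong_induction_on with
    | _ c IH2 =>
    intro u v φ huv hu hv hn hle hc
    have hge : ∀ x, 1 ≤ (φ.symm (of x)).norm := by
      intro x
      rw [Nat.one_le_iff_ne_zero, Ne, FreeGroup.norm_eq_zero]
      simp [of_ne_one]
    by_cases hcr : ∀ x, (φ.symm (of x)).norm ≤ 3
    · exact Relation.ReflTransGen.single ⟨hu, hv, φ, Or.inr hcr, huv⟩
    · push Not at hcr
      obtain ⟨x₀, hx₀⟩ := hcr
      have hlt : Fintype.card α < c := by
        rw [← hc, ← Finset.card_univ, Finset.card_eq_sum_ones]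
        exact Finset.sum_lt_sum (fun x _ => hge x) ⟨x₀, Finset.mem_univ _, by omega⟩
      set W : Multiset (FreeGroup α) :=
        Multiset.replicate (c + 1) u + Finset.univ.val.map (fun x => φ.symm (of x)) with hW
      have hLW : ∀ ψ : FreeGroup α → FreeGroup α,
          LW W ψ = (c + 1) * (ψ u).norm + ∑ x, (ψ (φ.symm (of x))).norm := by
        intro ψ
        simp [LW, hW, Multiset.map_add, Multiset.sum_add, Multiset.map_replicate,
          Multiset.sum_replicate, Multiset.map_map, -Finset.sum_map_val, Finset.sum]
        ring
      obtain ⟨A, a, h1, h2, h3⟩ := whitehead_reduce (W := W) φ (by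
        rw [hLW, hLW, huv]
        simp only [MulEquiv.apply_symm_apply, norm_of, id, hc, Finset.sum_const, Finset.card_univ,
          smul_eq_mul, mul_one]
        have := Nat.mul_le_mul_left (c + 1) hle
        omega)
      rw [hLW, hLW] at h3
      simp only [id, hc] at h3
      set τ := tau A a h1 h2 with hτ
      have hτle : (τ u).norm ≤ u.norm := by
        by_contra hcon
        have := Nat.mul_le_mul_left (c + 1) (show u.norm + 1 ≤ (τ u).norm by omega)
        rw [mul_add] at this
        omega
      have hst : Con N u (τ u) :=
        Relation.ReflTransGen.single ⟨hu, by omega, τ, tau_mem_TT _ _ _ _, rfl⟩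
      have hφ : (τ.symm.trans φ) (τ u) = v := by simp [huv]
      refine Relation.ReflTransGen.trans hst ?_
      rcases hτle.lt_or_eq with h | h
      · exact IH _ (by omega) _ _ _ hφ (by omega) hv rfl
      · refine IH2 (∑ x, (τ (φ.symm (of x))).norm) ?_ _ _ _ hφ (by omega) hv (by omega)
          (by omega) rfl
        rw [h] at h3
        omega
  intro u v φ huv hu hv hn
  rcases le_total v.norm u.norm with h | h
  · exact aux _ u v φ huv hu hv hn h rfl
  · exact (aux _ v u φ.symm (by simp [← huv]) hv hu (by omega) h rfl).sym

end WH


namespace WH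
open FreeGroup
set_option linter.unusedSectionVars false
set_option linter.unusedSimpArgs false

theorem re_exists {β γ : Type*} [Primcodable β] [Primcodable γ] {q : β → γ → Prop}
    (h : PrimrecRel q) : REPred fun a => ∃ b, q a b := by
  classical
  let f : β → ℕ → Bool := fun a n =>
    Option.casesOn (Encodable.decode (α := γ) n) false (fun b => decide (q a b))
  have hf : Primrec₂ f := by
    refine Primrec.option_casesOn (Primrec.decode.comp Primrec.snd) (Primrec.const false) ?_
    exact h.decide.comp (Primrec.fst.comp Primrec.fst) Primrec.snd
  have h2 : Partrec (fun x ↦ Nat.rfind fun n => Part.some (f x n)) :=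
    Partrec.rfind hf.to_comp.partrec
  refine h2.dom_re.of_eq fun a => ?_
  refine Iff.trans Nat.rfind_dom ?_
  constructor
  · rintro ⟨n, hn, -⟩
    have hn : true = f a n := by simpa using hn
    simp only [f] at hn
    cases hd : Encodable.decode (α := γ) n with
    | none => simp [hd] at hn
    | some b => exact ⟨b, by simpa [hd] using hn⟩
  · rintro ⟨b, hb⟩
    exact ⟨Encodable.encode b, by simp [f, hb], fun _ => trivial⟩

section
variable {r : ℕ}

/-- words -/
abbrev Wd (r : ℕ) := List (Fin r × Bool)

theorem reduce_primrec : Primrec (FreeGroup.reduce : Wd r → Wd r) := by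
  have h : Primrec₂ (fun (_ : Wd r) (p : (Fin r × Bool) × Wd r) =>
      (List.casesOn p.2 [p.1] fun hd tl =>
        if p.1.1 = hd.1 ∧ p.1.2 = not hd.2 then tl else p.1 :: hd :: tl : Wd r)) := by
    have hp : Primrec (fun p : Wd r × ((Fin r × Bool) × Wd r) => p.2.1) :=
      Primrec.fst.comp Primrec.snd
    refine Primrec.list_casesOn (h := fun (p : Wd r × ((Fin r × Bool) × Wd r)) q =>
      if p.2.1.1 = q.1.1 ∧ p.2.1.2 = not q.1.2 then q.2 else p.2.1 :: q.1 :: q.2)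
      (Primrec.snd.comp Primrec.snd)
      (Primrec.list_cons.comp hp (Primrec.const [])) ?_
    refine Primrec.ite ?_ (Primrec.snd.comp Primrec.snd) ?_
    · refine PrimrecPred.and ?_ ?_
      · exact Primrec.eq.comp (Primrec.fst.comp (hp.comp Primrec.fst))
          (Primrec.fst.comp (Primrec.fst.comp Primrec.snd))
      · exact Primrec.eq.comp (Primrec.snd.comp (hp.comp Primrec.fst))
          (Primrec.not.comp (Primrec.snd.comp (Primrec.fst.comp Primrec.snd)))
    · exact Primrec.list_cons.comp (hp.comp Primrec.fst)
        (Primrec.list_cons.comp (Primrec.fst.comp Primrec.snd) (Primrec.snd.comp Primrec.snd))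
  refine (Primrec.list_foldr Primrec.id (Primrec.const []) h).of_eq fun l => ?_
  induction l with
  | nil => rfl
  | cons z l ih =>
    simp only [id, List.foldr_cons] at ih ⊢
    rw [ih, reduce.cons]

/-- action of a finite list of automorphisms on words -/
def act {k : ℕ} (e : Fin k → FreeGroup (Fin r) ≃* FreeGroup (Fin r)) (i : Fin k) (l : Wd r) :
    Wd r :=
  FreeGroup.reduce (l.flatMap fun z => (e i (lt z)).toWord)

theorem act_eq {k : ℕ} (e : Fin k → FreeGroup (Fin r) ≃* FreeGroup (Fin r)) (i : Fin k)
    (l : Wd r) : act e i l = (e i (FreeGroup.mk l)).toWord := by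
  unfold act
  rw [← toWord_mk]
  congr 1
  induction l with
  | nil => rw [← one_eq_mk, _root_.map_one]; rfl
  | cons z l ih =>
    have : FreeGroup.mk (z :: l) = lt z * FreeGroup.mk l := by simp [lt, mul_mk]
    rw [List.flatMap_cons, ← mul_mk, mk_toWord, ih, this, _root_.map_mul]

theorem act_primrec {k : ℕ} (e : Fin k → FreeGroup (Fin r) ≃* FreeGroup (Fin r)) :
    Primrec₂ (act e) := by
  unfold act
  refine reduce_primrec.comp (Primrec.list_flatMap Primrec.snd ?_)
  have h : Primrec (fun p : Fin k × (Fin r × Bool) => (e p.1 (lt p.2)).toWord) :=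
    Primrec.dom_finite _
  exact h.comp (Primrec.pair (Primrec.fst.comp Primrec.fst) Primrec.snd)

theorem mem_primrec {β : Type*} [Primcodable β] : PrimrecRel (fun (a : β) (L : List β) => a ∈ L) := by
  have h : PrimrecRel fun (L : List β) b ↦ ∃ a ∈ L, a = b := PrimrecRel.exists_mem_list Primrec.eq
  refine PrimrecRel.of_eq (r := fun a L => ∃ b ∈ L, b = a) (h.comp Primrec.snd Primrec.fst) ?_
  intro a L
  simp

/-- the orbit predicate -/
def Orb (p : Wd r × Wd r) : Prop :=
  ∃ φ : FreeGroup (Fin r) ≃* FreeGroup (Fin r), φ (FreeGroup.mk p.1) = FreeGroup.mk p.2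

theorem exists_enum (r : ℕ) : ∃ (k : ℕ) (e : Fin k → FreeGroup (Fin r) ≃* FreeGroup (Fin r)),
    Set.range e = TT := by
  have := (TT_finite (α := Fin r)).to_subtype
  obtain ⟨k, ⟨f⟩⟩ := Finite.exists_equiv_fin (TT : Set (FreeGroup (Fin r) ≃* FreeGroup (Fin r)))
  refine ⟨k, fun i => (f.symm i).1, ?_⟩
  ext τ
  constructor
  · rintro ⟨i, rfl⟩
    exact (f.symm i).2
  · intro h
    exact ⟨f ⟨τ, h⟩, by simp⟩

theorem con_of_orb {p : Wd r × Wd r} (h : Orb p) :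
    Con (p.1.length + p.2.length) (FreeGroup.mk p.1) (FreeGroup.mk p.2) := by
  obtain ⟨φ, h⟩ := h
  refine connect _ _ _ _ φ h ?_ ?_ rfl
  · exact norm_mk_le.trans (by omega)
  · exact norm_mk_le.trans (by omega)

theorem re_orb : REPred (Orb (r := r)) := by
  obtain ⟨k, e, he⟩ := exists_enum r
  have hq : PrimrecRel (fun (p : Wd r × Wd r) (s : List (Fin k)) =>
      s.foldl (fun w i => act e i w) (FreeGroup.reduce p.1) = FreeGroup.reduce p.2) := by
    refine Primrec.eq.comp (Primrec.list_foldl (h := fun _ q => act e q.2 q.1) Primrec.snd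
      (reduce_primrec.comp (Primrec.fst.comp Primrec.fst)) ?_)
      (reduce_primrec.comp (Primrec.snd.comp Primrec.fst))
    exact (act_primrec e).comp (Primrec.snd.comp Primrec.snd) (Primrec.fst.comp Primrec.snd)
  refine (re_exists hq).of_eq fun p => ?_
  constructor
  · rintro ⟨s, hs⟩
    have key : ∀ (s : List (Fin k)) (l : Wd r), ∃ φ : FreeGroup (Fin r) ≃* FreeGroup (Fin r),
        φ (FreeGroup.mk l) = FreeGroup.mk (s.foldl (fun w i => act e i w) l) := by
      intro s
      induction s with
      | nil => exact fun l => ⟨MulEquiv.refl _, rfl⟩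
      | cons i s ih =>
        intro l
        obtain ⟨φ, hφ⟩ := ih (act e i l)
        refine ⟨(e i).trans φ, ?_⟩
        rw [List.foldl_cons, ← hφ, act_eq, mk_toWord]
        rfl
    obtain ⟨φ, hφ⟩ := key s (FreeGroup.reduce p.1)
    refine ⟨φ, ?_⟩
    rwa [hs, reduce.self, reduce.self] at hφ
  · intro h
    have h1 := con_of_orb h
    rw [← toWord_mk, ← toWord_mk]
    generalize FreeGroup.mk p.1 = u at *
    generalize FreeGroup.mk p.2 = v at *
    unfold Con at h1
    induction h1 with
    | refl => exact ⟨[], rfl⟩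
    | tail _ hst ih =>
      obtain ⟨s, hs⟩ := ih
      obtain ⟨-, -, τ, hτ, rfl⟩ := hst
      rw [← he] at hτ
      obtain ⟨i, rfl⟩ := hτ
      refine ⟨s ++ [i], ?_⟩
      rw [List.foldl_append, hs]
      simp [act_eq, mk_toWord]

theorem re_not_orb : REPred (fun p => ¬ Orb (r := r) p) := by
  obtain ⟨k, e, he⟩ := exists_enum r
  let imgs : List (Wd r) → List (Wd r) := fun L =>
    L.flatMap fun w => (List.finRange k).map fun i => act e i w
  have himgs : Primrec imgs := by
    refine Primrec.list_flatMap Primrec.id ?_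
    refine Primrec.list_map (Primrec.const _) ?_
    exact (act_primrec e).comp Primrec.snd (Primrec.snd.comp Primrec.fst)
  have hR : PrimrecRel (fun (w : Wd r) (q : ℕ × List (Wd r)) =>
      (¬ w.length ≤ q.1) ∨ w ∈ q.2) := by
    refine PrimrecPred.or (PrimrecPred.not ?_) ?_
    · exact Primrec.nat_le.comp (Primrec.list_length.comp Primrec.fst)
        (Primrec.fst.comp Primrec.snd)
    · exact mem_primrec.comp Primrec.fst (Primrec.snd.comp Primrec.snd)
  have hq : PrimrecRel (fun (p : Wd r × Wd r) (L : List (Wd r)) =>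
      FreeGroup.reduce p.1 ∈ L ∧ ¬ FreeGroup.reduce p.2 ∈ L ∧
      ∀ w ∈ imgs L, (¬ w.length ≤ (p.1.length + p.2.length, L).1) ∨
        w ∈ (p.1.length + p.2.length, L).2) := by
    refine PrimrecPred.and ?_ (PrimrecPred.and (PrimrecPred.not ?_) ?_)
    · exact mem_primrec.comp (reduce_primrec.comp (Primrec.fst.comp Primrec.fst)) Primrec.snd
    · exact mem_primrec.comp (reduce_primrec.comp (Primrec.snd.comp Primrec.fst)) Primrec.snd
    · refine hR.forall_mem_list.comp (himgs.comp Primrec.snd) (Primrec.pair ?_ Primrec.snd)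
      exact Primrec.nat_add.comp (Primrec.list_length.comp (Primrec.fst.comp Primrec.fst))
        (Primrec.list_length.comp (Primrec.snd.comp Primrec.fst))
  refine (re_exists hq).of_eq fun p => ?_
  constructor
  · rintro ⟨L, h1, h2, h3⟩ h
    have hc := con_of_orb h
    rw [← toWord_mk] at h1 h2
    dsimp only at h3
    apply h2
    generalize FreeGroup.mk p.1 = u at *
    generalize FreeGroup.mk p.2 = v at *
    clear h2
    unfold Con at hc
    induction hc with
    | refl => exact h1
    | tail _ hst ih =>
      obtain ⟨-, hn, τ, hτ, rfl⟩ := hst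
      rw [← he] at hτ
      obtain ⟨i, rfl⟩ := hτ
      rename_i b _
      have := h3 (e i b).toWord (by
        simp only [imgs, List.mem_flatMap, List.mem_map]
        exact ⟨b.toWord, ih, i, List.mem_finRange i, by rw [act_eq, mk_toWord]⟩)
      rcases this with h | h
      · exact absurd hn h
      · exact h
  · intro h
    have hfin : {w : FreeGroup (Fin r) | w.norm ≤ p.1.length + p.2.length ∧
        ∃ φ : FreeGroup (Fin r) ≃* FreeGroup (Fin r), φ (FreeGroup.mk p.1) = w}.Finite :=
      (finite_norm_le (p.1.length + p.2.length)).subset fun w hw => hw.1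
    have hmem : ∀ l : Wd r, l ∈ hfin.toFinset.toList.map FreeGroup.toWord ↔
        ∃ w : FreeGroup (Fin r), (w.norm ≤ p.1.length + p.2.length ∧
        ∃ φ : FreeGroup (Fin r) ≃* FreeGroup (Fin r), φ (FreeGroup.mk p.1) = w) ∧
          w.toWord = l := by
      intro l
      simp only [List.mem_map, Finset.mem_toList, Set.Finite.mem_toFinset, Set.mem_ofPred_eq]
    refine ⟨hfin.toFinset.toList.map FreeGroup.toWord, ?_, ?_, ?_⟩
    · rw [hmem]
      exact ⟨FreeGroup.mk p.1, ⟨norm_mk_le.trans (by omega), MulEquiv.refl _, rfl⟩, toWord_mk⟩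
    · rw [hmem]
      rintro ⟨w, ⟨-, φ, hφ⟩, hw⟩
      refine h ⟨φ, ?_⟩
      rw [hφ]
      rw [← toWord_mk] at hw
      exact toWord_injective hw
    · intro w hw
      by_cases hl : w.length ≤ p.1.length + p.2.length
      · right
        dsimp only
        rw [hmem]
        simp only [imgs, List.mem_flatMap] at hw
        obtain ⟨l, hl2, hw⟩ := hw
        rw [hmem] at hl2
        obtain ⟨v, ⟨-, φ, hφ⟩, rfl⟩ := hl2
        rw [List.mem_map] at hw
        obtain ⟨i, -, rfl⟩ := hw
        rw [act_eq, mk_toWord] at hl ⊢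
        exact ⟨e i v, ⟨hl, φ.trans (e i), by rw [← hφ]; rfl⟩, rfl⟩
      · exact Or.inl hl

end
end WH

/-- (Whitehead) The automorphism problem in a free group of finite rank is
decidable. -/
theorem whitehead_automorphism_problem_decidable (r : ℕ) :
    ComputablePred (fun p : List (Fin r × Bool) × List (Fin r × Bool) =>
      ∃ φ : FreeGroup (Fin r) ≃* FreeGroup (Fin r),
        φ (FreeGroup.mk p.1) = FreeGroup.mk p.2) := by
  exact ComputablePred.computable_iff_re_compl_re'.2 ⟨WH.re_orb, WH.re_not_orb⟩
end
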